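/- arXiv:2504.10687 — 5 statements merged into one kernel-verified Lean document; each statement's English description precedes it below -/
import Mathlib

section
/- Let k ≥ 3 and let S be an eventually periodic balanced sequence over a k-element alphabet {a_1,…,a_k} with densities r_1 > r_2 > … > r_k > 0. Suppose for every 1 ≤ i ≤ k there exist two consecutive occurrences of a_i in S with no a_j (for any j > i) between them. Then r_i = 2^{k−i}/(2^k − 1) for all i. -/
/-- Every two windows of equal length contain nearly the same number of each letter,
each letter below `k` recurs, and each has two consecutive occurrences separated only by
smaller letters. -/
structure NestedBalanced (k : ℕ) (s : ℕ → ℕ) : Prop where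
  lt : ∀ n, s n < k
  balanced : ∀ a m n l, Nat.count (s · = a) (m + l) + Nat.count (s · = a) n ≤
    Nat.count (s · = a) (n + l) + Nat.count (s · = a) m + 1
  recurrent : ∀ a < k, ∀ x, ∃ n ≥ x, s n = a
  nested : ∀ a < k, ∃ m n, m < n ∧ s m = a ∧ s n = a ∧ ∀ t, m < t → t < n → s t < a

theorem Nat.count_add_eq_of_forall_not (p : ℕ → Prop) [DecidablePred p] (m l : ℕ)
    (h : ∀ t, m ≤ t → t < m + l → ¬ p t) : Nat.count p (m + l) = Nat.count p m := by
  induction l with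
  | zero => rfl
  | succ l ih =>
    rw [← Nat.add_assoc, Nat.count_succ, if_neg (h _ (by omega) (by omega)),
      ih fun t h1 h2 => h t h1 (by omega), Nat.add_zero]

theorem Nat.count_add_eq_of_forall (p : ℕ → Prop) [DecidablePred p] (m l : ℕ)
    (h : ∀ t, m ≤ t → t < m + l → p t) : Nat.count p (m + l) = Nat.count p m + l := by
  induction l with
  | zero => rfl
  | succ l ih =>
    rw [← Nat.add_assoc, Nat.count_succ, if_pos (h _ (by omega) (by omega)),
      ih fun t h1 h2 => h t h1 (by omega)]
    omega

theorem exists_count_eq_two_mul_add {s : ℕ → ℕ} {a b : ℕ} (P : ℕ → Prop) (hP : ∃ n, P n)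
    (step : ∀ n, P n → ∃ g > 0, P (n + g) ∧
      Nat.count (s · = a) (n + g) + 2 * Nat.count (s · = b) n =
        Nat.count (s · = a) n + 2 * Nat.count (s · = b) (n + g)) :
    ∃ c : ℤ, ∀ x, ∃ n ≥ x, (Nat.count (s · = a) n : ℤ) = 2 * Nat.count (s · = b) n + c := by
  obtain ⟨n₀, h₀⟩ := hP
  refine ⟨Nat.count (s · = a) n₀ - 2 * Nat.count (s · = b) n₀, fun x => ?_⟩
  suffices h : ∃ n ≥ x, P n ∧ (Nat.count (s · = a) n : ℤ) = 2 * Nat.count (s · = b) n +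
      (Nat.count (s · = a) n₀ - 2 * Nat.count (s · = b) n₀) by
    obtain ⟨n, h1, -, h2⟩ := h
    exact ⟨n, h1, h2⟩
  induction x with
  | zero => exact ⟨n₀, Nat.zero_le _, h₀, by ring⟩
  | succ x ih =>
    obtain ⟨n, h1, h2, h3⟩ := ih
    obtain ⟨g, hg, h4, h5⟩ := step n h2
    exact ⟨n + g, by omega, h4, by omega⟩

namespace NestedBalanced

variable {k : ℕ} {s : ℕ → ℕ}

theorem eq_zero_or_eq_zero (h : NestedBalanced k s) (hk : 3 ≤ k) (n : ℕ) :
    s n = 0 ∨ s (n + 1) = 0 := by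
  obtain ⟨a, b, hab, ha, hb, hlt⟩ := h.nested 0 (by omega)
  have hb' : b = a + 1 := by
    by_contra hne
    exact absurd (hlt (a + 1) (by omega) (by omega)) (by omega)
  subst hb'
  by_contra! hn
  have := h.balanced 0 a n 2
  simp [Nat.count_succ, ha, hb, hn, show ∀ x, x + 2 = x + 1 + 1 from fun _ => rfl]
    at this
  omega

/-- There is a factor `1 0 0 1 0`, and a factor `1 0 x 0 1` with `x ≥ 2`; every window of
length four contains the letter `1`. -/
theorem exists_factors (h : NestedBalanced k s) (hk : 3 ≤ k) :
    (∃ a, s a = 1 ∧ s (a + 1) = 0 ∧ s (a + 2) = 0 ∧ s (a + 3) = 1 ∧ s (a + 4) = 0) ∧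
    (∃ p, s p = 1 ∧ s (p + 1) = 0 ∧ 2 ≤ s (p + 2) ∧ s (p + 3) = 0 ∧ s (p + 4) = 1) ∧
    ∀ n, s n = 1 ∨ s (n + 1) = 1 ∨ s (n + 2) = 1 ∨ s (n + 3) = 1 := by
  have hz := h.eq_zero_or_eq_zero hk
  obtain ⟨a, b, hab, ha, hb, hlt⟩ := h.nested 1 (by omega)
  obtain ⟨d, rfl⟩ : ∃ d, b = a + 1 + d := ⟨b - a - 1, by omega⟩
  have hzero : Nat.count (s · = 0) (a + 1 + d) = Nat.count (s · = 0) (a + 1) + d :=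
    Nat.count_add_eq_of_forall _ _ _ fun t h1 h2 => by
      have := hlt t (by omega) h2
      omega
  have hone : Nat.count (s · = 1) (a + (d + 2)) = Nat.count (s · = 1) a + 2 := by
    have h0 : Nat.count (s · = 1) (a + 1 + d) = Nat.count (s · = 1) (a + 1) :=
      Nat.count_add_eq_of_forall_not _ _ _ fun t h1 h2 => by
        have := hlt t (by omega) h2
        omega
    rw [show a + (d + 2) = a + 1 + d + 1 by ring, Nat.count_succ, if_pos hb, h0,
      Nat.count_succ, if_pos ha]
  have hwin : ∀ n, ∃ t, n ≤ t ∧ t < n + (d + 2) ∧ s t = 1 := by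
    intro n
    by_contra! hn
    have h0 := Nat.count_add_eq_of_forall_not (s · = 1) n (d + 2) hn
    have := h.balanced 1 a n (d + 2)
    omega
  have hgap : ∀ p q, p < q → s p ≠ 0 → s q ≠ 0 → p + d ≤ q := by
    intro p q hpq hp hq
    by_contra! hlt'
    obtain ⟨e, rfl⟩ : ∃ e, q = p + 1 + e := ⟨q - p - 1, by omega⟩
    have h1 := h.balanced 0 (a + 1) p (e + 2)
    have h2 : Nat.count (s · = 0) (a + 1 + (e + 2)) = Nat.count (s · = 0) (a + 1) + (e + 2) :=
      Nat.count_add_eq_of_forall _ _ _ fun t h1 h2 => by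
        have := hlt t (by omega) (by omega)
        omega
    have h3 : Nat.count (s · = 0) (p + (e + 2)) ≤ Nat.count (s · = 0) p + e := by
      rw [show p + (e + 2) = p + 1 + e + 1 by ring, Nat.count_succ, if_neg hq,
        Nat.count_add, Nat.count_succ, if_neg hp]
      have := Nat.count_le (p := fun t => s (p + 1 + t) = 0) (n := e)
      omega
    omega
  have hgap2 : ∀ p q, p < q → s p ≠ 0 → s q ≠ 0 → p + 2 ≤ q := by
    intro p q hpq hp hq
    by_contra! hlt'
    obtain rfl : q = p + 1 := by omega
    have := hz p
    omega
  obtain ⟨x, hx, hsx⟩ := h.recurrent 2 (by omega) (d + 2)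
  obtain ⟨p, hp, hpx, hpmax⟩ : ∃ p, s p = 1 ∧ p < x ∧ ∀ t, p < t → t < x → s t ≠ 1 := by
    obtain ⟨t, h1, h2, h3⟩ := hwin (x - (d + 2))
    refine ⟨Nat.findGreatest (s · = 1) x, Nat.findGreatest_spec (P := (s · = 1))
      (show t ≤ x by omega) h3, ?_, fun t h1 h2 =>
      Nat.findGreatest_is_greatest (P := (s · = 1)) h1 h2.le⟩
    refine lt_of_le_of_ne (Nat.findGreatest_le _) fun he => ?_
    have := Nat.findGreatest_spec (P := (s · = 1)) (show t ≤ x by omega) h3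
    rw [he] at this
    omega
  obtain ⟨q, hq, hxq, hqmin⟩ : ∃ q, s q = 1 ∧ x < q ∧ ∀ t, x < t → t < q → s t ≠ 1 := by
    obtain ⟨t, h1, h2, h3⟩ := hwin (x + 1)
    have hex : ∃ q, x < q ∧ s q = 1 := ⟨t, by omega, h3⟩
    refine ⟨Nat.find hex, (Nat.find_spec hex).2, (Nat.find_spec hex).1, fun t h1 h2 h3 => ?_⟩
    exact Nat.find_min hex h2 ⟨h1, h3⟩
  have hpq : q ≤ p + (d + 2) := by
    obtain ⟨t, h1, h2, h3⟩ := hwin (p + 1)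
    by_contra! hlt'
    rcases lt_trichotomy t x with h4 | h4 | h4
    · exact hpmax t (by omega) h4 h3
    · subst h4
      omega
    · exact hqmin t h4 (by omega) h3
  have g1 := hgap p x hpx (by omega) (by omega)
  have g2 := hgap x q hxq (by omega) (by omega)
  have g3 := hgap2 p x hpx (by omega) (by omega)
  have g4 := hgap2 x q hxq (by omega) (by omega)
  obtain rfl : d = 2 := by omega
  obtain rfl : x = p + 2 := by omega
  obtain rfl : q = p + 4 := by omega
  refine ⟨⟨a, ha, ?_, ?_, hb, ?_⟩, ⟨p, hp, ?_, hsx.ge, ?_, hq⟩, fun n => ?_⟩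
  · have := hlt (a + 1) (by omega) (by omega)
    omega
  · have := hlt (a + 2) (by omega) (by omega)
    omega
  · have := hz (a + 1 + 2)
    simp only [Nat.add_assoc] at this hb
    norm_num at this hb
    omega
  · have := hz p
    omega
  · have : s (p + 2) = 0 ∨ s (p + 3) = 0 := hz (p + 2)
    omega
  · obtain ⟨t, h1, h2, h3⟩ := hwin n
    obtain rfl | rfl | rfl | rfl : t = n ∨ t = n + 1 ∨ t = n + 2 ∨ t = n + 3 := by omega
    all_goals simp [h3]

theorem return_one (h : NestedBalanced k s) (hk : 3 ≤ k) {n : ℕ} (hn : s n = 1) :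
    (s (n + 1) = 0 ∧ s (n + 2) = 0 ∧ s (n + 3) = 1) ∨
    (s (n + 1) = 0 ∧ 2 ≤ s (n + 2) ∧ s (n + 3) = 0 ∧ s (n + 4) = 1) := by
  obtain ⟨-, ⟨p, p0, p1, p2, p3, p4⟩, hwin⟩ := h.exists_factors hk
  have hz := h.eq_zero_or_eq_zero hk
  have p2' : s (p + 2) ≠ 0 := by omega
  have p2'' : s (p + 2) ≠ 1 := by omega
  have n1 : s (n + 1) = 0 := by
    have := hz n
    omega
  have hnot : ¬ (s (n + 2) = 0 ∧ s (n + 3) = 0) := by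
    rintro ⟨n2, n3⟩
    have := h.balanced 0 (n + 1) p 3
    simp [Nat.count_succ, ← Nat.add_assoc, show ∀ x, x + 3 = x + 1 + 1 + 1 from fun _ => rfl] at this
    simp [n1, n2, n3, p0, p1, p2'] at this
    omega
  have hnot' : s (n + 2) ≠ 1 := by
    intro n2
    have := h.balanced 1 n (p + 1) 3
    simp [Nat.count_succ, ← Nat.add_assoc, show ∀ x, x + 3 = x + 1 + 1 + 1 from fun _ => rfl] at this
    simp [hn, n1, n2, p1, p2'', p3] at this
    omega
  have w := hwin (n + 1)
  have z2 := hz (n + 2)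
  have z3 := hz (n + 3)
  simp only [Nat.add_assoc, Nat.reduceAdd] at w z2 z3
  omega

theorem count_zero_eq_two_mul (h : NestedBalanced k s) (hk : 3 ≤ k) :
    ∃ c : ℤ, ∀ x, ∃ n ≥ x,
      (Nat.count (s · = 0) n : ℤ) = 2 * Nat.count (s · = 1) n + c := by
  refine exists_count_eq_two_mul_add (fun n => s n = 1) ?_ fun n hn => ?_
  · obtain ⟨n, -, hn⟩ := h.recurrent 1 (by omega) 0
    exact ⟨n, hn⟩
  · rcases h.return_one hk hn with ⟨n1, n2, n3⟩ | ⟨n1, n2, n3, n4⟩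
    · refine ⟨3, by omega, n3, ?_⟩
      simp [Nat.count_succ, show ∀ x, x + 3 = x + 1 + 1 + 1 from fun _ => rfl]
      simp [hn, n1, n2]
      omega
    · refine ⟨4, by omega, n4, ?_⟩
      have n2' : s (n + 2) ≠ 0 := by omega
      have n2'' : s (n + 2) ≠ 1 := by omega
      simp [Nat.count_succ,
        show ∀ x, x + 4 = x + 1 + 1 + 1 + 1 from fun _ => rfl]
      simp [hn, n1, n2', n2'', n3]
      omega

theorem count_one_eq_two_mul (h : NestedBalanced 3 s) :
    ∃ c : ℤ, ∀ x, ∃ n ≥ x,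
      (Nat.count (s · = 1) n : ℤ) = 2 * Nat.count (s · = 2) n + c := by
  obtain ⟨⟨a, a0, a1, a2, a3, a4⟩, ⟨p, p0, p1, p2, p3, p4⟩, -⟩ := h.exists_factors le_rfl
  have hlt := h.lt
  have p2' : s (p + 2) = 2 := by
    have := hlt (p + 2)
    omega
  refine exists_count_eq_two_mul_add
    (fun n => s n = 1 ∧ s (n + 1) = 0 ∧ s (n + 2) = 2 ∧ s (n + 3) = 0 ∧ s (n + 4) = 1)
    ⟨p, p0, p1, p2', p3, p4⟩ fun n ⟨n0, n1, n2, n3, n4⟩ => ?_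
  have five : ∀ x, x + 5 = x + 1 + 1 + 1 + 1 + 1 := fun _ => rfl
  have r4 := h.return_one le_rfl n4
  have l6 := hlt (n + 6)
  have not_mixed : s (n + 6) ≠ 2 := by
    intro n6
    have n5 : s (n + 5) = 0 := by
      simp only [Nat.add_assoc, Nat.reduceAdd] at r4
      omega
    have := h.balanced 2 (n + 2) a 5
    simp [Nat.count_succ, ← Nat.add_assoc, five] at this
    simp [n2, n3, n4, n5, n6, a0, a1, a2, a3, a4] at this
    omega
  simp only [Nat.add_assoc, Nat.reduceAdd] at r4
  have n5 : s (n + 5) = 0 := by omega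
  have n6 : s (n + 6) = 0 := by omega
  have n7 : s (n + 7) = 1 := by omega
  have r7 := h.return_one le_rfl n7
  have l9 := hlt (n + 9)
  simp only [Nat.add_assoc, Nat.reduceAdd] at r7
  have n8 : s (n + 8) = 0 := by omega
  have n9 : s (n + 9) = 2 := by
    by_contra hne
    have n9 : s (n + 9) = 0 := by omega
    have := h.balanced 0 (n + 5) p 5
    simp [Nat.count_succ, ← Nat.add_assoc, five] at this
    simp [n5, n6, n7, n8, n9, p0, p1, p2', p3, p4] at this
    omega
  have n10 : s (n + 10) = 0 := by omega
  have n11 : s (n + 11) = 1 := by omega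
  refine ⟨7, by omega, ⟨n7, n8, n9, n10, n11⟩, ?_⟩
  simp [Nat.count_succ,
    show ∀ x, x + 7 = x + 1 + 1 + 1 + 1 + 1 + 1 + 1 from fun _ => rfl]
  simp [n0, n1, n2, n3, n4, n5, n6]
  omega

theorem infinite_ne_zero (h : NestedBalanced k s) (hk : 3 ≤ k) :
    (Set.ofPred (s · ≠ 0)).Infinite := by
  refine Set.infinite_of_forall_exists_gt fun x => ?_
  obtain ⟨n, hn, h1⟩ := h.recurrent 1 (by omega) (x + 1)
  exact ⟨n, show s n ≠ 0 by omega, by omega⟩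

end NestedBalanced

/-- The sequence obtained by deleting the letter `0` and decreasing the other letters by one. -/
noncomputable def deleteZero (s : ℕ → ℕ) (n : ℕ) : ℕ := s (Nat.nth (s · ≠ 0) n) - 1

theorem count_deleteZero {s : ℕ → ℕ} (hs : (Set.ofPred (s · ≠ 0)).Infinite) (a n : ℕ) :
    Nat.count (deleteZero s · = a) n = Nat.count (s · = a + 1) (Nat.nth (s · ≠ 0) n) := by
  have gap : ∀ m, (∀ t < Nat.nth (s · ≠ 0) m, s t ≠ 0 → ∃ i < m, t = Nat.nth (s · ≠ 0) i) := by
    intro m t ht h0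
    refine ⟨Nat.count (s · ≠ 0) t, ?_, (Nat.nth_count (p := (s · ≠ 0)) h0).symm⟩
    rw [← Nat.nth_lt_nth hs, Nat.nth_count (p := (s · ≠ 0)) h0]
    exact ht
  induction n with
  | zero =>
    have := Nat.count_add_eq_of_forall_not (s · = a + 1) 0 (Nat.nth (s · ≠ 0) 0)
      fun t _ ht h1 => by
        obtain ⟨i, hi, -⟩ := gap 0 t (by omega) (by omega)
        omega
    simpa using this.symm
  | succ n ih =>
    have hlt : Nat.nth (s · ≠ 0) n < Nat.nth (s · ≠ 0) (n + 1) :=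
      Nat.nth_strictMono hs n.lt_succ_self
    have hne : s (Nat.nth (s · ≠ 0) n) ≠ 0 := Nat.nth_mem_of_infinite hs n
    have := Nat.count_add_eq_of_forall_not (s · = a + 1) (Nat.nth (s · ≠ 0) n + 1)
      (Nat.nth (s · ≠ 0) (n + 1) - (Nat.nth (s · ≠ 0) n + 1)) fun t h1 h2 h3 => by
        obtain ⟨i, hi, rfl⟩ := gap (n + 1) t (by omega) (by omega)
        have := (Nat.nth_le_nth hs).2 (Nat.le_of_lt_succ hi)
        omega
    rw [Nat.add_sub_cancel' hlt] at this
    rw [this, Nat.count_succ, Nat.count_succ, ih]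
    congr 1
    exact if_congr (by unfold deleteZero; omega) rfl rfl

namespace NestedBalanced

variable {k : ℕ} {s : ℕ → ℕ}

theorem balanced_ne_zero (h : NestedBalanced k s) (m n l : ℕ) :
    Nat.count (s · ≠ 0) (m + l) + Nat.count (s · ≠ 0) n ≤
      Nat.count (s · ≠ 0) (n + l) + Nat.count (s · ≠ 0) m + 1 := by
  have key : ∀ x, Nat.count (s · ≠ 0) x + Nat.count (s · = 0) x = x := by
    intro x
    induction x with
    | zero => simp
    | succ x ih =>
      rw [Nat.count_succ, Nat.count_succ]
      split_ifs <;> omega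
  have := h.balanced 0 n m l
  have := key (m + l)
  have := key (n + l)
  have := key m
  have := key n
  omega

theorem deleteZero_balanced (h : NestedBalanced k s) (hk : 3 ≤ k) (a m n l : ℕ) :
    Nat.count (deleteZero s · = a) (m + l) + Nat.count (deleteZero s · = a) n ≤
      Nat.count (deleteZero s · = a) (n + l) + Nat.count (deleteZero s · = a) m + 1 := by
  have hs := h.infinite_ne_zero hk
  obtain _ | l := l
  · simp only [Nat.add_zero]
    omega
  rw [← Nat.add_assoc, Nat.count_succ]
  simp only [count_deleteZero hs]
  set pos := Nat.nth (s · ≠ 0) with hpos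
  have hmono : StrictMono pos := Nat.nth_strictMono hs
  have hmem : ∀ i, s (pos i) ≠ 0 := Nat.nth_mem_of_infinite hs
  have hcount : ∀ i, Nat.count (s · ≠ 0) (pos i) = i := Nat.count_nth_of_infinite hs
  have hcount' : ∀ i, Nat.count (s · ≠ 0) (pos i + 1) = i + 1 := fun i => by
    rw [Nat.count_succ, if_pos (hmem i), hcount]
  have hm : pos m ≤ pos (m + l) := hmono.monotone (by omega)
  have hn : pos n ≤ pos (n + l) := hmono.monotone (by omega)
  have hlast : pos (n + l) + 2 ≤ pos (n + (l + 1)) := by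
    have h1 : pos (n + l) < pos (n + (l + 1)) := hmono (by omega)
    by_contra! h2
    have h3 := h.eq_zero_or_eq_zero hk (pos (n + l))
    have h4 := hmem (n + l)
    have h5 := hmem (n + (l + 1))
    rw [show pos (n + (l + 1)) = pos (n + l) + 1 by omega] at h5
    omega
  have hgap : pos (m + l) - pos m ≤ pos (n + l) - pos n + 1 := by
    by_contra! hlt
    have h1 := h.balanced_ne_zero (pos n) (pos m + 1) (pos (n + l) - pos n + 1)
    have h2 : Nat.count (s · ≠ 0) (pos m + 1 + (pos (n + l) - pos n + 1)) ≤
        Nat.count (s · ≠ 0) (pos (m + l)) := Nat.count_monotone _ (by omega)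
    rw [show pos n + (pos (n + l) - pos n + 1) = pos (n + l) + 1 by omega, hcount', hcount',
      hcount] at h1
    rw [hcount] at h2
    omega
  have h1 := h.balanced (a + 1) (pos m) (pos n) (pos (m + l) - pos m + 1)
  have h2 : Nat.count (s · = a + 1) (pos n + (pos (m + l) - pos m + 1)) ≤
      Nat.count (s · = a + 1) (pos (n + (l + 1))) := Nat.count_monotone _ (by omega)
  rw [show pos m + (pos (m + l) - pos m + 1) = pos (m + l) + 1 by omega, Nat.count_succ] at h1
  have h3 : (deleteZero s (m + l) = a) ↔ s (pos (m + l)) = a + 1 := by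
    have := hmem (m + l)
    unfold deleteZero
    rw [← hpos]
    omega
  simp only [h3]
  omega

theorem deleteZero (h : NestedBalanced (k + 1) s) (hk : 3 ≤ k) :
    NestedBalanced k (deleteZero s) := by
  have hs := h.infinite_ne_zero (by omega)
  refine ⟨fun n => ?_, h.deleteZero_balanced (by omega), fun a ha x => ?_, fun a ha => ?_⟩
  · have := h.lt (Nat.nth (s · ≠ 0) n)
    unfold _root_.deleteZero
    omega
  · obtain ⟨n, hn, hsn⟩ := h.recurrent (a + 1) (by omega) (Nat.nth (s · ≠ 0) x)
    refine ⟨Nat.count (s · ≠ 0) n, ?_, ?_⟩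
    · have := Nat.count_monotone (s · ≠ 0) hn
      rwa [Nat.count_nth_of_infinite hs] at this
    · unfold _root_.deleteZero
      rw [Nat.nth_count (p := (s · ≠ 0)) (by omega), hsn]
      rfl
  · obtain ⟨m, n, hmn, hm, hn, hlt⟩ := h.nested (a + 1) (by omega)
    have em : Nat.nth (s · ≠ 0) (Nat.count (s · ≠ 0) m) = m :=
      Nat.nth_count (p := (s · ≠ 0)) (by omega)
    have en : Nat.nth (s · ≠ 0) (Nat.count (s · ≠ 0) n) = n :=
      Nat.nth_count (p := (s · ≠ 0)) (by omega)
    refine ⟨Nat.count (s · ≠ 0) m, Nat.count (s · ≠ 0) n, ?_, ?_, ?_, fun t h1 h2 => ?_⟩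
    · rw [← Nat.nth_lt_nth hs, em, en]
      exact hmn
    · unfold _root_.deleteZero
      rw [em, hm]
      rfl
    · unfold _root_.deleteZero
      rw [en, hn]
      rfl
    · rw [← Nat.nth_lt_nth hs] at h1 h2
      have h3 := hlt _ (em ▸ h1) (en ▸ h2)
      have h4 : s (Nat.nth (s · ≠ 0) t) ≠ 0 := Nat.nth_mem_of_infinite hs t
      unfold _root_.deleteZero
      omega

theorem count_eq_two_mul (hk : 3 ≤ k) (h : NestedBalanced k s) (i : ℕ) (hi : i + 1 < k) :
    ∃ c : ℤ, ∀ x, ∃ n ≥ x,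
      (Nat.count (s · = i) n : ℤ) = 2 * Nat.count (s · = i + 1) n + c := by
  induction k, hk using Nat.le_induction generalizing s i with
  | base =>
    obtain rfl | rfl : i = 0 ∨ i = 1 := by omega
    · exact h.count_zero_eq_two_mul le_rfl
    · exact h.count_one_eq_two_mul
  | succ k hk ih =>
    obtain _ | i := i
    · exact h.count_zero_eq_two_mul (by omega)
    · obtain ⟨c, hc⟩ := ih (h.deleteZero hk) i (by omega)
      have hs := h.infinite_ne_zero (by omega)
      refine ⟨c, fun x => ?_⟩
      obtain ⟨n, hn, he⟩ := hc x
      rw [count_deleteZero hs, count_deleteZero hs] at he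
      exact ⟨_, hn.trans (Nat.nth_strictMono hs).le_apply, he⟩

end NestedBalanced

open Filter Topology in
theorem eq_two_mul_of_tendsto {u v : ℕ → ℕ} {a b : ℝ}
    (hu : Tendsto (fun n => (u n : ℝ) / n) atTop (𝓝 a))
    (hv : Tendsto (fun n => (v n : ℝ) / n) atTop (𝓝 b)) {c : ℤ}
    (h : ∀ x, ∃ n ≥ x, (u n : ℤ) = 2 * v n + c) : a = 2 * b := by
  have hc : Tendsto (fun n : ℕ => (c : ℝ) / n) atTop (𝓝 0) :=
    tendsto_const_div_atTop_nhds_zero_nat _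
  have ht := (hu.sub (hv.const_mul 2)).sub hc
  have hf : ∃ᶠ n in atTop, (u n : ℝ) / n - 2 * ((v n : ℝ) / n) - c / n ∈ ({0} : Set ℝ) := by
    rw [frequently_atTop]
    intro x
    obtain ⟨n, hn, he⟩ := h x
    refine ⟨n, hn, ?_⟩
    have he' : (u n : ℝ) = 2 * v n + c := by exact_mod_cast he
    rw [he', Set.mem_singleton_iff]
    ring
  have := isClosed_singleton.mem_of_frequently_of_tendsto hf ht
  rw [Set.mem_singleton_iff] at this
  linarith

open Filter Topology in
theorem exists_ge_of_tendsto_count_pos (p : ℕ → Prop) [DecidablePred p] {a : ℝ}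
    (h : Tendsto (fun n => (Nat.count p n : ℝ) / n) atTop (𝓝 a)) (ha : 0 < a) (x : ℕ) :
    ∃ n ≥ x, p n := by
  by_contra! hx
  have hc : Tendsto (fun n : ℕ => (Nat.count p x : ℝ) / n) atTop (𝓝 0) :=
    tendsto_const_div_atTop_nhds_zero_nat _
  refine ha.ne' (tendsto_nhds_unique (h.congr' ?_) hc)
  filter_upwards [eventually_ge_atTop x] with n hn
  obtain ⟨l, rfl⟩ := Nat.exists_eq_add_of_le hn
  rw [Nat.count_add_eq_of_forall_not p x l fun t ht _ => hx t ht]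

open Filter Topology in
theorem sum_eq_one_of_tendsto_count {k : ℕ} (s : ℕ → Fin k) (r : Fin k → ℝ)
    (h : ∀ a, Tendsto (fun n => (((Finset.range n).filter (fun t => s t = a)).card : ℝ) / n)
      atTop (𝓝 (r a))) : ∑ a, r a = 1 := by
  have ht := tendsto_finsetSum Finset.univ fun a _ => h a
  refine tendsto_nhds_unique ht (tendsto_const_nhds.congr' ?_)
  filter_upwards [eventually_gt_atTop 0] with n hn
  rw [← Finset.sum_div, ← Nat.cast_sum, ← Finset.card_eq_sum_card_fiberwise
    (fun t _ => Finset.mem_coe.2 (Finset.mem_univ (s t))), Finset.card_range, div_self]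
  exact_mod_cast hn.ne'

/-- An eventually periodic balanced sequence over a `k`-letter alphabet (`k ≥ 3`) with
densities `r 0 > r 1 > ⋯ > r (k-1) > 0`, such that every letter `i` has two consecutive
occurrences with only smaller letters between them, has densities `2^(k-1-i)/(2^k-1)`. -/
theorem stmt_2 (k : ℕ) (hk : 3 ≤ k) (s : ℕ → Fin k) (r : Fin k → ℝ)
    (hper : ∃ p N : ℕ, 0 < p ∧ ∀ n ≥ N, s (n + p) = s n)
    (hbal : ∀ (a : Fin k) (m n len : ℕ),
      |(((Finset.range len).filter (fun t => s (m + t) = a)).card : ℤ) -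
        (((Finset.range len).filter (fun t => s (n + t) = a)).card : ℤ)| ≤ 1)
    (hdens : ∀ a : Fin k, Filter.Tendsto
      (fun n => (((Finset.range n).filter (fun t => s t = a)).card : ℝ) / n)
      Filter.atTop (nhds (r a)))
    (hmono : ∀ i j : Fin k, i < j → r j < r i) (hpos : ∀ i, 0 < r i)
    (hcons : ∀ i : Fin k, ∃ m n : ℕ, m < n ∧ s m = i ∧ s n = i ∧
      ∀ t, m < t → t < n → s t < i) :
    ∀ i : Fin k, r i = (2:ℝ)^(k-1-(i:ℕ)) / ((2:ℝ)^k - 1) := by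
  have hcount : ∀ (a : Fin k) m, Nat.count (fun t => (s t : ℕ) = a) m =
      ((Finset.range m).filter (fun t => s t = a)).card := fun a m => by
    rw [Nat.count_eq_card_filter_range]
    simp only [Fin.val_inj]
  have hdens' : ∀ a : Fin k, Filter.Tendsto
      (fun n => (Nat.count (fun t => (s t : ℕ) = a) n : ℝ) / n) Filter.atTop (nhds (r a)) :=
    fun a => by simpa only [hcount] using hdens a
  have hs : NestedBalanced k (fun n => (s n : ℕ)) := by
    refine ⟨fun n => (s n).isLt, fun a m n l => ?_, fun a ha => ?_, fun a ha => ?_⟩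
    · rcases lt_or_ge a k with ha | ha
      · have hb := (abs_le.1 (hbal ⟨a, ha⟩ m n l)).2
        rw [Nat.count_add, Nat.count_add, Nat.count_eq_card_filter_range _ l,
          Nat.count_eq_card_filter_range _ l]
        simp only [Fin.ext_iff] at hb
        omega
      · have h0 : ∀ x, Nat.count (fun t => (s t : ℕ) = a) x = 0 := fun x => by
          simpa using Nat.count_add_eq_of_forall_not (fun t => (s t : ℕ) = a) 0 x
            fun t _ _ => ((s t).isLt.trans_le ha).ne
        simp [h0]
    · exact exists_ge_of_tendsto_count_pos _ (hdens' ⟨a, ha⟩) (hpos _)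
    · obtain ⟨m, n, hmn, hm, hn, hlt⟩ := hcons ⟨a, ha⟩
      exact ⟨m, n, hmn, by simp [hm], by simp [hn], fun t h1 h2 => hlt t h1 h2⟩
  have hdouble : ∀ i (hi : i + 1 < k), r ⟨i, by omega⟩ = 2 * r ⟨i + 1, hi⟩ := fun i hi => by
    obtain ⟨c, hc⟩ := hs.count_eq_two_mul hk i hi
    exact eq_two_mul_of_tendsto (hdens' ⟨i, by omega⟩) (hdens' ⟨i + 1, hi⟩) hc
  have hpow : ∀ j (hj : j < k), r ⟨k - 1 - j, by omega⟩ = 2 ^ j * r ⟨k - 1, by omega⟩ := by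
    intro j
    induction j with
    | zero => simp
    | succ j ih =>
      intro hj
      have h1 := hdouble (k - 1 - (j + 1)) (by omega)
      have h2 : (⟨k - 1 - (j + 1) + 1, by omega⟩ : Fin k) = ⟨k - 1 - j, by omega⟩ :=
        Fin.ext (by simp only; omega)
      rw [h1, h2, ih (by omega), pow_succ]
      ring
  have hr : ∀ i : Fin k, r i = 2 ^ (k - 1 - (i : ℕ)) * r ⟨k - 1, by omega⟩ := fun i => by
    rw [← hpow (k - 1 - i) (by omega)]
    exact congrArg r (Fin.ext (by simp only; omega))
  have hgeom : ∑ i : Fin k, (2 : ℝ) ^ (k - 1 - (i : ℕ)) = 2 ^ k - 1 := by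
    rw [Fin.sum_univ_eq_sum_range fun i => (2 : ℝ) ^ (k - 1 - i),
      Finset.sum_range_reflect fun i => (2 : ℝ) ^ i, geom_sum_eq (by norm_num)]
    norm_num
  have hsum := sum_eq_one_of_tendsto_count s r hdens
  rw [Finset.sum_congr rfl fun i _ => hr i, ← Finset.sum_mul, hgeom] at hsum
  intro i
  have hne : (2 : ℝ) ^ k - 1 ≠ 0 := left_ne_zero_of_mul_eq_one hsum
  rw [hr i, eq_div_iff hne, mul_assoc, mul_comm (r _), hsum, mul_one]
end

section
/- Let k ≥ 3 and let α_1 < α_2 < … < α_k be positive reals. Suppose the Beatty sequences {⌊α_i n + α_i/2⌋}_{n=0}^∞, for i = 1,…,k, partition ℕ. Then α_i = (2^k − 1)/2^{k−i} for every 1 ≤ i ≤ k. -/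
section BeattyPartition

open HurwitzZeta Complex Filter Topology MeasureTheory

lemma expZeta_apply_one {x : ℝ} (hx : cexp (2 * Real.pi * I * x) ≠ 1) :
    expZeta x 1 = -log (1 - cexp (2 * Real.pi * I * x)) := by
  set z := cexp (2 * Real.pi * I * x) with hz
  have hznorm : ‖z‖ = 1 := by
    rw [hz, show 2 * Real.pi * I * x = ((2 * Real.pi * x : ℝ) : ℂ) * I by push_cast; ring]
    exact norm_exp_ofReal_mul_I _
  have hnorm (t : ℝ) : ‖z * cexp (-t)‖ = Real.exp (-t) := by
    rw [norm_mul, hznorm, one_mul, norm_exp]; simp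
  have hne (t : ℝ) (ht : 0 ≤ t) : 1 - z * cexp (-t) ≠ 0 := by
    intro h
    have h1 : z * cexp (-t) = 1 := (sub_eq_zero.mp h).symm
    have h2 : Real.exp (-t) = 1 := by rw [← hnorm, h1, norm_one]
    have h3 : t = 0 := by simpa using h2
    apply hx
    simpa [h3] using h1
  set F : ℝ → ℂ := fun t ↦ z * cexp (-t) / (1 - z * cexp (-t)) with hF
  have hFcont : ContinuousOn F (Set.Ici 0) := by
    apply ContinuousOn.div (by fun_prop) (by fun_prop)
    intro t ht
    exact hne t ht
  have hFloc : LocallyIntegrableOn F (Set.Ioi 0) :=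
    (hFcont.mono Set.Ioi_subset_Ici_self).locallyIntegrableOn measurableSet_Ioi
  have hFtop : F =O[atTop] fun t => Real.exp (-1 * t) := by
    apply Asymptotics.IsBigO.of_bound 2
    filter_upwards [eventually_ge_atTop (1 : ℝ)] with t ht
    have h1 : Real.exp (-t) ≤ 1 / 2 := by
      rw [Real.exp_neg, one_div]
      apply inv_anti₀ (by norm_num)
      linarith [Real.add_one_le_exp t]
    have h2 : 1 / 2 ≤ ‖1 - z * cexp (-t)‖ := by
      have := norm_sub_norm_le 1 (z * cexp (-t))
      rw [hnorm, norm_one] at this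
      linarith
    rw [hF]
    simp only [norm_div, hnorm, neg_mul, one_mul, Real.norm_eq_abs, Real.abs_exp]
    rw [div_le_iff₀ (by linarith)]
    nlinarith [Real.exp_pos (-t)]
  have hFbot : F =O[𝓝[>] 0] (fun t : ℝ => t ^ (-(0 : ℝ))) := by
    simp only [neg_zero, Real.rpow_zero]
    exact ((hFcont 0 Set.self_mem_Ici).mono Set.Ioi_subset_Ici_self).isBigO_one ℝ
  have hmel (s : ℂ) (hs : 1 < s.re) : Gamma s * expZeta x s = mellin F s := by
    have h1 := (hasSum_expZeta_of_one_lt_re x hs).mul_left (Gamma s)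
    have h2 : HasSum (fun n : ℕ ↦ Gamma s * (if n = 0 then 0 else z ^ n) / ((n : ℝ) : ℂ) ^ s)
        (mellin F s) := by
      apply hasSum_mellin
      · intro n
        rcases Nat.eq_zero_or_pos n with h | h
        · left; simp [h]
        · right; exact_mod_cast h
      · linarith
      · intro t ht
        have h3 : ‖z * cexp (-t)‖ < 1 := by
          rw [hnorm]; simpa using ht
        have h4 := (hasSum_geometric_of_norm_lt_one h3).mul_left (z * cexp (-t))
        rw [← div_eq_mul_inv] at h4
        rw [← hasSum_nat_add_iff' 1]
        simp only [Finset.range_one, Finset.sum_singleton, if_true, zero_mul, sub_zero]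
        refine h4.congr_fun ?_
        intro n
        have h5 : cexp (-t) ^ (n + 1) = ((Real.exp (-((n + 1 : ℕ) : ℝ) * t) : ℝ) : ℂ) := by
          rw [← Complex.exp_nat_mul, ofReal_exp]
          push_cast
          ring_nf
        rw [if_neg (by omega), ← h5]
        ring
      · refine (Real.summable_one_div_nat_rpow.mpr hs).of_nonneg_of_le (fun n ↦ by positivity) ?_
        intro n
        gcongr
        split_ifs
        · simp
        · simp [hznorm]
    refine h1.unique (h2.congr_fun ?_)
    intro n
    rcases eq_or_ne n 0 with h | h
    · have : s ≠ 0 := by rintro rfl; norm_num at hs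
      simp [h, this]
    · rw [if_neg h, hz, ← Complex.exp_nat_mul, mul_div_assoc]
      congr 3
      · ring_nf
  have hx0 : (x : UnitAddCircle) ≠ 0 := by
    intro h
    rw [AddCircle.coe_eq_zero_iff] at h
    obtain ⟨n, hn⟩ := h
    apply hx
    rw [hz, ← hn]
    rw [Complex.exp_eq_one_iff]
    exact ⟨n, by simp; ring⟩
  have hmel1 : mellin F 1 = expZeta x 1 := by
    have hc1 : ContinuousAt (mellin F) 1 :=
      (mellin_differentiableAt_of_isBigO_rpow_exp one_pos hFloc hFtop hFbot
        (by simp)).continuousAt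
    have hc2 : ContinuousAt (fun s ↦ Gamma s * expZeta x s) 1 := by
      apply ContinuousAt.mul
      · exact (differentiableAt_Gamma_one).continuousAt
      · exact (differentiable_expZeta_of_ne_zero hx0).continuous.continuousAt
    have hseq : Tendsto (fun n : ℕ ↦ (1 : ℂ) + ((1 / ((n : ℝ) + 1) : ℝ) : ℂ)) atTop (𝓝 1) := by
      have := (tendsto_one_div_add_atTop_nhds_zero_nat (𝕜 := ℝ))
      have h2 := ((continuous_ofReal.tendsto 0).comp this).const_add (1 : ℂ)
      simpa using h2
    have h1 := hc1.tendsto.comp hseq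
    have h2 := hc2.tendsto.comp hseq
    have := tendsto_nhds_unique h1 (h2.congr (fun n ↦ by
      apply hmel
      simp only [add_re, one_re, ofReal_re]
      have : 0 < 1 / ((n : ℝ) + 1) := by positivity
      linarith))
    simpa using this
  rw [← hmel1, mellin]
  simp only [sub_self, cpow_zero, one_smul]
  have hconv := mellinConvergent_of_isBigO_rpow_exp (s := 1) one_pos hFloc hFtop hFbot (by simp)
  have hint : IntegrableOn F (Set.Ioi 0) := by
    simpa [MellinConvergent] using hconv
  have hslit (t : ℝ) (ht : 0 ≤ t) : 1 - z * cexp (-t) ∈ slitPlane := by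
    left
    have h1 : (z * cexp (-t)).re ≤ 1 := (re_le_norm _).trans (by rw [hnorm]; simpa using ht)
    rcases h1.lt_or_eq with h | h
    · simp only [sub_re, one_re]; linarith
    · exfalso
      have h2 : ‖z * cexp (-t)‖ ≤ 1 := by rw [hnorm]; simpa using ht
      have h3 : (z * cexp (-t)).im = 0 := by
        have h4 := Complex.sq_norm (z * cexp (-t))
        rw [normSq_apply, h] at h4
        nlinarith [norm_nonneg (z * cexp (-t))]
      apply hne t ht
      apply Complex.ext <;> simp only [sub_re, sub_im, one_re, one_im, zero_re, zero_im, h, h3] <;>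
        norm_num
  have := integral_Ioi_of_hasDerivAt_of_tendsto' (a := 0) (m := 0)
    (f := fun t : ℝ ↦ log (1 - z * cexp (-t))) (f' := F) ?_ hint ?_
  · rw [this]; simp
  · intro t ht
    have h1 : HasDerivAt (fun t : ℝ ↦ 1 - z * cexp (-t)) (z * cexp (-t)) t := by
      have h2 : HasDerivAt (fun t : ℝ ↦ cexp (-(t : ℂ))) (cexp (-t) * (-1)) t :=
        (HasDerivAt.ofReal_comp (z := t) (f := fun t : ℝ ↦ t) (hasDerivAt_id t)).neg.cexp
      simpa using (h2.const_mul z).const_sub 1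
    exact h1.clog_real (hslit t ht)
  · have h1 : Tendsto (fun t : ℝ ↦ 1 - z * cexp (-t)) atTop (𝓝 1) := by
      have h2 : Tendsto (fun t : ℝ ↦ z * cexp (-t)) atTop (𝓝 0) := by
        rw [tendsto_zero_iff_norm_tendsto_zero]
        simp only [hnorm]
        exact Real.tendsto_exp_neg_atTop_nhds_zero
      simpa using h2.const_sub 1
    simpa using h1.clog (by simp)

/-- The odd sawtooth function on `ZMod N`. -/
noncomputable def zmodSawtooth (N : ℕ) (j : ZMod N) : ℝ :=
  if j = 0 then 0 else (j.val : ℝ) / N - 1 / 2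

lemma log_one_sub_exp_sub_log {x : ℝ} (h0 : 0 < x) (h1 : x < 1) :
    log (1 - cexp (2 * Real.pi * I * x)) - log (1 - cexp (2 * Real.pi * I * (-x : ℝ))) =
      2 * Real.pi * I * (x - 1 / 2) := by
  have hsin : 0 < Real.sin (Real.pi * x) :=
    Real.sin_pos_of_pos_of_lt_pi (by positivity) (by nlinarith [Real.pi_pos])
  have hpolar (u y : ℝ) (hu : 0 < u) (hy1 : -Real.pi < y) (hy2 : y ≤ Real.pi) :
      log (u * cexp (y * I)) = Real.log u + y * I := by
    rw [log_ofReal_mul hu (exp_ne_zero _), log_exp (by simpa using hy1) (by simpa using hy2)]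
  have key (x : ℝ) : ((2 * Real.sin (Real.pi * x) : ℝ) : ℂ) *
      cexp ((Real.pi * x - Real.pi / 2 : ℝ) * I) = 1 - cexp (2 * Real.pi * I * x) := by
    push_cast
    rw [sub_mul, Complex.exp_sub, show (Real.pi : ℂ) / 2 * I = Real.pi / 2 * I by rfl,
      Complex.exp_pi_div_two_mul_I, Complex.sin]
    have e1 : cexp (2 * Real.pi * I * x) = cexp (Real.pi * x * I) ^ 2 := by
      rw [← Complex.exp_nat_mul]; congr 1; push_cast; ring
    have e2 : cexp (-(Real.pi * x : ℂ) * I) = (cexp (Real.pi * x * I))⁻¹ := by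
      rw [← Complex.exp_neg]; congr 1; ring
    rw [e1, e2]
    have := Complex.exp_ne_zero (Real.pi * x * I)
    field_simp
  have l1 : log (1 - cexp (2 * Real.pi * I * x)) =
      Real.log (2 * Real.sin (Real.pi * x)) + (Real.pi * x - Real.pi / 2 : ℝ) * I := by
    rw [← key]
    exact hpolar _ _ (by positivity) (by nlinarith [Real.pi_pos]) (by nlinarith [Real.pi_pos])
  have l2 : log (1 - cexp (2 * Real.pi * I * (-x : ℝ))) =
      Real.log (2 * Real.sin (Real.pi * x)) + (-(Real.pi * x - Real.pi / 2) : ℝ) * I := by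
    have : 1 - cexp (2 * Real.pi * I * (-x : ℝ)) = ((2 * Real.sin (Real.pi * x) : ℝ) : ℂ) *
        cexp ((-(Real.pi * x - Real.pi / 2) : ℝ) * I) := by
      rw [← key (-x), ← mul_right_inj' (exp_ne_zero (Real.pi / 2 * I)), mul_left_comm,
        mul_left_comm (cexp (Real.pi / 2 * I)), ← Complex.exp_add, ← Complex.exp_add]
      have e1 : cexp (Real.pi / 2 * I + (Real.pi * -x - Real.pi / 2 : ℝ) * I) =
          cexp (-(Real.pi * x) * I) := by
        congr 1; push_cast; ring
      have e2 : cexp (Real.pi / 2 * I + (-(Real.pi * x - Real.pi / 2) : ℝ) * I) =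
          -cexp (-(Real.pi * x) * I) := by
        rw [neg_eq_neg_one_mul (cexp _), ← Complex.exp_pi_mul_I, ← Complex.exp_add]
        congr 1; push_cast; ring
      rw [e1, e2, mul_neg, Real.sin_neg]
      push_cast; ring
    rw [this]
    exact hpolar _ _ (by positivity) (by nlinarith [Real.pi_pos]) (by nlinarith [Real.pi_pos])
  rw [l1, l2]
  push_cast
  ring

lemma Module.End.exists_common_eigenvector {ι E : Type*} [AddCommGroup E] [Module ℂ E]
    [FiniteDimensional ℂ E] (f : ι → Module.End ℂ E) (hf : ∀ i j, Commute (f i) (f j))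
    (V : Submodule ℂ E) (hV : V ≠ ⊥) (hinv : ∀ i, ∀ v ∈ V, f i v ∈ V) :
    ∃ v ∈ V, v ≠ 0 ∧ ∀ i, ∃ μ : ℂ, f i v = μ • v := by
  obtain ⟨W, ⟨hWV, hW0, hWinv⟩, hmin⟩ := WellFounded.has_min
    (wellFounded_lt (α := Submodule ℂ E))
    {W | W ≤ V ∧ W ≠ ⊥ ∧ ∀ i, ∀ v ∈ W, f i v ∈ W} ⟨V, le_rfl, hV, hinv⟩
  obtain ⟨v, hvW, hv0⟩ := W.exists_mem_ne_zero_of_ne_bot hW0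
  refine ⟨v, hWV hvW, hv0, fun i ↦ ?_⟩
  have : Nontrivial W := ⟨⟨v, hvW⟩, 0, fun h ↦ hv0 (congrArg Subtype.val h)⟩
  obtain ⟨μ, hμ⟩ := Module.End.exists_eigenvalue ((f i).restrict (hWinv i))
  obtain ⟨u, hu⟩ := hμ.exists_hasEigenvector
  refine ⟨μ, ?_⟩
  by_contra hne
  refine hmin (W ⊓ LinearMap.ker (f i - μ • 1)) ⟨inf_le_left.trans hWV, ?_, ?_⟩ ?_
  · intro h
    have : (u : E) ∈ W ⊓ LinearMap.ker (f i - μ • 1) := by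
      refine ⟨u.2, ?_⟩
      have := congrArg Subtype.val hu.apply_eq_smul
      simp at this
      simp [this]
    rw [h, Submodule.mem_bot] at this
    exact hu.2 (Subtype.ext this)
  · rintro j w ⟨hwW, hw⟩
    refine ⟨hWinv j w hwW, ?_⟩
    have hw' : f i w = μ • w := by simpa [sub_eq_zero] using hw
    have := congrArg (fun g ↦ g w) (hf i j).eq
    simp only [Module.End.mul_apply, hw', map_smul] at this
    simp [this]
  · refine lt_of_le_of_ne inf_le_left fun h ↦ hne ?_
    rw [← h] at hvW
    simpa [sub_eq_zero] using hvW.2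

lemma exists_dirichletCharacter_of_periodic (f : ℕ → ℂ) (h1 : f 1 = 1)
    (hmul : ∀ a b, f (a * b) = f a * f b) {N : ℕ} (hN : 0 < N) (hper : Function.Periodic f N) :
    ∃ (n : ℕ) (_ : NeZero n) (χ : DirichletCharacter ℂ n), ∀ a : ℕ, χ a = f a := by
  classical
  have hex : ∃ n, 0 < n ∧ Function.Periodic f n := ⟨N, hN, hper⟩
  obtain ⟨hn, hnper⟩ := Nat.find_spec hex
  have hmin : ∀ m, 0 < m → Function.Periodic f m → Nat.find hex ≤ m :=
    fun m h h' ↦ Nat.find_min' hex ⟨h, h'⟩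
  generalize Nat.find hex = n at hn hnper hmin
  have : NeZero n := ⟨hn.ne'⟩
  have hcast (a : ℕ) : f (a : ZMod n).val = f a := by
    rw [ZMod.val_natCast, hnper.map_mod_nat]
  refine ⟨n, this, { toFun := fun y ↦ f y.val, map_one' := ?_, map_mul' := ?_, map_nonunit' := ?_ },
    fun a ↦ hcast a⟩
  · rw [← h1, ← hcast 1, Nat.cast_one]
  · intro x y
    rw [← hmul, ← hcast (x.val * y.val)]
    simp
  · intro a ha
    by_contra hfa
    change f a.val ≠ 0 at hfa
    have hg : Nat.gcd a.val n ≠ 1 := by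
      intro h
      apply ha
      have := (ZMod.isUnit_iff_coprime a.val n).mpr h
      simpa using this
    have hgpos : 0 < Nat.gcd a.val n := Nat.gcd_pos_of_pos_right _ hn
    obtain ⟨m, hm⟩ := Nat.gcd_dvd_right a.val n
    obtain ⟨b, hb⟩ := Nat.gcd_dvd_left a.val n
    have hmpos : 0 < m := by
      rcases Nat.eq_zero_or_pos m with h | h
      · rw [h, mul_zero] at hm; omega
      · exact h
    have hmper : Function.Periodic f m := by
      intro x
      apply mul_left_cancel₀ hfa
      rw [← hmul, ← hmul, mul_add]
      have : a.val * m = b * n := by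
        calc a.val * m = (Nat.gcd a.val n * b) * m := by rw [← hb]
          _ = b * (Nat.gcd a.val n * m) := by ring
          _ = b * n := by rw [← hm]
      rw [this]
      exact hnper.nat_mul b _
    have := hmin m hmpos hmper
    have : 2 ≤ Nat.gcd a.val n := by omega
    nlinarith

lemma ZMod.LFunction_apply_one_ne_zero {N : ℕ} [NeZero N] (F : ZMod N → ℂ) (h1 : F 1 = 1)
    (hmul : ∀ a b, F (a * b) = F a * F b) (hodd : ∀ a, F (-a) = -F a) :
    ZMod.LFunction F 1 ≠ 0 := by
  obtain ⟨n, hn, χ, hχ⟩ := exists_dirichletCharacter_of_periodic (fun a : ℕ ↦ F a) (by simpa)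
    (by intro a b; push_cast; exact hmul _ _) (NeZero.pos N) (by intro a; simp)
  have hχ1 : χ ≠ 1 := by
    rintro rfl
    have h2 := hχ (-1 : ZMod N).val
    rw [ZMod.natCast_zmod_val, hodd, h1] at h2
    by_cases hu : IsUnit (((-1 : ZMod N).val : ℕ) : ZMod n)
    · rw [MulChar.one_apply hu] at h2
      norm_num at h2
    · rw [MulChar.map_nonunit _ hu] at h2
      norm_num at h2
  have hsum : ∑ j, F j = 0 := by
    have h : ∑ j, F j = ∑ j, F (-j) := (Equiv.sum_comp (Equiv.neg (ZMod N)) F).symm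
    simp only [hodd, Finset.sum_neg_distrib] at h
    linear_combination h / 2
  have hc1 := (ZMod.differentiable_LFunction_of_sum_zero hsum).continuous.tendsto 1
  have hc2 := (DirichletCharacter.differentiable_LFunction hχ1).continuous.tendsto 1
  have hseq : Tendsto (fun n : ℕ ↦ (1 : ℂ) + ((1 / ((n : ℝ) + 1) : ℝ) : ℂ)) atTop (𝓝 1) := by
    have := (tendsto_one_div_add_atTop_nhds_zero_nat (𝕜 := ℝ))
    have h2 := ((continuous_ofReal.tendsto 0).comp this).const_add (1 : ℂ)
    simpa using h2
  have := tendsto_nhds_unique (hc1.comp hseq) ((hc2.comp hseq).congr (fun m ↦ by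
    have hre : 1 < ((1 : ℂ) + ((1 / ((m : ℝ) + 1) : ℝ) : ℂ)).re := by
      simp only [add_re, one_re, ofReal_re]
      have : 0 < 1 / ((m : ℝ) + 1) := by positivity
      linarith
    simp only [Function.comp_apply]
    rw [ZMod.LFunction_eq_LSeries F hre, DirichletCharacter.LFunction_eq_LSeries χ hre]
    simp only [hχ]))
  rw [this]
  exact DirichletCharacter.LFunction_apply_one_ne_zero hχ1

lemma expZeta_neg_sub_expZeta {N : ℕ} [NeZero N] (j : ZMod N) :
    expZeta (ZMod.toAddCircle (-j)) 1 - expZeta (ZMod.toAddCircle j) 1 =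
      2 * Real.pi * I * zmodSawtooth N j := by
  rcases eq_or_ne j 0 with rfl | hj
  · simp [zmodSawtooth]
  have hN : (0 : ℝ) < N := by exact_mod_cast NeZero.pos N
  set x : ℝ := (j.val : ℝ) / N with hx
  have h0 : 0 < x := by
    have : 0 < j.val := Nat.pos_of_ne_zero (by simpa using hj)
    positivity
  have h1 : x < 1 := by
    rw [hx, div_lt_one hN]
    exact_mod_cast j.val_lt
  have hexp (y : ℝ) (hy : y = x ∨ y = -x) : cexp (2 * Real.pi * I * y) ≠ 1 := by
    rw [Ne, Complex.exp_eq_one_iff]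
    rintro ⟨n, hn⟩
    have h2 : (y : ℂ) = n := by
      have := Complex.two_pi_I_ne_zero
      apply mul_left_cancel₀ this
      rw [← mul_comm (n : ℂ), ← hn]
    have h3 : y = n := by exact_mod_cast h2
    rcases hy with rfl | rfl
    · rw [h3] at h0 h1
      have : 0 < n := by exact_mod_cast h0
      have : n < 1 := by exact_mod_cast h1
      omega
    · have h4 : x = ((-n : ℤ) : ℝ) := by push_cast; linarith
      rw [h4] at h0 h1
      have : 0 < -n := by exact_mod_cast h0
      have : -n < 1 := by exact_mod_cast h1
      omega
  rw [map_neg, ZMod.toAddCircle_apply, ← hx, ← AddCircle.coe_neg,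
    expZeta_apply_one (hexp x (.inl rfl)), expZeta_apply_one (hexp (-x) (.inr rfl)),
    zmodSawtooth, if_neg hj, ← hx]
  push_cast
  have := log_one_sub_exp_sub_log h0 h1
  push_cast at this
  linear_combination this

open ZMod in
lemma LFunction_dft_apply_one {N : ℕ} [NeZero N] (Φ : ZMod N → ℂ) (hΦ : ∀ j, Φ (-j) = -Φ j) :
    ZMod.LFunction (𝓕 Φ) 1 = Real.pi * I * ∑ j, Φ j * zmodSawtooth N j := by
  have h0 : Φ 0 = 0 := by
    have := hΦ 0
    rw [neg_zero] at this
    linear_combination this / 2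
  rw [ZMod.LFunction_dft Φ (.inl h0)]
  have h : ∑ j, Φ j * expZeta (ZMod.toAddCircle (-j)) 1 =
      ∑ j, Φ (-j) * expZeta (ZMod.toAddCircle (- -j)) 1 :=
    (Equiv.sum_comp (Equiv.neg (ZMod N)) (fun j ↦ Φ j * expZeta (ZMod.toAddCircle (-j)) 1)).symm
  simp only [hΦ, neg_neg, neg_mul, Finset.sum_neg_distrib] at h
  have h2 : ∑ j, Φ j * (2 * Real.pi * I * zmodSawtooth N j) =
      ∑ j, Φ j * expZeta (ZMod.toAddCircle (-j)) 1 -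
        ∑ j, Φ j * expZeta (ZMod.toAddCircle j) 1 := by
    simp only [← expZeta_neg_sub_expZeta, mul_sub, Finset.sum_sub_distrib]
  have h3 : ∑ j, Φ j * (2 * Real.pi * I * zmodSawtooth N j) =
      2 * (Real.pi * I * ∑ j, Φ j * zmodSawtooth N j) := by
    rw [Finset.mul_sum, Finset.mul_sum]
    exact Finset.sum_congr rfl fun j _ ↦ by ring
  linear_combination (1 / 2) * h + (1 / 2) * h3 - (1 / 2) * h2

/-- The functions `m ↦ zmodSawtooth N (m * j)` satisfy no nontrivial odd linear relation. -/
lemma eq_zero_of_sum_mul_zmodSawtooth {N : ℕ} [NeZero N] (c : ZMod N → ℂ)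
    (hodd : ∀ j, c (-j) = -c j) (hc : ∀ m, ∑ j, c j * zmodSawtooth N (m * j) = 0) : c = 0 := by
  classical
  let U (n : ZMod N) : Module.End ℂ (ZMod N → ℂ) := LinearMap.funLeft ℂ ℂ (fun m ↦ n * m)
  have hUapp (n : ZMod N) (F : ZMod N → ℂ) (m : ZMod N) : U n F m = F (n * m) := rfl
  have hLadd (F G : ZMod N → ℂ) :
      ZMod.LFunction (F + G) 1 = ZMod.LFunction F 1 + ZMod.LFunction G 1 := by
    simp [ZMod.LFunction, add_mul, Finset.sum_add_distrib, mul_add]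
  have hLsmul (a : ℂ) (F : ZMod N → ℂ) :
      ZMod.LFunction (a • F) 1 = a * ZMod.LFunction F 1 := by
    simp only [ZMod.LFunction, Pi.smul_apply, smul_eq_mul, mul_assoc, ← Finset.mul_sum]
    ring
  let V : Submodule ℂ (ZMod N → ℂ) :=
    { carrier := {F | (∀ j, F (-j) = -F j) ∧ ∀ n, ZMod.LFunction (U n F) 1 = 0}
      add_mem' := by
        rintro F G ⟨h1, h2⟩ ⟨h3, h4⟩
        refine ⟨fun j ↦ by simp [h1, h3]; ring, fun n ↦ by rw [map_add, hLadd, h2, h4, add_zero]⟩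
      zero_mem' := ⟨by simp, fun n ↦ by
        have := hLsmul 0 0
        rw [map_zero]
        simpa using this⟩
      smul_mem' := by
        rintro a F ⟨h1, h2⟩
        exact ⟨fun j ↦ by simp [h1], fun n ↦ by rw [map_smul, hLsmul, h2, mul_zero]⟩ }
  have hmem : ZMod.dft c ∈ V := by
    refine ⟨fun j ↦ ?_, fun n ↦ ?_⟩
    · rw [ZMod.dft_apply, ZMod.dft_apply, ← Equiv.sum_comp (Equiv.neg (ZMod N)),
        ← Finset.sum_neg_distrib]
      refine Finset.sum_congr rfl fun x _ ↦ ?_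
      simp [hodd]
    · let c' : ZMod N → ℂ := fun b ↦ ∑ a with n * a = b, c a
      have h1 : U n (ZMod.dft c) = ZMod.dft c' := by
        ext m
        rw [hUapp, ZMod.dft_apply, ZMod.dft_apply]
        simp only [c', Finset.smul_sum]
        rw [← Finset.sum_fiberwise (s := Finset.univ) (g := fun a ↦ n * a)]
        refine Finset.sum_congr rfl fun b _ ↦ Finset.sum_congr rfl fun a ha ↦ ?_
        rw [← (Finset.mem_filter.mp ha).2]
        congr 3
        ring
      have h2 : ∀ j, c' (-j) = -c' j := by
        intro j
        simp only [c', ← Finset.sum_neg_distrib]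
        refine Finset.sum_equiv (Equiv.neg _) ?_ ?_
        · intro i
          simp [neg_eq_iff_eq_neg]
        · intro i _
          simp [hodd]
      rw [h1, LFunction_dft_apply_one c' h2]
      have h3 : ∑ j, c' j * zmodSawtooth N j = ∑ j, c j * zmodSawtooth N (n * j) := by
        simp only [c', Finset.sum_mul]
        rw [← Finset.sum_fiberwise (s := Finset.univ) (g := fun a ↦ n * a)
          (f := fun j ↦ c j * (zmodSawtooth N (n * j) : ℂ))]
        refine Finset.sum_congr rfl fun b _ ↦ Finset.sum_congr rfl fun a ha ↦ ?_
        rw [(Finset.mem_filter.mp ha).2]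
      rw [h3, hc, mul_zero]
  by_contra hc0
  have hV : V ≠ ⊥ := by
    intro h
    rw [h, Submodule.mem_bot] at hmem
    exact hc0 (by simpa using hmem)
  obtain ⟨F, ⟨hFodd, hFL⟩, hF0, hFeig⟩ := Module.End.exists_common_eigenvector U
    (fun a b ↦ LinearMap.ext fun F ↦ funext fun m ↦ by
      simp only [Module.End.mul_apply, hUapp]
      rw [mul_left_comm]) V hV
    (by
      rintro n F ⟨h1, h2⟩
      refine ⟨fun j ↦ by simp only [hUapp, mul_neg, h1], fun m ↦ ?_⟩
      have : U m (U n F) = U (n * m) F := by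
        ext x
        simp only [hUapp, mul_assoc]
      rw [this, h2])
  choose μ hμ using hFeig
  have hmul (n m : ZMod N) : F (n * m) = μ n * F m := by
    have := congrFun (hμ n) m
    simpa [hUapp] using this
  have hF1 : F 1 ≠ 0 := by
    intro h
    apply hF0
    ext n
    simpa [h] using hmul n 1
  have hμF (n : ZMod N) : F n = μ n * F 1 := by simpa using hmul n 1
  refine ZMod.LFunction_apply_one_ne_zero ((F 1)⁻¹ • F) ?_ ?_ ?_ ?_
  · simp [hF1]
  · intro a b
    simp only [Pi.smul_apply, smul_eq_mul, hmul, hμF a]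
    field_simp
  · intro a
    simp [hFodd]
  · have : U 1 F = F := by ext; simp [hUapp]
    rw [hLsmul, ← this, hFL, mul_zero]

/-- The signed distance from `x` to the nearest integer, with value in `(-1/2, 1/2]`. -/
noncomputable def roundOff (x : ℝ) : ℝ := x - ⌈x - 1 / 2⌉

lemma roundOff_add_intCast (x : ℝ) (n : ℤ) : roundOff (x + n) = roundOff x := by
  have : x + n - 1 / 2 = x - 1 / 2 + n := by ring
  rw [roundOff, roundOff, this, Int.ceil_add_intCast]
  push_cast; ring

lemma exists_eq_roundOff_add (x : ℝ) : ∃ n : ℤ, x = roundOff x + n :=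
  ⟨⌈x - 1 / 2⌉, by rw [roundOff]; ring⟩

lemma roundOff_eq {x : ℝ} (n : ℤ) (h1 : n - 1 / 2 < x) (h2 : x ≤ n + 1 / 2) :
    roundOff x = x - n := by
  have : ⌈x - 1 / 2⌉ = n := by
    rw [Int.ceil_eq_iff]
    constructor <;> linarith
  rw [roundOff, this]

lemma neg_half_lt_roundOff (x : ℝ) : -(1 / 2) < roundOff x := by
  rw [roundOff]
  linarith [Int.ceil_lt_add_one (x - 1 / 2)]

lemma roundOff_le_half (x : ℝ) : roundOff x ≤ 1 / 2 := by
  rw [roundOff]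
  linarith [Int.le_ceil (x - 1 / 2)]

/-- `x` lies in `ℤ + 1/2`. -/
def IsHalfInt (x : ℝ) : Prop := ∃ n : ℤ, x = n + 1 / 2

lemma roundOff_eq_half_iff {x : ℝ} : roundOff x = 1 / 2 ↔ IsHalfInt x := by
  constructor
  · intro h
    obtain ⟨n, hn⟩ := exists_eq_roundOff_add x
    exact ⟨n, by rw [hn, h]; ring⟩
  · rintro ⟨n, rfl⟩
    rw [roundOff_eq n (by linarith) le_rfl]; ring

lemma roundOff_lt_half {x : ℝ} (hx : ¬IsHalfInt x) : roundOff x < 1 / 2 :=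
  lt_of_le_of_ne (roundOff_le_half x) (fun h ↦ hx (roundOff_eq_half_iff.mp h))

lemma roundOff_neg {x : ℝ} (hx : ¬IsHalfInt x) : roundOff (-x) = -roundOff x := by
  obtain ⟨n, hn⟩ := exists_eq_roundOff_add x
  have h1 := roundOff_lt_half hx
  have h2 := neg_half_lt_roundOff x
  rw [roundOff_eq (-n) (by push_cast; linarith) (by push_cast; linarith)]
  push_cast; linarith

lemma continuousAt_roundOff {x : ℝ} (hx : ¬IsHalfInt x) : ContinuousAt roundOff x := by
  obtain ⟨n, hn⟩ := exists_eq_roundOff_add x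
  have h1 := roundOff_lt_half hx
  have h2 := neg_half_lt_roundOff x
  have : roundOff =ᶠ[𝓝 x] fun y ↦ y - n := by
    filter_upwards [Ioo_mem_nhds (show (n : ℝ) - 1 / 2 < x by linarith)
      (show x < (n : ℝ) + 1 / 2 by linarith)] with y hy
    exact roundOff_eq n hy.1 hy.2.le
  exact ContinuousAt.congr (by fun_prop) this.symm

lemma not_isHalfInt_zero : ¬IsHalfInt 0 := by
  rintro ⟨n, hn⟩
  have : (2 * n + 1 : ℝ) = 0 := by linarith
  have : 2 * n + 1 = 0 := by exact_mod_cast this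
  omega

lemma roundOff_zero : roundOff 0 = 0 := by
  rw [roundOff_eq 0] <;> norm_num

lemma IsHalfInt.neg {x : ℝ} (hx : IsHalfInt x) : IsHalfInt (-x) := by
  obtain ⟨n, rfl⟩ := hx
  exact ⟨-n - 1, by push_cast; ring⟩

section Line

variable {ι : Type*} [Fintype ι]

lemma exists_seq_tendsto_roundOff_mul (d : ι → ℝ) : ∃ q : ℕ → ℕ, (∀ n, 0 < q n) ∧
    ∀ i, Tendsto (fun n ↦ roundOff (q n * d i)) atTop (𝓝 0) := by
  have hmem (n : ℕ) : (fun i ↦ Int.fract (n * d i)) ∈ Set.Icc (0 : ι → ℝ) 1 :=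
    ⟨fun i ↦ Int.fract_nonneg _, fun i ↦ (Int.fract_lt_one _).le⟩
  obtain ⟨a, -, φ, hφ, ha⟩ := isCompact_Icc.tendsto_subseq hmem
  refine ⟨fun n ↦ φ (n + 1) - φ n, fun n ↦ Nat.sub_pos_of_lt (hφ n.lt_succ_self), fun i ↦ ?_⟩
  have h1 : Tendsto (fun n ↦ Int.fract (φ n * d i)) atTop (𝓝 (a i)) := tendsto_pi_nhds.mp ha i
  have h2 := ((tendsto_add_atTop_iff_nat 1).mpr h1).sub h1
  rw [sub_self] at h2
  have h3 := (continuousAt_roundOff not_isHalfInt_zero).tendsto.comp h2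
  rw [roundOff_zero] at h3
  refine h3.congr fun n ↦ ?_
  have h4 := (hφ n.lt_succ_self).le
  simp only [Function.comp_apply]
  rw [Nat.cast_sub h4, ← roundOff_add_intCast _ (⌊φ (n + 1) * d i⌋ - ⌊φ n * d i⌋)]
  congr 1
  push_cast
  linarith [Int.floor_add_fract (φ (n + 1) * d i), Int.floor_add_fract (φ n * d i)]

lemma not_isHalfInt_of_sum_roundOff_eq_zero {d : ι → ℝ}
    (hd : ∀ m : ℕ, ∑ i, roundOff (m * d i) = 0) (m : ℕ) (i : ι) : ¬IsHalfInt (m * d i) := by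
  classical
  rcases Nat.eq_zero_or_pos m with rfl | hm
  · simpa using not_isHalfInt_zero
  obtain ⟨r, hr, hlim⟩ := exists_seq_tendsto_roundOff_mul (fun i ↦ 2 * m * d i)
  have hterm (i : ι) : Tendsto (fun n ↦ roundOff (m * d i) +
      roundOff (((2 * m * r n - m : ℕ) : ℝ) * d i)) atTop
      (𝓝 (if IsHalfInt (m * d i) then 1 else 0)) := by
    have hle (n : ℕ) : m ≤ 2 * m * r n := by nlinarith [hr n]
    have hcong (n : ℕ) : roundOff (((2 * m * r n - m : ℕ) : ℝ) * d i) =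
        roundOff (-(m * d i) + roundOff (r n * (2 * m * d i))) := by
      obtain ⟨p, hp⟩ := exists_eq_roundOff_add (r n * (2 * m * d i))
      rw [Nat.cast_sub (hle n), ← roundOff_add_intCast (-(m * d i) + _) p]
      congr 1
      push_cast
      linarith
    simp only [hcong]
    split_ifs with h
    · refine tendsto_const_nhds.congr fun n ↦ ?_
      have h0 : roundOff (r n * (2 * m * d i)) = 0 := by
        obtain ⟨p, hp⟩ := h
        have : r n * (2 * m * d i) = 0 + ((r n * (2 * p + 1) : ℤ) : ℝ) := by
          push_cast
          linear_combination 2 * (r n : ℝ) * hp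
        rw [this, roundOff_add_intCast, roundOff_zero]
      rw [h0, add_zero, roundOff_eq_half_iff.mpr h, roundOff_eq_half_iff.mpr h.neg]
      norm_num
    · have h1 : Tendsto (fun n ↦ -(m * d i) + roundOff (r n * (2 * m * d i))) atTop
          (𝓝 (-(m * d i))) := by simpa using (hlim i).const_add (-(m * d i))
      have h2 : ¬IsHalfInt (-(m * d i)) := fun h' ↦ h (by simpa using h'.neg)
      have h3 := ((continuousAt_roundOff h2).tendsto.comp h1).const_add (roundOff (m * d i))
      rw [roundOff_neg h, add_neg_cancel] at h3
      exact h3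
  have hsum := tendsto_finsetSum Finset.univ fun i _ ↦ hterm i
  simp only [Finset.sum_add_distrib, hd, add_zero] at hsum
  have h0 := tendsto_nhds_unique hsum tendsto_const_nhds
  rw [Finset.sum_eq_zero_iff_of_nonneg (fun i _ ↦ by split_ifs <;> norm_num)] at h0
  intro h
  simpa [h] using h0 i (Finset.mem_univ i)

lemma exists_line_of_sum_roundOff_eq_zero {d : ι → ℝ}
    (hd : ∀ m : ℕ, ∑ i, roundOff (m * d i) = 0) {i₀ : ι}
    (hi₀ : ∀ q : ℕ, 0 < q → roundOff (q * d i₀) ≠ 0) :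
    ∃ w : ι → ℝ, w ≠ 0 ∧ ∀ (m : ℕ) (t : ℝ), 0 ≤ t → (∀ i, ¬IsHalfInt (m * d i + t * w i)) →
      ∑ i, roundOff (m * d i + t * w i) = 0 := by
  obtain ⟨q, hq, hlim⟩ := exists_seq_tendsto_roundOff_mul d
  set v : ℕ → ι → ℝ := fun n i ↦ roundOff (q n * d i) with hv
  have hv0 (n : ℕ) : v n ≠ 0 := fun h ↦ hi₀ (q n) (hq n) (congrFun h i₀)
  have hvpos (n : ℕ) : 0 < ‖v n‖ := norm_pos_iff.mpr (hv0 n)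
  have hvlim : Tendsto (fun n ↦ ‖v n‖) atTop (𝓝 0) := by
    have : Tendsto v atTop (𝓝 0) := tendsto_pi_nhds.mpr hlim
    simpa using this.norm
  have hmem (n : ℕ) : ‖v n‖⁻¹ • v n ∈ Metric.sphere (0 : ι → ℝ) 1 := by
    simp [norm_smul, (hvpos n).ne']
  obtain ⟨w, hw, φ, hφ, hwlim⟩ := (isCompact_sphere (0 : ι → ℝ) 1).tendsto_subseq hmem
  refine ⟨w, ?_, fun m t ht hhalf ↦ ?_⟩
  · rintro rfl
    simp at hw
  have hvφ : Tendsto (fun n ↦ ‖v (φ n)‖) atTop (𝓝 0) := hvlim.comp hφ.tendsto_atTop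
  set c : ℕ → ℕ := fun n ↦ ⌊t / ‖v (φ n)‖⌋₊ with hc
  have hclim : Tendsto (fun n ↦ c n * ‖v (φ n)‖) atTop (𝓝 t) := by
    have h1 : Tendsto (fun n ↦ t - ‖v (φ n)‖) atTop (𝓝 t) := by simpa using hvφ.const_sub t
    refine tendsto_of_tendsto_of_tendsto_of_le_of_le h1 tendsto_const_nhds (fun n ↦ ?_) fun n ↦ ?_
    · have := Nat.lt_floor_add_one (t / ‖v (φ n)‖)
      rw [div_lt_iff₀ (hvpos _)] at this
      simp only [hc]
      linarith
    · have := Nat.floor_le (div_nonneg ht (hvpos (φ n)).le)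
      rwa [le_div_iff₀ (hvpos _)] at this
  have hterm (i : ι) : Tendsto (fun n ↦ roundOff (((m + c n * q (φ n) : ℕ) : ℝ) * d i)) atTop
      (𝓝 (roundOff (m * d i + t * w i))) := by
    have h1 : Tendsto (fun n ↦ ‖v (φ n)‖⁻¹ * v (φ n) i) atTop (𝓝 (w i)) :=
      tendsto_pi_nhds.mp hwlim i
    have h2 := (continuousAt_roundOff (hhalf i)).tendsto.comp
      ((hclim.mul h1).const_add (m * d i))
    refine h2.congr fun n ↦ ?_
    obtain ⟨p, hp⟩ := exists_eq_roundOff_add (q (φ n) * d i)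
    simp only [Function.comp_apply]
    rw [← roundOff_add_intCast _ (c n * p)]
    congr 1
    have h3 : (c n : ℝ) * ‖v (φ n)‖ * (‖v (φ n)‖⁻¹ * v (φ n) i) = c n * v (φ n) i := by
      have := (hvpos (φ n)).ne'
      field_simp
    rw [h3]
    simp only [hv]
    push_cast
    linear_combination -(c n : ℝ) * hp
  have hsum := tendsto_finsetSum Finset.univ fun i _ ↦ hterm i
  simp only [hd] at hsum
  exact tendsto_nhds_unique hsum tendsto_const_nhds

end Line

lemma intervalIntegral_comp_add_mul_exp {G : ℝ → ℝ} (hG : Function.Periodic G 1) (x : ℝ) :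
    ∫ t in (0 : ℝ)..1, (G (t + x) : ℂ) * cexp (-(2 * Real.pi * I) * t) =
      cexp (2 * Real.pi * I * x) *
        ∫ t in (0 : ℝ)..1, (G t : ℂ) * cexp (-(2 * Real.pi * I) * t) := by
  set F : ℝ → ℂ := fun t ↦ (G t : ℂ) * cexp (-(2 * Real.pi * I) * t) with hF
  have hper : Function.Periodic F 1 := by
    intro t
    have : -(2 * Real.pi * I) * ((t + 1 : ℝ) : ℂ) = -(2 * Real.pi * I) * t - 2 * Real.pi * I := by
      push_cast; ring
    simp only [hF, hG t, this, Complex.exp_sub, Complex.exp_two_pi_mul_I, div_one]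
  have h1 : ∀ t : ℝ, (G (t + x) : ℂ) * cexp (-(2 * Real.pi * I) * t) =
      cexp (2 * Real.pi * I * x) * F (t + x) := by
    intro t
    simp only [hF]
    rw [mul_left_comm, ← Complex.exp_add]
    congr 2
    push_cast; ring
  simp only [h1]
  rw [intervalIntegral.integral_const_mul, intervalIntegral.integral_comp_add_right]
  congr 1
  have := hper.intervalIntegral_add_eq x 0
  rw [zero_add, add_comm x 1] at this
  rw [zero_add, this]

lemma intervalIntegral_mul_exp_eq_zero {ι : Type*} {S : Finset ι} {P : ι → ℝ}
    (hP0 : ∀ i ∈ S, 0 < P i) (hP1 : ∀ i ∈ S, P i < 1) {h : ι → ℝ → ℝ}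
    (hper : ∀ i ∈ S, Function.Periodic (h i) (P i)) {G : ℝ → ℝ} (hG : Function.Periodic G 1)
    (hGint : ∀ a b, IntervalIntegrable G volume a b)
    (hsum : ∀ᵐ t, 0 < t → G t + ∑ i ∈ S, h i t = 0) :
    ∫ t in (0 : ℝ)..1, (G t : ℂ) * cexp (-(2 * Real.pi * I) * t) = 0 := by
  classical
  induction S using Finset.induction_on generalizing G h with
  | empty =>
    refine intervalIntegral.integral_zero_ae ?_
    filter_upwards [hsum] with t ht hmem
    rw [Set.uIoc_of_le zero_le_one] at hmem
    have h0 : G t = 0 := by simpa using ht hmem.1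
    simp [h0]
  | insert i S hi ih =>
    have hPi0 := hP0 i (by simp)
    have hPi1 := hP1 i (by simp)
    have hGs (a b : ℝ) : IntervalIntegrable (fun t ↦ G (t + P i)) volume a b := by
      have := (hGint (a + P i) (b + P i)).comp_add_right (P i)
      simpa using this
    have key := ih (G := fun t ↦ G (t + P i) - G t) (h := fun j t ↦ h j (t + P i) - h j t)
      (fun j hj ↦ hP0 j (by simp [hj])) (fun j hj ↦ hP1 j (by simp [hj]))
      (fun j hj t ↦ by
        have := hper j (by simp [hj])
        simp only [add_right_comm t (P j) (P i), this _])
      (fun t ↦ by simp only [add_right_comm t 1 (P i), hG _])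
      (fun a b ↦ (hGs a b).sub (hGint a b)) ?_
    · have hexp (a b : ℝ) : ContinuousOn (fun t : ℝ ↦ cexp (-(2 * Real.pi * I) * t))
          (Set.uIcc a b) := by fun_prop
      have hint (F : ℝ → ℝ) (hF : IntervalIntegrable F volume 0 1) : IntervalIntegrable
          (fun t ↦ (F t : ℂ) * cexp (-(2 * Real.pi * I) * t)) volume 0 1 :=
        IntervalIntegrable.mul_continuousOn ⟨hF.1.ofReal, hF.2.ofReal⟩ (hexp 0 1)
      simp only [ofReal_sub, sub_mul] at key
      rw [intervalIntegral.integral_sub (hint _ (hGs 0 1)) (hint _ (hGint 0 1)),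
        intervalIntegral_comp_add_mul_exp hG, ← sub_one_mul] at key
      refine (mul_eq_zero.mp key).resolve_left fun h0 ↦ ?_
      rw [sub_eq_zero, Complex.exp_eq_one_iff] at h0
      obtain ⟨n, hn⟩ := h0
      have h2 : (P i : ℂ) = n := by
        have := Complex.two_pi_I_ne_zero
        rw [mul_comm] at hn
        exact mul_right_cancel₀ this hn
      have h3 : P i = n := by exact_mod_cast h2
      rw [h3] at hPi0 hPi1
      have h4 : 0 < n := by exact_mod_cast hPi0
      have h5 : n < 1 := by exact_mod_cast hPi1
      omega
    · have hshift := (measurePreserving_add_right volume (P i)).quasiMeasurePreserving.ae hsum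
      filter_upwards [hsum, hshift] with t h1 h2 ht
      have h3 := h1 ht
      have h4 := h2 (by linarith)
      rw [Finset.sum_insert hi] at h3 h4
      rw [hper i (by simp) t] at h4
      rw [Finset.sum_sub_distrib]
      linarith

lemma periodic_roundOff : Function.Periodic roundOff 1 := fun x ↦ by
  simpa using roundOff_add_intCast x 1

lemma countable_isHalfInt_add_mul (x : ℝ) {w : ℝ} (hw : w ≠ 0) :
    {t : ℝ | IsHalfInt (x + t * w)}.Countable := by
  refine (Set.countable_range fun n : ℤ ↦ ((n : ℝ) + 1 / 2 - x) / w).mono ?_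
  rintro t ⟨n, hn⟩
  refine ⟨n, ?_⟩
  simp only [← hn]
  field_simp
  ring

lemma intervalIntegrable_roundOff (x w a b : ℝ) :
    IntervalIntegrable (fun t ↦ roundOff (x + t * w)) volume a b := by
  refine (intervalIntegrable_const (c := (1 : ℝ))).mono_fun ?_ ?_
  · have : Measurable fun t ↦ roundOff (x + t * w) := by
      unfold roundOff
      fun_prop
    exact this.aestronglyMeasurable
  · refine Eventually.of_forall fun t ↦ ?_
    have h1 := neg_half_lt_roundOff (x + t * w)
    have h2 := roundOff_le_half (x + t * w)
    simp only [Real.norm_eq_abs, abs_one]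
    rw [abs_le]
    constructor <;> linarith

lemma intervalIntegral_roundOff_mul_exp :
    ∫ t in (0 : ℝ)..1, (roundOff t : ℂ) * cexp (-(2 * Real.pi * I) * t) =
      1 / (2 * Real.pi * I) := by
  set c : ℂ := 2 * Real.pi * I with hc
  have hc0 : c ≠ 0 := Complex.two_pi_I_ne_zero
  have hper : Function.Periodic (fun t : ℝ ↦ (roundOff t : ℂ) * cexp (-c * t)) 1 := by
    intro t
    have : -c * ((t + 1 : ℝ) : ℂ) = -c * t - c := by push_cast; ring
    simp only [periodic_roundOff t, this, Complex.exp_sub]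
    rw [hc, Complex.exp_two_pi_mul_I, div_one]
  have h1 := hper.intervalIntegral_add_eq 0 (-(1 / 2))
  rw [zero_add, show -(1 / 2 : ℝ) + 1 = 1 / 2 by norm_num] at h1
  rw [h1]
  have h2 : ∫ t in (-(1 / 2) : ℝ)..(1 / 2), (roundOff t : ℂ) * cexp (-c * t) =
      ∫ t in (-(1 / 2) : ℝ)..(1 / 2), (t : ℂ) * cexp (-c * t) := by
    refine intervalIntegral.integral_congr_ae (Eventually.of_forall fun t ht ↦ ?_)
    rw [Set.uIoc_of_le (by norm_num)] at ht
    rw [roundOff_eq 0 (by push_cast; linarith [ht.1]) (by push_cast; linarith [ht.2])]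
    simp
  rw [h2]
  have hderiv (t : ℝ) : HasDerivAt (fun t : ℝ ↦ (-(t : ℂ) / c - 1 / c ^ 2) * cexp (-c * t))
      ((t : ℂ) * cexp (-c * t)) t := by
    have e1 : HasDerivAt (fun z : ℂ ↦ (-z / c - 1 / c ^ 2) * cexp (-c * z))
        ((-1 / c) * cexp (-c * t) + (-(t : ℂ) / c - 1 / c ^ 2) * (cexp (-c * t) * (-c * 1)))
        (t : ℂ) := by
      refine HasDerivAt.mul ?_ ?_
      · exact (((hasDerivAt_id _).neg).div_const c).sub_const _
      · exact ((hasDerivAt_id _).const_mul (-c)).cexp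
    convert e1.comp_ofReal using 1
    field_simp
    ring
  rw [intervalIntegral.integral_eq_sub_of_hasDerivAt (fun t _ ↦ hderiv t)
    (Continuous.intervalIntegrable (by fun_prop) _ _)]
  have e1 : cexp (-c * ((1 / 2 : ℝ) : ℂ)) = -1 := by
    rw [show -c * ((1 / 2 : ℝ) : ℂ) = -(Real.pi * I) by rw [hc]; push_cast; ring,
      Complex.exp_neg, Complex.exp_pi_mul_I]
    norm_num
  have e2 : cexp (-c * ((-(1 / 2) : ℝ) : ℂ)) = -1 := by
    rw [show -c * ((-(1 / 2) : ℝ) : ℂ) = Real.pi * I by rw [hc]; push_cast; ring,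
      Complex.exp_pi_mul_I]
  rw [e1, e2]
  push_cast
  field_simp
  ring

lemma intervalIntegral_roundOff_add_mul_exp (x : ℝ) {w : ℝ} (hw : |w| = 1) :
    ∫ t in (0 : ℝ)..1, (roundOff (x + t * w) : ℂ) * cexp (-(2 * Real.pi * I) * t) =
      w * cexp (2 * Real.pi * I * (w * x)) * (1 / (2 * Real.pi * I)) := by
  rcases eq_or_eq_neg_of_abs_eq hw with rfl | rfl
  · have := intervalIntegral_comp_add_mul_exp periodic_roundOff x
    rw [intervalIntegral_roundOff_mul_exp] at this
    simp only [mul_one, add_comm x, this, ofReal_one, one_mul]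
  · have h1 : ∫ t in (0 : ℝ)..1, (roundOff (x + t * -1) : ℂ) * cexp (-(2 * Real.pi * I) * t) =
        ∫ t in (0 : ℝ)..1, -((roundOff (t + -x) : ℂ) * cexp (-(2 * Real.pi * I) * t)) := by
      refine intervalIntegral.integral_congr_ae ?_
      filter_upwards [(countable_isHalfInt_add_mul (-x) one_ne_zero).ae_notMem volume] with t ht _
      have h2 : ¬IsHalfInt (t + -x) := by simpa [add_comm] using ht
      rw [show x + t * -1 = -(t + -x) by ring, roundOff_neg h2]
      push_cast; ring
    rw [h1, intervalIntegral.integral_neg, intervalIntegral_comp_add_mul_exp periodic_roundOff,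
      intervalIntegral_roundOff_mul_exp]
    simp

lemma eq_zero_of_forall_sum_mul_pow_eq_zero {ι : Type*} {S : Finset ι} {z v : ι → ℂ}
    (hz : Set.InjOn z S) (h : ∀ m : ℕ, ∑ i ∈ S, v i * z i ^ m = 0) {i : ι} (hi : i ∈ S) :
    v i = 0 := by
  have hli := (linearIndependent_monoidHom (Multiplicative ℕ) ℂ).comp
    (fun j : S ↦ powersHom ℂ (z j)) (fun a b hab ↦ Subtype.ext (hz a.2 b.2 (by simpa using hab)))
  rw [Fintype.linearIndependent_iff] at hli
  refine hli (fun j ↦ v j) (funext fun m ↦ ?_) ⟨i, hi⟩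
  have := h m.toAdd
  rw [← Finset.sum_coe_sort] at this
  simpa [powersHom_apply] using this

lemma exists_roundOff_mul_eq_zero {ι : Type*} [Fintype ι] {d : ι → ℝ}
    (hd : ∀ m : ℕ, ∑ i, roundOff (m * d i) = 0)
    (hsub : ∀ i j, i ≠ j → ∀ n : ℤ, d i - d j ≠ n) (hadd : ∀ i j, ∀ n : ℤ, d i + d j ≠ n) (i₀ : ι) :
    ∃ q : ℕ, 0 < q ∧ roundOff (q * d i₀) = 0 := by
  classical
  by_contra! hcon
  obtain ⟨w₀, hw₀, hline₀⟩ := exists_line_of_sum_roundOff_eq_zero hd hcon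
  obtain ⟨w, i₁, hi₁, hw1, hline⟩ : ∃ w : ι → ℝ, ∃ i₁, |w i₁| = 1 ∧ (∀ i, w i ≠ 0 → 1 ≤ |w i|) ∧
      ∀ (m : ℕ) (t : ℝ), 0 ≤ t → (∀ i, ¬IsHalfInt (m * d i + t * w i)) →
        ∑ i, roundOff (m * d i + t * w i) = 0 := by
    obtain ⟨j, hj⟩ := Function.ne_iff.mp hw₀
    obtain ⟨i₁, hi₁, hmin⟩ := Finset.exists_min_image (Finset.univ.filter fun i ↦ w₀ i ≠ 0)
      (fun i ↦ |w₀ i|) ⟨j, by simpa using hj⟩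
    simp only [Finset.mem_filter, Finset.mem_univ, true_and] at hi₁ hmin
    have hpos : 0 < |w₀ i₁| := abs_pos.mpr hi₁
    refine ⟨fun i ↦ w₀ i / |w₀ i₁|, i₁, ?_, fun i hi ↦ ?_, fun m t ht hh ↦ ?_⟩
    · simp [abs_div, hpos.ne']
    · rw [abs_div, abs_abs, one_le_div hpos]
      exact hmin i fun h0 ↦ hi (by simp [h0])
    · have h1 (i : ι) : t * (w₀ i / |w₀ i₁|) = t / |w₀ i₁| * w₀ i := by ring
      simp only [h1] at hh ⊢
      exact hline₀ m _ (by positivity) hh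
  set T := Finset.univ.filter fun i ↦ |w i| = 1 with hT
  set S := Finset.univ.filter fun i ↦ ¬|w i| = 1 with hS
  have hsum (m : ℕ) : ∑ i ∈ T, (w i : ℂ) * cexp (2 * Real.pi * I * (w i * d i)) ^ m = 0 := by
    have hper : ∀ i, w i ≠ 0 → Function.Periodic (fun t ↦ roundOff (m * d i + t * w i))
        (1 / |w i|) := by
      intro i hi t
      simp only
      rcases abs_cases (w i) with ⟨h, -⟩ | ⟨h, -⟩ <;> rw [h]
      · rw [show m * d i + (t + 1 / w i) * w i = m * d i + t * w i + ((1 : ℤ) : ℝ) by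
          field_simp; push_cast; ring, roundOff_add_intCast]
      · rw [show m * d i + (t + 1 / -w i) * w i = m * d i + t * w i + ((-1 : ℤ) : ℝ) by
          field_simp; push_cast; ring, roundOff_add_intCast]
    have hint := intervalIntegral_mul_exp_eq_zero (S := S)
      (P := fun i ↦ if w i = 0 then 1 / 2 else 1 / |w i|)
      (h := fun i t ↦ roundOff (m * d i + t * w i))
      (G := fun t ↦ ∑ i ∈ T, roundOff (m * d i + t * w i))
      (fun i hi ↦ by
        split_ifs with h
        · norm_num
        · have := abs_pos.mpr h
          positivity)
      (fun i hi ↦ by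
        split_ifs with h
        · norm_num
        · have h1 : 1 < |w i| := lt_of_le_of_ne (hw1 i h) (Ne.symm (by simpa [hS] using hi))
          rw [div_lt_one (by linarith)]
          exact h1)
      (fun i hi ↦ by
        split_ifs with h
        · intro t
          simp [h]
        · exact hper i h)
      (fun t ↦ by
        refine Finset.sum_congr rfl fun i hi ↦ ?_
        have h1 : |w i| = 1 := by simpa [hT] using hi
        have h2 := hper i (by rintro h; simp [h] at h1)
        rw [h1, div_one] at h2
        exact h2 t)
      (fun a b ↦ by
        rw [show (fun t ↦ ∑ i ∈ T, roundOff (m * d i + t * w i)) =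
          ∑ i ∈ T, fun t ↦ roundOff (m * d i + t * w i) by ext t; simp [Finset.sum_apply]]
        exact IntervalIntegrable.sum (μ := volume) (a := a) (b := b) T
          (f := fun i t ↦ roundOff (m * d i + t * w i))
          (fun i _ ↦ intervalIntegrable_roundOff _ _ _ _)
        )
      (by
        have hae : ∀ᵐ t, ∀ i, w i ≠ 0 → ¬IsHalfInt (m * d i + t * w i) := by
          rw [ae_all_iff]
          intro i
          by_cases h : w i = 0
          · simp [h]
          · filter_upwards [(countable_isHalfInt_add_mul (m * d i) h).ae_notMem volume] with t ht _
            exact ht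
        filter_upwards [hae] with t ht ht0
        rw [Finset.sum_filter_add_sum_filter_not]
        refine hline m t ht0.le fun i ↦ ?_
        by_cases h : w i = 0
        · simpa [h] using not_isHalfInt_of_sum_roundOff_eq_zero hd m i
        · exact ht i h)
    have hcalc : ∫ t in (0 : ℝ)..1, ((∑ i ∈ T, roundOff (m * d i + t * w i) : ℝ) : ℂ) *
        cexp (-(2 * Real.pi * I) * t) = (∑ i ∈ T, (w i : ℂ) *
          cexp (2 * Real.pi * I * (w i * d i)) ^ m) * (1 / (2 * Real.pi * I)) := by
      simp only [ofReal_sum, Finset.sum_mul]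
      rw [intervalIntegral.integral_finsetSum]
      · refine Finset.sum_congr rfl fun i hi ↦ ?_
        rw [intervalIntegral_roundOff_add_mul_exp _ (by simpa [hT] using hi), ← Complex.exp_nat_mul]
        congr 3
        push_cast; ring
      · intro i hi
        have h1 := intervalIntegrable_roundOff (m * d i) (w i) 0 1
        exact IntervalIntegrable.mul_continuousOn ⟨h1.1.ofReal, h1.2.ofReal⟩ (by fun_prop)
    rw [hcalc] at hint
    exact (mul_eq_zero.mp hint).resolve_right (one_div_ne_zero Complex.two_pi_I_ne_zero)
  have hinj : Set.InjOn (fun i ↦ cexp (2 * Real.pi * I * (w i * d i))) T := by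
    intro i hi j hj hij
    simp only at hij
    rw [Complex.exp_eq_exp_iff_exists_int] at hij
    obtain ⟨n, hn⟩ := hij
    have h1 : (w i * d i : ℂ) = w j * d j + n := by
      have := Complex.two_pi_I_ne_zero
      have h2 : 2 * Real.pi * I * (w i * d i) = 2 * Real.pi * I * (w j * d j + n) := by
        rw [hn]; ring
      exact mul_left_cancel₀ this h2
    have h2 : w i * d i = w j * d j + n := by exact_mod_cast h1
    have hwi : |w i| = 1 := by simpa [hT] using hi
    have hwj : |w j| = 1 := by simpa [hT] using hj
    by_contra hne
    rcases eq_or_eq_neg_of_abs_eq hwi with e1 | e1 <;>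
      rcases eq_or_eq_neg_of_abs_eq hwj with e2 | e2 <;> rw [e1, e2] at h2
    · exact hsub i j hne n (by linarith)
    · exact hadd i j n (by linarith)
    · exact hadd i j (-n) (by push_cast; linarith)
    · exact hsub i j hne (-n) (by push_cast; linarith)
  have h0 := eq_zero_of_forall_sum_mul_pow_eq_zero (v := fun i ↦ (w i : ℂ)) hinj hsum
    (i := i₁) (by simpa [hT] using hi₁)
  have h1 : w i₁ = 0 := by exact_mod_cast h0
  simp [h1] at hi₁

lemma zmodSawtooth_intCast {N : ℕ} {a n : ℤ} (h1 : n * N < a) (h2 : a < (n + 1) * N) :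
    zmodSawtooth N a = (a : ℝ) / N - n - 1 / 2 := by
  have hN : 0 < (N : ℤ) := by nlinarith
  have : NeZero N := ⟨by omega⟩
  have h3 : ((a : ZMod N).val : ℤ) = a - n * N := by
    rw [ZMod.val_intCast, ← Int.sub_mul_emod_self_right a n N]
    exact Int.emod_eq_of_lt (by linarith) (by linarith)
  have h4 : (a : ZMod N) ≠ 0 := by
    intro h
    rw [h, ZMod.val_zero] at h3
    push_cast at h3
    linarith
  have h5 : (((a : ZMod N).val : ℤ) : ℝ) = a - n * N := by rw [h3]; push_cast; ring
  have hN' : (N : ℝ) ≠ 0 := by exact_mod_cast hN.ne'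
  rw [zmodSawtooth, if_neg h4, ← Int.cast_natCast, h5]
  field_simp

lemma zmodSawtooth_neg {N : ℕ} [NeZero N] (j : ZMod N) :
    zmodSawtooth N (-j) = -zmodSawtooth N j := by
  unfold zmodSawtooth
  by_cases h : j = 0
  · simp [h]
  · have : NeZero j := ⟨h⟩
    have hN : (N : ℝ) ≠ 0 := NeZero.ne _
    rw [if_neg h, if_neg (neg_ne_zero.mpr h), ZMod.val_neg_of_ne_zero, Nat.cast_sub j.val_le]
    field_simp
    ring

lemma roundOff_intCast_div {N : ℕ} [NeZero N] {a : ℤ} (ha : ¬IsHalfInt (a / N)) :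
    roundOff (a / N) = zmodSawtooth N (2 * a) - zmodSawtooth N a := by
  have hN : (0 : ℝ) < N := by exact_mod_cast NeZero.pos N
  obtain ⟨n, hn⟩ := exists_eq_roundOff_add ((a : ℝ) / N)
  have h1 := roundOff_lt_half ha
  have h2 := neg_half_lt_roundOff ((a : ℝ) / N)
  set r := roundOff (a / N)
  have hcast : (2 * a : ZMod N) = ((2 * a : ℤ) : ZMod N) := by push_cast; ring
  have ha' : (a : ℝ) = (r + n) * N := by rw [← hn]; field_simp
  rw [hcast]
  rcases lt_trichotomy r 0 with h | h | h
  · rw [zmodSawtooth_intCast (a := 2 * a) (n := 2 * n - 1), zmodSawtooth_intCast (n := n - 1)]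
    · push_cast
      rw [mul_div_assoc, hn]
      ring
    all_goals
      rw [← Int.cast_lt (R := ℝ)]
      push_cast
      nlinarith
  · have h3 : a = n * N := by
      rw [h, zero_add] at ha'
      exact_mod_cast ha'
    have h4 : (a : ZMod N) = 0 := by rw [h3]; simp
    simp [h, zmodSawtooth, h4]
  · rw [zmodSawtooth_intCast (a := 2 * a) (n := 2 * n), zmodSawtooth_intCast (n := n)]
    · push_cast
      rw [mul_div_assoc, hn]
      ring
    all_goals
      rw [← Int.cast_lt (R := ℝ)]
      push_cast
      nlinarith

lemma exists_common_denominator {ι : Type*} [Fintype ι] {d : ι → ℝ}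
    (h : ∀ i, ∃ q : ℕ, 0 < q ∧ roundOff (q * d i) = 0) :
    ∃ N : ℕ, 0 < N ∧ ∃ p : ι → ℤ, ∀ i, d i = p i / N := by
  choose q hq hq0 using h
  have hpos : 0 < ∏ i, q i := Finset.prod_pos fun i _ ↦ hq i
  have hmul (i : ι) : ∃ p : ℤ, d i = p / (∏ i, q i : ℕ) := by
    obtain ⟨n, hn⟩ := exists_eq_roundOff_add (q i * d i)
    obtain ⟨r, hr⟩ := Finset.dvd_prod_of_mem q (Finset.mem_univ i)
    refine ⟨r * n, ?_⟩
    have h0 : ((∏ i, q i : ℕ) : ℝ) ≠ 0 := by exact_mod_cast hpos.ne'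
    rw [eq_div_iff h0, hr]
    rw [hq0, zero_add] at hn
    push_cast
    rw [← hn]
    ring
  choose p hp using hmul
  exact ⟨_, hpos, p, hp⟩

lemma exists_two_mul_eq_add_intCast {ι : Type*} [Fintype ι] {d : ι → ℝ}
    (hd : ∀ m : ℕ, ∑ i, roundOff (m * d i) = 0)
    (hrat : ∀ i, ∃ q : ℕ, 0 < q ∧ roundOff (q * d i) = 0)
    (hadd : ∀ i j, ∀ n : ℤ, d i + d j ≠ n) (j : ι) : ∃ i, ∃ n : ℤ, 2 * d i = d j + n := by
  classical
  obtain ⟨N, hN, p, hp⟩ := exists_common_denominator hrat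
  have : NeZero N := ⟨hN.ne'⟩
  have hN0 : (N : ℝ) ≠ 0 := by exact_mod_cast hN.ne'
  let b (A : ZMod N) : ℂ := ∑ i, ((if A = 2 * p i then 1 else 0) - if A = p i then 1 else 0)
  have hb (F : ZMod N → ℂ) : ∑ A, b A * F A = ∑ i, (F (2 * p i) - F (p i)) := by
    simp only [b, Finset.sum_mul]
    rw [Finset.sum_comm]
    simp [sub_mul]
  have hsaw (m : ZMod N) : ∑ A, b A * zmodSawtooth N (m * A) = 0 := by
    rw [hb fun A ↦ (zmodSawtooth N (m * A) : ℂ)]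
    have h1 (i : ι) : roundOff (m.val * d i) =
        zmodSawtooth N (m * (2 * p i)) - zmodSawtooth N (m * p i) := by
      have h2 : (m.val : ℝ) * d i = ((m.val * p i : ℤ) : ℝ) / N := by
        rw [hp]; push_cast; ring
      have h3 := not_isHalfInt_of_sum_roundOff_eq_zero hd m.val i
      rw [h2] at h3 ⊢
      rw [roundOff_intCast_div h3]
      push_cast
      rw [ZMod.natCast_zmod_val]
      congr 2
      ring
    have h4 := hd m.val
    simp only [h1] at h4
    exact_mod_cast h4
  have hc := eq_zero_of_sum_mul_zmodSawtooth (fun A ↦ b A - b (-A)) (fun A ↦ by simp) fun m ↦ by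
    simp only [sub_mul, Finset.sum_sub_distrib, hsaw]
    rw [← Equiv.sum_comp (Equiv.neg (ZMod N))]
    simpa [zmodSawtooth_neg] using hsaw m
  have hcj := congrFun hc (p j)
  by_contra! hcon
  have hdiv {a a' : ℤ} (h : (a : ZMod N) = a') : ∃ n : ℤ, (a : ℝ) / N = a' / N + n := by
    rw [ZMod.intCast_eq_intCast_iff_dvd_sub] at h
    obtain ⟨n, hn⟩ := h
    refine ⟨-n, ?_⟩
    have : (a' : ℝ) - a = N * n := by exact_mod_cast hn
    push_cast
    field_simp
    linarith
  have h1 (i : ι) : (p j : ZMod N) ≠ 2 * p i := by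
    intro h
    obtain ⟨n, hn⟩ := hdiv (a := p j) (a' := 2 * p i) (by push_cast; exact h)
    refine hcon i (-n) ?_
    rw [hp, hp, hn]
    push_cast
    ring
  have h2 (i : ι) : -(p j : ZMod N) ≠ p i := by
    intro h
    obtain ⟨n, hn⟩ := hdiv (a := -p j) (a' := p i) (by push_cast; exact h)
    refine hadd i j (-n) ?_
    rw [hp, hp]
    push_cast at hn ⊢
    rw [neg_div] at hn
    linarith
  simp only [b, h1, h2, if_false, zero_sub, sub_zero, Finset.sum_neg_distrib, Pi.zero_apply,
    Finset.sum_boole] at hcj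
  have h3 : ((Finset.univ.filter fun i ↦ (p j : ZMod N) = p i).card +
      (Finset.univ.filter fun i ↦ -(p j : ZMod N) = 2 * p i).card : ℂ) = 0 := by
    linear_combination -hcj
  have h4 : (Finset.univ.filter fun i ↦ (p j : ZMod N) = p i).card +
      (Finset.univ.filter fun i ↦ -(p j : ZMod N) = 2 * p i).card = 0 := by exact_mod_cast h3
  have h5 : 0 < (Finset.univ.filter fun i ↦ (p j : ZMod N) = p i).card :=
    Finset.card_pos.mpr ⟨j, by simp⟩
  omega

lemma sum_ceil_of_partition {ι : Type*} [Fintype ι] {α : ι → ℝ} (hpos : ∀ i, 0 < α i)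
    (hpart : ∀ m : ℕ, ∃! p : ι × ℕ, (m : ℤ) = ⌊α p.1 * p.2 + α p.1 / 2⌋) (M : ℕ) :
    ∑ i, ⌈M * (α i)⁻¹ - 1 / 2⌉ = M := by
  classical
  have hiff (i : ι) (n : ℕ) :
      n < ⌈M * (α i)⁻¹ - 1 / 2⌉₊ ↔ ⌊α i * n + α i / 2⌋ < (M : ℤ) := by
    rw [Nat.lt_ceil, Int.floor_lt, lt_sub_iff_add_lt, ← div_eq_mul_inv, lt_div_iff₀ (hpos i)]
    push_cast
    ring_nf
  have hnonneg (i : ι) (n : ℕ) : 0 ≤ ⌊α i * n + α i / 2⌋ := by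
    have := hpos i
    exact Int.floor_nonneg.mpr (by positivity)
  have hcard : (Finset.univ.sigma fun i ↦ Finset.range ⌈M * (α i)⁻¹ - 1 / 2⌉₊).card =
      (Finset.range M).card := by
    refine Finset.card_bij (fun p _ ↦ ⌊α p.1 * p.2 + α p.1 / 2⌋.toNat) ?_ ?_ ?_
    · rintro ⟨i, n⟩ h
      simp only [Finset.mem_sigma, Finset.mem_univ, true_and, Finset.mem_range, hiff] at h ⊢
      have := hnonneg i n
      omega
    · rintro ⟨i, n⟩ - ⟨i', n'⟩ - h
      have h1 := hnonneg i n
      have h2 := hnonneg i' n'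
      dsimp only at h
      have := (hpart ⌊α i * n + α i / 2⌋.toNat).unique (y₁ := (i, n)) (y₂ := (i', n'))
        (by dsimp only; omega) (by dsimp only; omega)
      simp only [Prod.mk.injEq] at this
      obtain ⟨rfl, rfl⟩ := this
      rfl
    · intro m hm
      obtain ⟨⟨i, n⟩, h, -⟩ := hpart m
      dsimp only at h
      refine ⟨⟨i, n⟩, ?_, by dsimp only; omega⟩
      simp only [Finset.mem_sigma, Finset.mem_univ, true_and, Finset.mem_range, hiff] at hm ⊢
      omega
  rw [Finset.card_sigma] at hcard
  simp only [Finset.card_range] at hcard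
  refine Eq.trans ?_ (congrArg Nat.cast hcard)
  rw [Nat.cast_sum]
  refine Finset.sum_congr rfl fun i _ ↦ ?_
  have := inv_pos.mpr (hpos i)
  have : 0 ≤ M * (α i)⁻¹ := by positivity
  have hlt : -1 < M * (α i)⁻¹ - 1 / 2 := by linarith
  exact (Int.natCast_ceil_eq_ceil_of_neg_one_lt hlt).symm

lemma sum_eq_one_of_sum_ceil {ι : Type*} [Fintype ι] {d : ι → ℝ}
    (h : ∀ M : ℕ, ∑ i, ⌈M * d i - 1 / 2⌉ = M) : ∑ i, d i = 1 := by
  have hM (M : ℕ) : M * (∑ i, d i - 1) = ∑ i, roundOff (M * d i) := by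
    simp only [roundOff, Finset.sum_sub_distrib, ← Finset.mul_sum]
    rw [← Int.cast_sum, h M]
    push_cast
    ring
  have hbound (M : ℕ) : M * |∑ i, d i - 1| ≤ Fintype.card ι := by
    have h1 : |∑ i, roundOff (M * d i)| ≤ ∑ i : ι, (1 : ℝ) := by
      refine (Finset.abs_sum_le_sum_abs _ _).trans (Finset.sum_le_sum fun i _ ↦ ?_)
      rw [abs_le]
      constructor <;> linarith [neg_half_lt_roundOff (M * d i), roundOff_le_half (M * d i)]
    rw [← hM, abs_mul, Nat.abs_cast] at h1
    simpa using h1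
  by_contra hne
  have hpos : 0 < |∑ i, d i - 1| := abs_pos.mpr (sub_ne_zero.mpr hne)
  obtain ⟨M, hM⟩ := exists_nat_gt (Fintype.card ι / |∑ i, d i - 1|)
  rw [div_lt_iff₀ hpos] at hM
  linarith [hbound M]

lemma sum_roundOff_of_sum_ceil {ι : Type*} [Fintype ι] {d : ι → ℝ}
    (h : ∀ M : ℕ, ∑ i, ⌈M * d i - 1 / 2⌉ = M) (m : ℕ) : ∑ i, roundOff (m * d i) = 0 := by
  simp only [roundOff, Finset.sum_sub_distrib, ← Finset.mul_sum]
  rw [← Int.cast_sum, h m, sum_eq_one_of_sum_ceil h]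
  simp

lemma eq_two_mul_of_doubling {k : ℕ} {d : Fin k → ℝ} (hanti : StrictAnti d) (hpos : ∀ i, 0 < d i)
    (hlt : ∀ i, d i < 1) (hhalf : ∀ i : Fin k, 0 < (i : ℕ) → d i < 1 / 2)
    (h : ∀ j, ∃ i, ∃ n : ℤ, 2 * d i = d j + n) (i j : Fin k) (hij : (j : ℕ) + 1 = i) :
    d j = 2 * d i := by
  choose f n hf using h
  have hinj : Function.Injective f := by
    intro a b hab
    have h1 := hf a
    have h2 := hf b
    rw [hab] at h1
    have h3 : d a - d b = (n b - n a : ℤ) := by push_cast; linarith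
    have h4 : n b - n a = 0 := by
      have h5 : (-1 : ℝ) < (n b - n a : ℤ) := by linarith [hpos a, hlt b]
      have h6 : ((n b - n a : ℤ) : ℝ) < 1 := by linarith [hpos b, hlt a]
      have h7 : -1 < n b - n a := by exact_mod_cast h5
      have h8 : n b - n a < 1 := by exact_mod_cast h6
      omega
    refine hanti.injective ?_
    rw [h4] at h3
    push_cast at h3
    linarith
  let e := Equiv.ofBijective f (Finite.injective_iff_bijective.mp hinj)
  have he (i : Fin k) (hi : 0 < (i : ℕ)) : d (e.symm i) = 2 * d i := by
    have h1 := hf (e.symm i)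
    have h2 : f (e.symm i) = i := e.apply_symm_apply i
    rw [h2] at h1
    have h3 : n (e.symm i) = 0 := by
      have h5 : (-1 : ℝ) < n (e.symm i) := by linarith [hpos i, hlt (e.symm i)]
      have h6 : (n (e.symm i) : ℝ) < 1 := by linarith [hpos (e.symm i), hhalf i hi]
      have h7 : -1 < n (e.symm i) := by exact_mod_cast h5
      have h8 : n (e.symm i) < 1 := by exact_mod_cast h6
      omega
    rw [h3] at h1
    push_cast at h1
    linarith
  have hpred : ∀ m : ℕ, ∀ i : Fin k, (i : ℕ) = m → 0 < m → (e.symm i : ℕ) + 1 = m := by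
    intro m
    induction m using Nat.strong_induction_on with
    | _ m ih =>
      rintro i rfl hi
      have h1 : e.symm i < i := by
        rw [← hanti.lt_iff_gt, he i hi]
        linarith [hpos i]
      by_contra hne
      have h2 : (e.symm i : ℕ) + 1 < i := by
        have : (e.symm i : ℕ) < i := h1
        omega
      have h3 := ih _ h2 ⟨(e.symm i : ℕ) + 1, h2.trans i.isLt⟩ rfl (by omega)
      have h4 : e.symm ⟨(e.symm i : ℕ) + 1, h2.trans i.isLt⟩ = e.symm i := Fin.ext (by omega)
      have h5 := congrArg Fin.val (e.symm.injective h4)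
      dsimp only at h5
      omega
  have h1 := hpred i i rfl (by omega)
  have h2 : e.symm i = j := Fin.ext (by omega)
  rw [← h2]
  exact he i (by omega)

lemma eq_of_geometric {k : ℕ} {d : Fin k → ℝ} (hpos : ∀ i, 0 < d i) (hsum : ∑ i, d i = 1)
    (h : ∀ i j : Fin k, (j : ℕ) + 1 = i → d j = 2 * d i) (i : Fin k) :
    (d i)⁻¹ = ((2 : ℝ) ^ k - 1) / 2 ^ (k - 1 - (i : ℕ)) := by
  have hk : 0 < k := i.pos
  have hd : ∀ m : ℕ, ∀ hm : m < k, d ⟨m, hm⟩ = d ⟨0, hk⟩ * (1 / 2) ^ m := by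
    intro m
    induction m with
    | zero => simp
    | succ m ih =>
      intro hm
      have h1 := ih (by omega)
      have h2 := h ⟨m + 1, hm⟩ ⟨m, by omega⟩ rfl
      rw [pow_succ]
      linarith
  have hgeom : d ⟨0, hk⟩ * ∑ m ∈ Finset.range k, (1 / 2 : ℝ) ^ m = 1 := by
    rw [Finset.mul_sum, ← Fin.sum_univ_eq_sum_range (fun m ↦ d ⟨0, hk⟩ * (1 / 2) ^ m)]
    exact (Finset.sum_congr rfl fun (j : Fin k) _ ↦ (hd j j.isLt).symm).trans hsum
  obtain ⟨l, hl⟩ : ∃ l, k = i + 1 + l := ⟨k - (i + 1), by omega⟩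
  rw [geom_sum_eq (by norm_num)] at hgeom
  have h1 := hd i i.isLt
  have h2 := (hpos ⟨0, hk⟩).ne'
  rw [Fin.eta] at h1
  have h3 : k - 1 - (i : ℕ) = l := by omega
  have h4 : (2 : ℝ) ^ k = 2 ^ (i : ℕ) * 2 * 2 ^ l := by
    rw [← pow_succ, ← pow_add, ← hl]
  rw [one_div_pow, h4] at hgeom
  rw [h1, h3, h4, one_div_pow]
  field_simp at hgeom ⊢
  linarith

end BeattyPartition

/-- Fraenkel's conjecture in the special case `β i = α i / 2`: if the Beatty sequences
`⌊α i * n + α i / 2⌋` partition ℕ, then `α i = (2^k - 1)/2^(k-i)`. -/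
theorem stmt_3 (k : ℕ) (hk : 3 ≤ k) (α : Fin k → ℝ) (hpos : ∀ i, 0 < α i)
    (hmono : StrictMono α)
    (hpart : ∀ m : ℕ, ∃! p : Fin k × ℕ, (m : ℤ) = ⌊α p.1 * p.2 + α p.1 / 2⌋) :
    ∀ i : Fin k, α i = ((2:ℝ)^k - 1) / (2:ℝ)^(k-1-(i:ℕ)) := by
  have hceil := sum_ceil_of_partition hpos hpart
  set d : Fin k → ℝ := fun i ↦ (α i)⁻¹ with hd
  have hdpos (i : Fin k) : 0 < d i := inv_pos.mpr (hpos i)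
  have hanti : StrictAnti d := fun i j hij ↦ inv_strictAnti₀ (hpos i) (hmono hij)
  have hsum : ∑ i, d i = 1 := sum_eq_one_of_sum_ceil hceil
  have hround := sum_roundOff_of_sum_ceil (d := d) hceil
  have hpair (i j : Fin k) (hij : i ≠ j) : d i + d j < 1 := by
    obtain ⟨l, hl⟩ : ∃ l, l ∉ ({i, j} : Finset (Fin k)) := by
      by_contra! hcon
      have h1 : (Finset.univ : Finset (Fin k)).card ≤ ({i, j} : Finset (Fin k)).card :=
        Finset.card_le_card fun l _ ↦ hcon l
      have h2 := Finset.card_le_two (a := i) (b := j)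
      rw [Finset.card_univ, Fintype.card_fin] at h1
      omega
    rw [← hsum, ← Finset.sum_pair hij]
    exact Finset.sum_lt_sum_of_subset (Finset.subset_univ _) (Finset.mem_univ l) hl (hdpos l)
      fun m _ _ ↦ (hdpos m).le
  have hlt (i : Fin k) : d i < 1 := by
    have : Nontrivial (Fin k) := Fin.nontrivial_iff_two_le.mpr (by omega)
    obtain ⟨j, hj⟩ := exists_ne i
    linarith [hpair i j hj.symm, hdpos j]
  have hhalf (i : Fin k) (hi : 0 < (i : ℕ)) : d i < 1 / 2 := by
    have h1 : (⟨0, by omega⟩ : Fin k) < i := hi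
    linarith [hanti h1, hpair _ _ h1.ne]
  have hadd (i j : Fin k) (n : ℤ) : d i + d j ≠ n := by
    intro h
    have h1 : (0 : ℝ) < n := by linarith [hdpos i, hdpos j]
    have h2 : (n : ℝ) < 2 := by linarith [hlt i, hlt j]
    have h3 : 0 < n := by exact_mod_cast h1
    have h4 : n < 2 := by exact_mod_cast h2
    obtain rfl : n = 1 := by omega
    by_cases hij : i = j
    · subst hij
      refine not_isHalfInt_of_sum_roundOff_eq_zero hround 1 i ⟨0, ?_⟩
      push_cast at h ⊢
      linarith
    · have := hpair i j hij
      push_cast at h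
      linarith
  have hsub (i j : Fin k) (hij : i ≠ j) (n : ℤ) : d i - d j ≠ n := by
    intro h
    have h1 : (-1 : ℝ) < n := by linarith [hdpos i, hlt j]
    have h2 : (n : ℝ) < 1 := by linarith [hlt i, hdpos j]
    have h3 : -1 < n := by exact_mod_cast h1
    have h4 : n < 1 := by exact_mod_cast h2
    obtain rfl : n = 0 := by omega
    push_cast at h
    exact hij (hanti.injective (by linarith))
  have hdouble := eq_two_mul_of_doubling hanti hdpos hlt hhalf
    (exists_two_mul_eq_add_intCast hround (exists_roundOff_mul_eq_zero hround hsub hadd) hadd)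
  intro i
  rw [← eq_of_geometric hdpos hsum hdouble i, hd, inv_inv]
end

section
/- Let k ≥ 3 and let α_1 < … < α_k be positive reals with β_i = α_i/2, and suppose the Beatty sequences {⌊α_i n + α_i/2⌋}_{n=0}^∞ partition ℕ. Then each α_i is rational. -/
open Set in
/-- The natural multiples of an irrational number, from any index on, are dense modulo one. -/
theorem Irrational.exists_nat_mul_sub_int_mem_Ioo {x : ℝ} (hx : Irrational x) {u v : ℝ}
    (huv : u < v) (N : ℕ) : ∃ n : ℕ, N ≤ n ∧ ∃ l : ℤ, n * x - l ∈ Ioo u v := by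
  have hd : DenseRange (fun n : ℕ => n • (x : AddCircle (1 : ℝ))) :=
    denseRange_zsmul_iff_nsmul.1 (AddCircle.denseRange_zsmul_coe_iff.2 (by simpa using hx))
  have ho : IsOpen ((fun y : ℝ => (y : AddCircle (1 : ℝ))) '' Ioo (u - N * x) (v - N * x)) :=
    QuotientAddGroup.isOpenMap_coe _ isOpen_Ioo
  obtain ⟨n, y, hy, hyn⟩ := hd.exists_mem_open ho
    ((nonempty_Ioo.2 (sub_lt_sub_right huv _)).image _)
  have h0 : ((y - n * x : ℝ) : AddCircle (1 : ℝ)) = 0 := by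
    have : (y : AddCircle (1 : ℝ)) = n • (x : AddCircle (1 : ℝ)) := hyn
    rw [AddCircle.coe_sub, this, ← nsmul_eq_mul, AddCircle.coe_nsmul, sub_self]
  obtain ⟨l, hl⟩ := (AddCircle.coe_eq_zero_iff (1 : ℝ)).1 h0
  rw [zsmul_eq_mul, mul_one] at hl
  refine ⟨N + n, Nat.le_add_right _ _, -l, ?_⟩
  have h : ((N + n : ℕ) : ℝ) * x - ((-l : ℤ) : ℝ) = y + N * x := by
    push_cast
    linarith
  rw [h]
  constructor <;> linarith [hy.1, hy.2]

/-- The sequences `⌊a * n + a / 2⌋` and `⌊b * n + b / 2⌋` have no common value. -/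
def DisjointBeatty (a b : ℝ) : Prop :=
  ∀ n m : ℕ, ⌊a * n + a / 2⌋ ≠ ⌊b * m + b / 2⌋

theorem DisjointBeatty.irrational {a b : ℝ} (ha : 0 < a) (hb : 0 < b) (h : DisjointBeatty a b)
    (hirr : Irrational a) : Irrational b := by
  rintro ⟨q, rfl⟩
  have hq : 0 < q := by exact_mod_cast hb
  have hp : 0 < q.num := Rat.num_pos.2 hq
  have hpR : (0 : ℝ) < q.num := by exact_mod_cast hp
  have hqd : (q : ℝ) * q.den = q.num := by exact_mod_cast Rat.mul_den_eq_num q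
  set c : ℤ := ⌊(q : ℝ) / 2⌋ with hc
  obtain ⟨N, hN⟩ := exists_nat_gt ((c + 1) / a)
  rw [div_lt_iff₀ ha] at hN
  obtain ⟨n, hn, l, hl₁, hl₂⟩ := (hirr.div_intCast hp.ne').exists_nat_mul_sub_int_mem_Ioo
    (u := (c - a / 2) / q.num) (v := (c + 1 - a / 2) / q.num) (by gcongr; linarith) N
  have hmul : (n * (a / q.num) - l) * q.num = n * a - l * q.num := by field_simp
  rw [div_lt_iff₀ hpR, hmul] at hl₁
  rw [lt_div_iff₀ hpR, hmul] at hl₂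
  have hnN : (N : ℝ) * a ≤ n * a := by gcongr
  have hl0 : 0 < l := by
    have : (0 : ℝ) < l * q.num := by linarith
    exact_mod_cast pos_of_mul_pos_left this hpR.le
  lift l to ℕ using hl0.le
  refine h n (l * q.den) ?_
  have hright : ⌊(q : ℝ) * (l * q.den : ℕ) + q / 2⌋ = l * q.num + c := by
    have : (q : ℝ) * (l * q.den : ℕ) + q / 2 = ((l * q.num : ℤ) : ℝ) + q / 2 := by
      push_cast
      linear_combination (l : ℝ) * hqd
    rw [this, Int.floor_intCast_add]
  rw [hright, Int.floor_eq_iff]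
  push_cast at hl₁ hl₂ ⊢
  constructor <;> linarith

/-- An integer missed by `⌊a * n + a / 2⌋` is almost a term of the complementary sequence, whose
slope `a'` satisfies `1 / a + 1 / a' = 1`. -/
theorem exists_half_integer_of_forall_floor_ne {a : ℝ} (ha : 0 < a) {m : ℤ} (hm : 0 ≤ m)
    (h : ∀ n : ℕ, ⌊a * n + a / 2⌋ ≠ m) :
    ∃ l : ℤ, m * (1 - 1 / a) < l + 1 / 2 ∧ (l + 1 / 2 : ℝ) ≤ (m + 1) * (1 - 1 / a) := by
  have hmR : (0 : ℝ) ≤ m := by exact_mod_cast hm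
  have h₁ := Int.le_ceil ((m : ℝ) / a - 1 / 2)
  have h₂ := Int.ceil_lt_add_one ((m : ℝ) / a - 1 / 2)
  set N : ℤ := ⌈(m : ℝ) / a - 1 / 2⌉ with hN
  have hN0 : 0 ≤ N := by
    have : (0 : ℝ) ≤ m / a := by positivity
    have : (-1 : ℝ) < N := by linarith
    have : -1 < N := by exact_mod_cast this
    omega
  have h₃ : (m : ℝ) ≤ a * N + a / 2 := by
    have : (m : ℝ) / a ≤ N + 1 / 2 := by linarith
    rw [div_le_iff₀ ha] at this
    linarith
  have h₄ : (m : ℝ) + 1 ≤ a * N + a / 2 := by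
    by_contra! hlt
    refine h N.toNat (Int.floor_eq_iff.2 ?_)
    have : ((N.toNat : ℕ) : ℝ) = N := by exact_mod_cast Int.toNat_of_nonneg hN0
    rw [this]
    exact ⟨h₃, hlt⟩
  have h₅ : ((m : ℝ) + 1) / a ≤ N + 1 / 2 := by
    rw [div_le_iff₀ ha]
    linarith
  refine ⟨m - N, ?_, ?_⟩ <;> rw [mul_sub, mul_one_div] <;> push_cast <;> linarith

/-- If `a < 2`, an irrational `b` whose sequence is disjoint from that of `a` is an odd multiple of
the slope complementary to `a`. -/
theorem DisjointBeatty.exists_mul_eq_odd {a b : ℝ} (ha : 0 < a) (ha2 : a < 2) (hb : 0 < b)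
    (h : DisjointBeatty a b) (hirr : Irrational b) :
    0 < 1 - 1 / a ∧ ∃ L : ℕ, b * (1 - 1 / a) = 2 * L + 1 := by
  have hgap : ∀ n : ℕ, ∃ l : ℤ,
      ⌊b * n + b / 2⌋ * (1 - 1 / a) < l + 1 / 2 ∧
      (l + 1 / 2 : ℝ) ≤ (⌊b * n + b / 2⌋ + 1) * (1 - 1 / a) := fun n =>
    exists_half_integer_of_forall_floor_ne ha (Int.floor_nonneg.2 (by positivity)) (h · n)
  have hhalf : 1 - 1 / a < 1 / 2 := by
    have := one_div_lt_one_div_of_lt ha ha2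
    linarith
  set s : ℝ := 1 - 1 / a with hs
  have hs0 : 0 < s := by
    obtain ⟨l, h₁, h₂⟩ := hgap 0
    linarith
  have hdist : ∀ n : ℕ, ∃ l : ℤ,
      ⌊b * n + b / 2⌋ * s < l + 1 / 2 ∧ (l + 1 / 2 : ℝ) ≤ (⌊b * n + b / 2⌋ + 1) * s ∧
      |(l + 1 / 2 : ℝ) - (n * (b * s) + b * s / 2)| ≤ s := fun n => by
    obtain ⟨l, h₁, h₂⟩ := hgap n
    refine ⟨l, h₁, h₂, abs_le.2 ?_⟩
    have h₃ := mul_le_mul_of_nonneg_right (Int.floor_le (b * n + b / 2)) hs0.le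
    have h₄ := mul_le_mul_of_nonneg_right (Int.lt_floor_add_one (b * n + b / 2)).le hs0.le
    constructor <;> linarith
  refine ⟨hs0, ?_⟩
  by_cases hρ : Irrational (b * s)
  · obtain ⟨n, -, l', h₁, h₂⟩ := hρ.exists_nat_mul_sub_int_mem_Ioo
      (u := -(b * s / 2) - (1 / 2 - s)) (v := -(b * s / 2) + (1 / 2 - s)) (by linarith) 0
    obtain ⟨l, -, -, h₃⟩ := hdist n
    rw [abs_le] at h₃
    have h₄ : (l : ℝ) < l' := by linarith
    have h₅ : (l' : ℝ) < l + 1 := by linarith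
    norm_cast at h₄ h₅
    omega
  · obtain ⟨q, hq⟩ : ∃ q : ℚ, (q : ℝ) = b * s := by simpa [Irrational] using hρ
    have hqd : b * s * q.den = q.num := by
      rw [← hq]
      exact_mod_cast Rat.mul_den_eq_num q
    obtain ⟨L, -, -, hL⟩ := hdist 0
    rw [Nat.cast_zero, zero_mul, zero_add, abs_le] at hL
    have hshift : ∀ t : ℕ,
        ⌊b * (q.den * t : ℕ) + b / 2⌋ * s < q.num * t + L + 1 / 2 ∧
        (q.num * t + L + 1 / 2 : ℝ) ≤ (⌊b * (q.den * t : ℕ) + b / 2⌋ + 1) * s := fun t => by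
      obtain ⟨l, h₁, h₂, h₃⟩ := hdist (q.den * t)
      have h₄ : ((q.den * t : ℕ) : ℝ) * (b * s) = q.num * t := by
        push_cast
        linear_combination (t : ℝ) * hqd
      rw [h₄, abs_le] at h₃
      have h₅ : (l : ℝ) < ((q.num * t + L + 1 : ℤ) : ℝ) := by push_cast; linarith
      have h₆ : ((q.num * t + L : ℤ) : ℝ) < ((l + 1 : ℤ) : ℝ) := by push_cast; linarith
      norm_cast at h₅ h₆
      have h₇ : (l : ℝ) = q.num * t + L := by
        have : l = q.num * t + L := by omega
        rw [this]
        push_cast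
        rfl
      rw [h₇] at h₁ h₂
      exact ⟨h₁, h₂⟩
    have hfloor : ∀ u v : ℝ, 0 ≤ u → u < v → v ≤ 1 → ∃ (t : ℕ) (m : ℤ),
        u < b * (q.den * t : ℕ) + b / 2 - m ∧ b * (q.den * t : ℕ) + b / 2 - m < v ∧
        m * s < q.num * t + L + 1 / 2 ∧ (q.num * t + L + 1 / 2 : ℝ) ≤ (m + 1) * s := by
      intro u v hu huv hv
      obtain ⟨t, -, m, h₁, h₂⟩ := (hirr.mul_natCast q.den_ne_zero).exists_nat_mul_sub_int_mem_Ioo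
        (sub_lt_sub_right huv (b / 2)) 0
      have h₃ : b * (q.den * t : ℕ) = t * (b * q.den) := by push_cast; ring
      have h₄ : ⌊b * (q.den * t : ℕ) + b / 2⌋ = m := by
        rw [Int.floor_eq_iff, h₃]
        constructor <;> linarith
      have h₅ := hshift t
      rw [h₄] at h₅
      refine ⟨t, m, ?_, ?_, h₅⟩ <;> rw [h₃] <;> linarith
    have hval : ∀ (t : ℕ) (m : ℤ), (b * (q.den * t : ℕ) + b / 2 - m) * s =
        q.num * t + b * s / 2 - m * s := fun t m => by
      push_cast
      linear_combination (t : ℝ) * hqd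
    set δ : ℝ := L + 1 / 2 - b * s / 2 with hδ
    have hδ0 : δ = 0 := by
      rcases lt_trichotomy δ 0 with hneg | hzero | hpos
      · have hv : 0 < -δ / s := div_pos (neg_pos.2 hneg) hs0
        obtain ⟨t, m, -, h₂, h₃, -⟩ := hfloor 0 (-δ / s) le_rfl hv
          ((div_le_one hs0).2 (by linarith))
        rw [lt_div_iff₀ hs0, hval] at h₂
        linarith
      · exact hzero
      · have hv : 0 < δ / s := div_pos hpos hs0
        have hv1 : δ / s ≤ 1 := (div_le_one hs0).2 (by linarith)
        obtain ⟨t, m, h₁, -, -, h₄⟩ := hfloor (1 - δ / s) 1 (by linarith) (by linarith) le_rfl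
        have h₅ := mul_lt_mul_of_pos_right h₁ hs0
        rw [hval, sub_mul, div_mul_cancel₀ _ hs0.ne'] at h₅
        linarith
    have hbs : 0 < b * s := by positivity
    have hL0 : 0 ≤ L := by
      have : (-1 : ℝ) < L := by linarith
      have : -1 < L := by exact_mod_cast this
      omega
    lift L to ℕ using hL0
    refine ⟨L, ?_⟩
    push_cast at hδ
    linarith

/-- Graham's result in our special case: if the Beatty sequences `⌊α i * n + α i / 2⌋`
(with `0 < α 0 < ⋯ < α (k-1)`, `k ≥ 3`) partition ℕ, then every `α i` is rational. -/
theorem stmt_5 (k : ℕ) (hk : 3 ≤ k) (α : Fin k → ℝ) (hpos : ∀ i, 0 < α i)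
    (hmono : StrictMono α)
    (hpart : ∀ m : ℕ, ∃! p : Fin k × ℕ, (m : ℤ) = ⌊α p.1 * p.2 + α p.1 / 2⌋) :
    ∀ i : Fin k, ∃ q : ℚ, α i = (q : ℝ) := by
  have hdisj : ∀ i j, i ≠ j → DisjointBeatty (α i) (α j) := by
    intro i j hij n m hnm
    have hfl : 0 ≤ ⌊α i * n + α i / 2⌋ :=
      Int.floor_nonneg.2 (by have := hpos i; positivity)
    have hcast := Int.toNat_of_nonneg hfl
    exact hij (congrArg Prod.fst ((hpart ⌊α i * n + α i / 2⌋.toNat).unique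
      (y₁ := (i, n)) (y₂ := (j, m)) hcast (hcast.trans hnm)))
  by_contra! hcon
  obtain ⟨i, hi⟩ := hcon
  have hi_irr : Irrational (α i) := fun ⟨q, hq⟩ => hi q hq.symm
  have hirr : ∀ j, Irrational (α j) := fun j => by
    rcases eq_or_ne i j with rfl | hij
    · exact hi_irr
    · exact (hdisj i j hij).irrational (hpos i) (hpos j) hi_irr
  obtain ⟨⟨i₀, n₀⟩, h₀, -⟩ := hpart 0
  have ha2 : α i₀ < 2 := by
    have h₁ : α i₀ * n₀ + α i₀ / 2 < 1 := by
      have := Int.lt_floor_add_one (α i₀ * n₀ + α i₀ / 2)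
      simp only at h₀
      rw [← h₀] at this
      simpa using this
    have h₂ : 0 ≤ α i₀ * n₀ := mul_nonneg (hpos i₀).le n₀.cast_nonneg
    linarith
  obtain ⟨j, j', hj, hj', hjj'⟩ : ∃ j j' : Fin k, i₀ ≠ j ∧ i₀ ≠ j' ∧ j ≠ j' := by
    have hcard : 1 < (Finset.univ.erase i₀).card := by
      rw [Finset.card_erase_of_mem (Finset.mem_univ _), Finset.card_univ, Fintype.card_fin]
      omega
    obtain ⟨j, hj, j', hj', hne⟩ := Finset.one_lt_card.1 hcard
    exact ⟨j, j', (Finset.ne_of_mem_erase hj).symm, (Finset.ne_of_mem_erase hj').symm, hne⟩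
  obtain ⟨hs, L, hL⟩ :=
    (hdisj i₀ j hj).exists_mul_eq_odd (hpos i₀) ha2 (hpos j) (hirr j)
  obtain ⟨-, L', hL'⟩ :=
    (hdisj i₀ j' hj').exists_mul_eq_odd (hpos i₀) ha2 (hpos j') (hirr j')
  refine hdisj j j' hjj' L' L (congrArg _ (mul_right_cancel₀ hs.ne' ?_))
  linear_combination (L' + 1 / 2 : ℝ) * hL - (L + 1 / 2 : ℝ) * hL'
end

section
/- If (d_1, …, d_k) with d_1 ≥ … ≥ d_k > 0 and ∑ d_i = 1 is a Ramsey k-tuple (k ≥ 3), then d_i = 2^{k−i}/(2^k − 1) for every i. -/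
section

open Filter Topology HurwitzZeta ZMod

theorem abs_one_div_rpow_sub_le {p a b s : ℝ} (hp : 0 < p) (ha : p ≤ a) (ha' : a ≤ p + 1)
    (hb : p ≤ b) (hb' : b ≤ p + 1) (hs : 1 ≤ s) (hs' : s ≤ 2) :
    |1 / a ^ s - 1 / b ^ s| ≤ 2 / p ^ 2 := by
  have bound {c : ℝ} (hc : p ≤ c) (hc' : c ≤ p + 1) :
      1 / (p + 1) ^ s ≤ 1 / c ^ s ∧ 1 / c ^ s ≤ 1 / p ^ s := by
    have : 0 < c := hp.trans_le hc
    constructor <;> gcongr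
  have key : 1 / p ^ s - 1 / (p + 1) ^ s ≤ 2 / p ^ 2 := by
    have h0 : 0 < 1 / (p + 1) ^ s := by positivity
    rcases le_total p 1 with h1 | h1
    · have : p ^ (2 : ℝ) ≤ p ^ s := Real.rpow_le_rpow_of_exponent_ge hp h1 hs'
      rw [Real.rpow_two] at this
      have : 1 / p ^ s ≤ 1 / p ^ 2 := by gcongr
      have : 1 / p ^ 2 ≤ 2 / p ^ 2 := by gcongr; norm_num
      linarith
    · have hr : 1 / (p + 1) ^ s = 1 / p ^ s * (p / (p + 1)) ^ s := by
        rw [Real.div_rpow hp.le (by positivity)]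
        field_simp
      have h2 : (p / (p + 1)) ^ (2 : ℝ) ≤ (p / (p + 1)) ^ s :=
        Real.rpow_le_rpow_of_exponent_ge (by positivity)
          (by rw [div_le_one (by positivity)]; linarith) hs'
      rw [Real.rpow_two] at h2
      have h3 : 1 / p ^ s ≤ 1 / p := by
        gcongr
        simpa using Real.rpow_le_rpow_of_exponent_le h1 hs
      have h4 : 1 - (p / (p + 1)) ^ 2 ≤ 2 / p := by
        have : 1 - (p / (p + 1)) ^ 2 = (2 * p + 1) / (p + 1) ^ 2 := by field_simp; ring
        rw [this, div_le_div_iff₀ (by positivity) hp]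
        nlinarith
      have h5 : 0 ≤ 1 - (p / (p + 1)) ^ 2 := by
        have : p / (p + 1) ≤ 1 := by rw [div_le_one (by positivity)]; linarith
        have : 0 ≤ p / (p + 1) := by positivity
        nlinarith
      calc 1 / p ^ s - 1 / (p + 1) ^ s = 1 / p ^ s * (1 - (p / (p + 1)) ^ s) := by rw [hr]; ring
        _ ≤ 1 / p ^ s * (1 - (p / (p + 1)) ^ 2) := by gcongr
        _ ≤ 1 / p * (2 / p) := by gcongr
        _ = 2 / p ^ 2 := by ring
  rw [abs_le]
  have := bound ha ha'
  have := bound hb hb'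
  constructor <;> linarith

theorem hasSum_one_div_add_sub {x : ℝ} (hx : x ∈ Set.Ioo (0 : ℝ) 1)
    (hs : Summable fun n : ℕ ↦ (1 / (n + x : ℂ) - 1 / (n + 1 - x))) :
    HasSum (fun n : ℕ ↦ (1 / (n + x : ℂ) - 1 / (n + 1 - x)))
      (Real.pi * Complex.cot (Real.pi * x)) := by
  have hx' : (x : ℂ) ∈ Complex.integerComplement := by
    rintro ⟨n, hn⟩
    have hn : (n : ℝ) = x := by exact_mod_cast hn
    obtain ⟨h1, h2⟩ := hx
    rw [← hn] at h1 h2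
    norm_cast at h1 h2
    omega
  rw [hs.hasSum_iff_tendsto_nat]
  have h1 := (tendsto_logDeriv_euler_cot_sub hx').add_const (1 / (x : ℂ))
  have h2 : Tendsto (fun n : ℕ ↦ 1 / ((n : ℂ) + x)) atTop (𝓝 0) := by
    rw [tendsto_zero_iff_norm_tendsto_zero]
    have : Tendsto (fun n : ℕ ↦ 1 / ((n : ℝ) + x)) atTop (𝓝 0) :=
      tendsto_const_nhds.div_atTop (tendsto_atTop_add_const_right _ _ tendsto_natCast_atTop_atTop)
    refine this.congr fun n ↦ ?_
    have : (0 : ℝ) ≤ n + x := add_nonneg n.cast_nonneg hx.1.le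
    rw [norm_div, norm_one, ← Complex.ofReal_natCast, ← Complex.ofReal_add,
      Complex.norm_of_nonneg this]
  have h3 := h1.sub h2
  simp only [sub_add_cancel, sub_zero] at h3
  refine h3.congr fun n ↦ ?_
  induction n with
  | zero => simp
  | succ n ih =>
    rw [Finset.sum_range_succ, Finset.sum_range_succ, ← ih, cotTerm,
      ← neg_sub ((n : ℂ) + 1) x, div_neg]
    push_cast
    ring

theorem hurwitzZetaOdd_apply_one {x : ℝ} (hx : x ∈ Set.Ioo (0 : ℝ) 1) :
    hurwitzZetaOdd x 1 = Real.pi / 2 * Complex.cot (Real.pi * x) := by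
  obtain ⟨h0, h1⟩ := hx
  set f : ℝ → ℕ → ℂ := fun s n ↦ ((1 / (n + x) ^ s - 1 / (n + 1 - x) ^ s : ℝ) : ℂ) / 2 with hf
  set p := min x (1 - x)
  have hp : 0 < p := lt_min h0 (by linarith)
  have hpx : p ≤ x := min_le_left _ _
  have hpx' : p ≤ 1 - x := min_le_right _ _
  have hpos (n : ℕ) : (0 : ℝ) ≤ n := n.cast_nonneg
  have hbd {s : ℝ} (hs : 1 ≤ s) (hs' : s ≤ 2) (n : ℕ) : ‖f s n‖ ≤ 1 / |n + p| ^ (2 : ℝ) := by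
    have := abs_one_div_rpow_sub_le (p := n + p) (a := n + x) (b := n + 1 - x) (s := s)
      (by linarith [hpos n]) (by linarith) (by linarith) (by linarith) (by linarith) hs hs'
    rw [hf, norm_div, Complex.norm_real, Real.norm_eq_abs, Complex.norm_ofNat,
      abs_of_pos (by linarith [hpos n] : 0 < n + p), Real.rpow_two]
    linarith [show 2 / ((n : ℝ) + p) ^ 2 = 2 * (1 / (n + p) ^ 2) by ring]
  have hsum : Summable fun n : ℕ ↦ 1 / |n + p| ^ (2 : ℝ) :=
    (Real.summable_one_div_nat_add_rpow p 2).mpr one_lt_two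
  have hone : (f 1) = fun n : ℕ ↦ (1 / (n + x : ℂ) - 1 / (n + 1 - x)) / 2 := by
    ext n; simp [hf]
  have hsum1 : Summable (f 1) := .of_norm_bounded hsum (hbd le_rfl one_le_two)
  have hlim : Tendsto (fun s ↦ ∑' n, f s n) (𝓝[>] 1) (𝓝 (∑' n, f 1 n)) := by
    refine tendsto_tsum_of_dominated_convergence hsum (fun n ↦ ?_) ?_
    · have c1 : (n : ℝ) + x ≠ 0 := by linarith [hpos n]
      have c2 : (n : ℝ) + 1 - x ≠ 0 := by linarith [hpos n]
      have : ContinuousAt (fun s ↦ f s n) 1 := by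
        refine (Complex.continuous_ofReal.continuousAt.comp ?_).div_const 2
        refine .sub (.div continuousAt_const (Real.continuousAt_const_rpow c1) ?_)
          (.div continuousAt_const (Real.continuousAt_const_rpow c2) ?_) <;> simpa
      exact this.tendsto.mono_left nhdsWithin_le_nhds
    · filter_upwards [Ioo_mem_nhdsGT (one_lt_two (α := ℝ))] with s hs n using hbd hs.1.le hs.2.le n
  have hev : Tendsto (fun s ↦ ∑' n, f s n) (𝓝[>] 1) (𝓝 (hurwitzZetaOdd x 1)) := by
    have hc : ContinuousAt (fun s : ℝ ↦ hurwitzZetaOdd x s) 1 :=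
      ((differentiable_hurwitzZetaOdd x).continuous.comp Complex.continuous_ofReal).continuousAt
    have := hc.tendsto.mono_left (nhdsWithin_le_nhds (s := Set.Ioi 1))
    rw [Complex.ofReal_one] at this
    refine this.congr' ?_
    filter_upwards [self_mem_nhdsWithin] with s hs
    rw [← (hasSum_nat_hurwitzZetaOdd_of_mem_Icc ⟨h0.le, h1.le⟩ (s := s) hs).tsum_eq]
    refine tsum_congr fun n ↦ ?_
    simp only [hf, Complex.ofReal_sub, Complex.ofReal_div, Complex.ofReal_one]
    rw [Complex.ofReal_cpow (by linarith [hpos n]), Complex.ofReal_cpow (by linarith [hpos n])]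
    push_cast
    rfl
  rw [tendsto_nhds_unique hev hlim, hone]
  rw [hone] at hsum1
  have := hasSum_one_div_add_sub ⟨h0, h1⟩ (by simpa using hsum1.mul_right 2)
  rw [tsum_div_const, this.tsum_eq]
  ring

/-- The sawtooth function: odd, `1`-periodic, and equal to `1 / 2 - x` on `(0, 1)`. -/
noncomputable def sawtooth (x : ℝ) : ℝ := if Int.fract x = 0 then 0 else 1 / 2 - Int.fract x

theorem sawtooth_add_intCast (x : ℝ) (n : ℤ) : sawtooth (x + n) = sawtooth x := by
  simp [sawtooth]

theorem sawtooth_neg (x : ℝ) : sawtooth (-x) = -sawtooth x := by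
  unfold sawtooth
  by_cases h : Int.fract x = 0
  · simp [h]
  · have h' : Int.fract (-x) ≠ 0 := by rwa [Ne, Int.fract_neg_eq_zero]
    rw [if_neg h, if_neg h', Int.fract_neg h]
    ring

theorem sawtooth_sub_sawtooth_two_mul {x t : ℝ} {z : ℤ} (hx : x = t + z) (ht : |t| < 1 / 2) :
    sawtooth x - sawtooth (2 * x) = t := by
  have pos {r : ℝ} (h0 : 0 < r) (h1 : r < 1) : sawtooth r = 1 / 2 - r := by
    have : Int.fract r = r := Int.fract_eq_self.mpr ⟨h0.le, h1⟩
    rw [sawtooth, this, if_neg h0.ne']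
  have h2 : 2 * x = 2 * t + (2 * z : ℤ) := by push_cast; linarith
  rw [h2, sawtooth_add_intCast, hx, sawtooth_add_intCast]
  rw [abs_lt] at ht
  rcases lt_trichotomy t 0 with h | h | h
  · have h1 := pos (r := -t) (by linarith) (by linarith)
    have h2 := pos (r := -(2 * t)) (by linarith) (by linarith)
    rw [sawtooth_neg] at h1 h2
    linarith
  · simp [h, sawtooth]
  · rw [pos h (by linarith), pos (by linarith) (by linarith)]
    ring

theorem sawtooth_intCast_div (M : ℕ) [NeZero M] (a : ℤ) :
    sawtooth (((a : ZMod M).val : ℝ) / M) = sawtooth (a / M) := by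
  have hM : (M : ℝ) ≠ 0 := NeZero.ne _
  have h : (a : ℝ) / M = ((a : ZMod M).val : ℝ) / M + (a / M : ℤ) := by
    have := ZMod.val_intCast (n := M) a
    have h1 : (a : ℝ) = ((a : ZMod M).val : ℝ) + M * (a / M : ℤ) := by
      have h2 := Int.emod_add_mul_ediv a M
      rw [← this] at h2
      exact_mod_cast h2.symm
    field_simp
    linarith
  rw [h, sawtooth_add_intCast]

theorem sub_one_mul_sum_range_mul_pow {R : Type*} [CommRing R] (z : R) (n : ℕ) :
    (z - 1) * ∑ j ∈ Finset.range n, (j : R) * z ^ j =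
      n * z ^ n - z * ∑ j ∈ Finset.range n, z ^ j := by
  induction n with
  | zero => simp
  | succ n ih =>
    rw [Finset.sum_range_succ, Finset.sum_range_succ, mul_add, ih]
    push_cast
    ring

theorem sum_zmod_eq_sum_range (M : ℕ) [NeZero M] (f : ℕ → ℂ) :
    ∑ j : ZMod M, f j.val = ∑ j ∈ Finset.range M, f j := by
  refine Finset.sum_nbij' (fun j ↦ j.val) (fun n ↦ (n : ZMod M)) ?_ ?_ ?_ ?_ ?_
  · simp [ZMod.val_lt]
  · simp
  · simp
  · intro n hn
    exact ZMod.val_cast_of_lt (by simpa using hn)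
  · simp

theorem dft_sawtooth (M : ℕ) [NeZero M] (k : ZMod M) :
    ZMod.dft (fun j : ZMod M ↦ (sawtooth (j.val / M) : ℂ)) k =
      -(Complex.I / Real.pi) * hurwitzZetaOdd (toAddCircle k) 1 := by
  have hM : (M : ℂ) ≠ 0 := NeZero.ne _
  have hodd : (fun j : ZMod M ↦ (sawtooth (j.val / M) : ℂ)).Odd := by
    intro j
    obtain ⟨a, rfl⟩ := ZMod.intCast_surjective j
    beta_reduce
    rw [← Int.cast_neg, sawtooth_intCast_div, sawtooth_intCast_div, Int.cast_neg, neg_div,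
      sawtooth_neg]
    simp
  by_cases hk : k = 0
  · subst hk
    have h0 : hurwitzZetaOdd (0 : UnitAddCircle) 1 = 0 := by
      have := hurwitzZetaOdd_neg 0 1
      rw [neg_zero] at this
      exact self_eq_neg.mp this
    rw [map_zero, h0, mul_zero, dft_apply_zero, hodd.sum_eq_zero]
  set z : ℂ := stdAddChar (-k) with hz
  have hz1 : z ≠ 1 := by
    rw [hz, ← AddChar.map_zero_eq_one (stdAddChar (N := M))]
    exact fun h ↦ hk (by simpa using injective_stdAddChar h)
  have hzM : z ^ M = 1 := by
    rw [hz, ← AddChar.map_nsmul_eq_pow]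
    simp
  have hgeom : ∑ j ∈ Finset.range M, z ^ j = 0 := by
    rw [geom_sum_eq hz1, hzM]; simp
  have hlin : ∑ j ∈ Finset.range M, (j : ℂ) * z ^ j = M / (z - 1) := by
    rw [eq_div_iff (sub_ne_zero.mpr hz1), mul_comm, sub_one_mul_sum_range_mul_pow, hgeom, hzM]
    ring
  have hsum : ZMod.dft (fun j : ZMod M ↦ (sawtooth (j.val / M) : ℂ)) k =
      -(1 / 2 + 1 / (z - 1)) := by
    let F : ℕ → ℂ := fun n ↦ 1 / 2 * z ^ n - (1 / M) * (n * z ^ n) - if n = 0 then 1 / 2 else 0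
    have hterm (j : ZMod M) :
        stdAddChar (-(j * k)) • (sawtooth (j.val / M) : ℂ) = F j.val := by
      have h1 : stdAddChar (-(j * k)) = z ^ j.val := by
        rw [hz, ← AddChar.map_nsmul_eq_pow]
        congr 1
        rw [nsmul_eq_mul, natCast_zmod_val]
        ring
      have hlt : (j.val : ℝ) / M < 1 := by
        rw [div_lt_one (by exact_mod_cast NeZero.pos M)]
        exact_mod_cast j.val_lt
      have hfr : Int.fract ((j.val : ℝ) / M) = j.val / M :=
        Int.fract_eq_self.mpr ⟨by positivity, hlt⟩
      rw [h1, sawtooth, hfr]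
      by_cases hj : j.val = 0
      · simp [F, hj]
      · have : (j.val : ℝ) / M ≠ 0 := div_ne_zero (by exact_mod_cast hj) (NeZero.ne _)
        simp only [F, this, hj, if_false, smul_eq_mul]
        push_cast
        ring
    rw [dft_apply]
    refine (Finset.sum_congr rfl fun j _ ↦ hterm j).trans
      ((sum_zmod_eq_sum_range M F).trans ?_)
    rw [Finset.sum_sub_distrib, Finset.sum_sub_distrib, ← Finset.mul_sum, ← Finset.mul_sum, hgeom,
      hlin, Finset.sum_ite_eq']
    simp [NeZero.pos M]
    field_simp
    ring
  set x : ℝ := k.val / M with hx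
  have hx01 : x ∈ Set.Ioo (0 : ℝ) 1 := by
    have hM0 : (0 : ℝ) < M := by exact_mod_cast NeZero.pos M
    refine ⟨div_pos ?_ hM0, ?_⟩
    · exact_mod_cast Nat.pos_of_ne_zero (by simpa using hk)
    · rw [hx, div_lt_one hM0]
      exact_mod_cast k.val_lt
  have hzx : z = Complex.exp (-(2 * (Complex.I * (Real.pi * x)))) := by
    have : -k = ((-(k.val : ℤ) : ℤ) : ZMod M) := by simp
    rw [hz, this, stdAddChar_coe, hx]
    congr 1
    push_cast
    ring
  rw [hsum, toAddCircle_apply, hurwitzZetaOdd_apply_one hx01, Complex.cot_eq_exp_ratio]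
  have hpi : (Real.pi : ℂ) ≠ 0 := by exact_mod_cast Real.pi_ne_zero
  set w := Complex.exp (2 * Complex.I * (Real.pi * x)) with hw
  have hzw : z = w⁻¹ := by
    rw [hzx, Complex.exp_neg, hw, mul_assoc]
  have hw0 : w ≠ 0 := Complex.exp_ne_zero _
  have hw1 : 1 - w ≠ 0 := by
    intro h
    have : w = 1 := (sub_eq_zero.mp h).symm
    exact hz1 (by rw [hzw, this, inv_one])
  rw [hzw]
  have : w⁻¹ - 1 = (1 - w) / w := by field_simp
  rw [this]
  field_simp
  ring_nf

theorem dft_eq_zero_of_sum_sawtooth_eq_zero {M : ℕ} [NeZero M] {ν : ZMod M → ℂ} (hν : ν.Odd)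
    (hunit : ∀ u : (ZMod M)ˣ, ∑ j, ν j * sawtooth ((u * j : ZMod M).val / M) = 0)
    (hnonunit : ∀ k : ZMod M, ¬ IsUnit k → ZMod.dft ν k = 0) : ZMod.dft ν = 0 := by
  set g := ZMod.dft ν with hg
  set c : ZMod M → ℂ := fun k ↦ hurwitzZetaOdd (toAddCircle k) 1 with hc
  have hgodd : g.Odd := dft_odd_iff.mpr hν
  have hgc (u : (ZMod M)ˣ) : ∑ k, g (u * k) * c k = 0 := by
    set Φ : ZMod M → ℂ := fun j ↦ ν (u⁻¹.val * j) with hΦ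
    set b : ZMod M → ℂ := fun j ↦ (sawtooth (j.val / M) : ℂ) with hb
    have h1 (k : ZMod M) : g (u * k) = ZMod.dft Φ k := by
      rw [hΦ, dft_comp_unitMul, inv_inv]
    have h2 : ∑ k, ZMod.dft Φ k * ZMod.dft b k = ∑ j, b j * ZMod.dft (ZMod.dft Φ) j := by
      simp_rw [dft_apply b, dft_apply (ZMod.dft Φ), smul_eq_mul, Finset.mul_sum]
      rw [Finset.sum_comm]
      refine Finset.sum_congr rfl fun j _ ↦ Finset.sum_congr rfl fun k _ ↦ ?_
      rw [mul_comm j k]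
      ring
    have h3 : ∑ j, b j * ZMod.dft (ZMod.dft Φ) j = 0 := by
      have h4 (j : ZMod M) : b j * ZMod.dft (ZMod.dft Φ) j = -M * (ν (u⁻¹.val * j) * b j) := by
        rw [dft_dft]
        simp only [hΦ, smul_eq_mul, mul_neg, hν (u⁻¹.val * j)]
        ring
      rw [Finset.sum_congr rfl fun j _ ↦ h4 j, ← Finset.mul_sum,
        ← Equiv.sum_comp u.mulLeft]
      simp only [Units.mulLeft_apply, Units.inv_mul_cancel_left]
      rw [hunit u, mul_zero]
    rw [h3] at h2
    have h5 : ∑ k, ZMod.dft Φ k * ZMod.dft b k = -(Complex.I / Real.pi) * ∑ k, g (u * k) * c k := by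
      rw [Finset.mul_sum]
      refine Finset.sum_congr rfl fun k _ ↦ ?_
      rw [h1, hb, dft_sawtooth]
      ring
    rw [h5] at h2
    exact (mul_eq_zero.mp h2).resolve_left (by simp [Complex.I_ne_zero, Real.pi_ne_zero])
  have hA (χ : DirichletCharacter ℂ M) : ∑ u : (ZMod M)ˣ, χ (u⁻¹ : (ZMod M)ˣ) * g u = 0 := by
    rcases χ.even_or_odd with hχ | hχ
    · have h : ∑ u : (ZMod M)ˣ, χ (u⁻¹ : (ZMod M)ˣ) * g u =
          -∑ u : (ZMod M)ˣ, χ (u⁻¹ : (ZMod M)ˣ) * g u := by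
        conv_lhs => rw [← Equiv.sum_comp (Equiv.neg _)]
        rw [← Finset.sum_neg_distrib]
        refine Finset.sum_congr rfl fun u _ ↦ ?_
        rw [Equiv.neg_apply, inv_neg, Units.val_neg, Units.val_neg, hχ.eval_neg, hgodd,
          mul_neg]
      exact self_eq_neg.mp h
    · have hχ1 : χ ≠ 1 := by
        rintro rfl
        have : (1 : DirichletCharacter ℂ M) (-1) = 1 := MulChar.one_apply isUnit_one.neg
        rw [hχ] at this
        norm_num at this
      have hL := DirichletCharacter.LFunction_apply_one_ne_zero hχ1
      have hχodd : (χ : ZMod M → ℂ).Odd := fun x ↦ DirichletCharacter.Odd.eval_neg χ x hχ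
      rw [DirichletCharacter.LFunction, LFunction_def_odd hχodd] at hL
      have hprod : (∑ u : (ZMod M)ˣ, χ (u⁻¹ : (ZMod M)ˣ) * g u) * ∑ k, χ k * c k = 0 := by
        have h1 (k : ZMod M) : (∑ u : (ZMod M)ˣ, χ (u⁻¹ : (ZMod M)ˣ) * g u) * χ k =
            ∑ u : (ZMod M)ˣ, χ (u⁻¹ : (ZMod M)ˣ) * g (u * k) := by
          by_cases hk : IsUnit k
          · obtain ⟨v, rfl⟩ := hk
            rw [Finset.sum_mul, ← Equiv.sum_comp (Equiv.mulRight v)]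
            refine Finset.sum_congr rfl fun u _ ↦ ?_
            rw [Equiv.coe_mulRight, Units.val_mul, mul_right_comm, ← map_mul, ← Units.val_mul]
            simp
          · rw [χ.map_nonunit hk, mul_zero]
            refine (Finset.sum_eq_zero fun u _ ↦ ?_).symm
            rw [hnonunit _ (by simpa using hk), mul_zero]
        rw [Finset.mul_sum]
        simp_rw [← mul_assoc, h1, Finset.sum_mul]
        rw [Finset.sum_comm]
        simp_rw [mul_assoc, ← Finset.mul_sum, hgc, mul_zero, Finset.sum_const_zero]
      exact (mul_eq_zero.mp hprod).resolve_right (right_ne_zero_of_mul hL)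
  ext k
  by_cases hk : IsUnit k
  · obtain ⟨v, rfl⟩ := hk
    have h1 : ∑ χ : DirichletCharacter ℂ M,
        χ v * ∑ u : (ZMod M)ˣ, χ (u⁻¹ : (ZMod M)ˣ) * g u = 0 :=
      Finset.sum_eq_zero fun χ _ ↦ by rw [hA, mul_zero]
    simp_rw [Finset.mul_sum] at h1
    rw [Finset.sum_comm] at h1
    have h2 (u : (ZMod M)ˣ) : ∑ χ : DirichletCharacter ℂ M,
        χ v * (χ (u⁻¹ : (ZMod M)ˣ) * g u) = (if u = v then (M.totient : ℂ) else 0) * g u := by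
      have := DirichletCharacter.sum_char_inv_mul_char_eq ℂ u.isUnit (v : ZMod M)
      rw [ZMod.inv_coe_unit] at this
      simp only [Units.ext_iff]
      rw [← this, Finset.sum_mul]
      exact Finset.sum_congr rfl fun χ _ ↦ by ring
    simp_rw [h2, ite_mul, zero_mul] at h1
    rw [Finset.sum_ite_eq' Finset.univ v] at h1
    have hφ : (M.totient : ℂ) ≠ 0 := by
      exact_mod_cast (Nat.totient_pos.mpr (NeZero.pos M)).ne'
    simpa [hφ] using h1
  · exact hnonunit k hk

/-- The odd part of the measure `∑ i, w i • δ (a i)` on `ZMod M`. -/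
def oddPart {ι : Type*} [Fintype ι] (w : ι → ℂ) (a : ι → ℤ) (M : ℕ) (x : ZMod M) : ℂ :=
  ∑ i, w i * ((if x = a i then 1 else 0) - if x = -a i then 1 else 0)

theorem sum_oddPart_mul {ι : Type*} [Fintype ι] (w : ι → ℂ) (a : ι → ℤ) (M : ℕ) [NeZero M]
    (f : ZMod M → ℂ) :
    ∑ x, oddPart w a M x * f x = ∑ i, w i * (f (a i) - f (-a i)) := by
  simp_rw [oddPart, Finset.sum_mul]
  rw [Finset.sum_comm]
  refine Finset.sum_congr rfl fun i _ ↦ ?_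
  simp_rw [mul_assoc, ← Finset.mul_sum, sub_mul, Finset.sum_sub_distrib, ite_mul, one_mul, zero_mul,
    Finset.sum_ite_eq']
  simp

theorem dft_oddPart_eq_zero {ι : Type*} [Fintype ι] (w : ι → ℂ) (a : ι → ℤ) (M : ℕ) [NeZero M]
    (h : ∀ n : ℤ, ∑ i, w i * sawtooth (n * a i / M) = 0) : ZMod.dft (oddPart w a M) = 0 := by
  have hdft (L : ℕ) [NeZero L] (k : ℤ) : ZMod.dft (oddPart w a L) k =
      ∑ i, w i * (Complex.exp (-(2 * Real.pi * Complex.I * (k * a i / L))) -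
        Complex.exp (2 * Real.pi * Complex.I * (k * a i / L))) := by
    simp_rw [dft_apply, smul_eq_mul, mul_comm (stdAddChar _)]
    rw [sum_oddPart_mul]
    refine Finset.sum_congr rfl fun i _ ↦ ?_
    have e1 : -((a i : ZMod L) * k) = ((-(a i * k) : ℤ) : ZMod L) := by push_cast; ring
    have e2 : -(-(a i : ZMod L) * k) = ((a i * k : ℤ) : ZMod L) := by push_cast; ring
    rw [e1, e2, stdAddChar_coe, stdAddChar_coe]
    push_cast
    congr 3 <;> ring_nf
  induction M using Nat.strong_induction_on generalizing ‹NeZero M› with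
  | _ M ih =>
  refine dft_eq_zero_of_sum_sawtooth_eq_zero (fun x ↦ ?_) (fun u ↦ ?_) fun k hk ↦ ?_
  · simp only [oddPart, ← Finset.sum_neg_distrib, neg_eq_iff_eq_neg]
    exact Finset.sum_congr rfl fun i _ ↦ by rw [neg_neg]; ring
  · rw [sum_oddPart_mul]
    obtain ⟨n, hn⟩ := ZMod.intCast_surjective (u : ZMod M)
    rw [← mul_zero 2, ← h n, Finset.mul_sum]
    refine Finset.sum_congr rfl fun i _ ↦ ?_
    rw [← hn, ← Int.cast_neg, ← Int.cast_mul, ← Int.cast_mul, sawtooth_intCast_div,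
      sawtooth_intCast_div, mul_neg, Int.cast_neg, neg_div, sawtooth_neg]
    push_cast
    ring
  · obtain ⟨d, hd⟩ : ∃ d : ℕ, d = Nat.gcd k.val M := ⟨_, rfl⟩
    have hd1 : d ≠ 1 := by
      rintro rfl
      refine hk ?_
      rw [← natCast_zmod_val k, ZMod.isUnit_iff_coprime]
      exact hd.symm
    obtain ⟨k', hk'⟩ : d ∣ k.val := hd ▸ Nat.gcd_dvd_left _ _
    obtain ⟨M', hM'⟩ : d ∣ M := hd ▸ Nat.gcd_dvd_right _ _
    have hM0 : M ≠ 0 := NeZero.ne M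
    have hd0 : d ≠ 0 := by rintro rfl; exact hM0 (by simpa using hM')
    have hM'0 : M' ≠ 0 := by rintro rfl; exact hM0 (by simpa using hM')
    have : NeZero M' := ⟨hM'0⟩
    have hlt : M' < M := by
      rw [hM']
      exact lt_mul_of_one_lt_left (Nat.pos_of_ne_zero hM'0) (by omega)
    have key := ih M' hlt fun n ↦ by
      rw [← h (n * d)]
      refine Finset.sum_congr rfl fun i _ ↦ ?_
      congr 3
      rw [hM']
      push_cast
      have : (d : ℝ) ≠ 0 := by exact_mod_cast hd0
      field_simp
    have key' := congrFun key (k' : ℤ)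
    rw [hdft] at key'
    have hkk : k = ((k.val : ℤ) : ZMod M) := by simp
    rw [hkk, hdft, hk', hM', ← Pi.zero_apply (M := fun _ ↦ ℂ) ((k' : ℤ) : ZMod M'), ← key']
    refine Finset.sum_congr rfl fun i _ ↦ ?_
    have hdc : (d : ℂ) ≠ 0 := by exact_mod_cast hd0
    have : (((d * k' : ℕ) : ℤ) : ℂ) * a i / ((d * M' : ℕ) : ℂ) = ((k' : ℤ) : ℂ) * a i / M' := by
      push_cast
      field_simp
    rw [this]

theorem oddPart_eq_zero {ι : Type*} [Fintype ι] (w : ι → ℂ) (a : ι → ℤ) (M : ℕ) [NeZero M]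
    (h : ∀ n : ℤ, ∑ i, w i * sawtooth (n * a i / M) = 0) : oddPart w a M = 0 :=
  ZMod.dft.map_eq_zero_iff.mp (dft_oddPart_eq_zero w a M h)

/-- The tuple `d` has a monochromatic copy in every two-colouring of `ℝ / ℤ`. -/
def IsRamseyTuple {k : ℕ} (d : Fin k → ℝ) : Prop :=
  ∀ c : ℝ → Bool, (∀ x, c (x + 1) = c x) →
    ∃ (x : ℝ) (σ : Equiv.Perm (Fin k)) (b : Bool), ∀ j : Fin k,
      c (x + ∑ i ∈ Finset.univ.filter (fun i => i < j), d (σ i)) = b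

/-- Colour `x` by the half of the circle containing `φ x`: the steps `φ (d i)` of a monochromatic
copy, reduced modulo `1` to `(-1/2, 1/2)`, add up to zero. -/
theorem IsRamseyTuple.exists_balanced {k : ℕ} {d : Fin k → ℝ} (hd : IsRamseyTuple d)
    (hsum : ∑ i, d i = 1) (φ : ℝ →+ ℝ) (m : ℤ) (hφ : φ 1 = m) :
    ∃ (t : Fin k → ℝ) (z : Fin k → ℤ), (∀ i, φ (d i) = t i + z i) ∧ (∀ i, |t i| < 1 / 2) ∧
      ∑ i, t i = 0 := by
  set c : ℝ → Bool := fun x ↦ decide (Int.fract (φ x) < 1 / 2) with hc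
  have hper (x : ℝ) : c (x + 1) = c x := by simp [hc, hφ]
  obtain ⟨x, σ, b, hb⟩ := hd c hper
  set P : ℕ → ℝ := fun n ↦ ∑ i : Fin k with i.val < n, d (σ i) with hP
  have hP0 : P 0 = 0 := by simp [hP]
  have hPk : P k = 1 := by
    rw [← hsum, ← Equiv.sum_comp σ d]
    exact Finset.sum_congr (by simp) fun _ _ ↦ rfl
  have hPsucc (j : Fin k) : P (j + 1) = P j + d (σ j) := by
    have : (Finset.univ.filter fun i : Fin k ↦ i.val < j.val + 1) =
        insert j (Finset.univ.filter fun i : Fin k ↦ i.val < j.val) := by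
      ext i
      simp [Fin.ext_iff]
      omega
    simp only [hP]
    rw [this, Finset.sum_insert (by simp), add_comm]
  set y : ℕ → ℝ := fun n ↦ Int.fract (φ (x + P n)) with hy
  have hyk : y k = y 0 := by simp [hy, hP0, hPk, hφ]
  have hcol {n : ℕ} (hn : n ≤ k) : c (x + P n) = b := by
    have hlt {n : ℕ} (hn : n < k) : c (x + P n) = b := hb ⟨n, hn⟩
    rcases hn.lt_or_eq with hn | rfl
    · exact hlt hn
    · rcases Nat.eq_zero_or_pos n with rfl | hpos
      · simp [hP0] at hPk
      · rw [hPk, hper, ← hlt hpos, hP0, add_zero]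
  have hhalf {n l : ℕ} (hn : n ≤ k) (hl : l ≤ k) : |y n - y l| < 1 / 2 := by
    have h : (y n < 1 / 2) ↔ (y l < 1 / 2) := by
      have := (hcol hn).trans (hcol hl).symm
      simpa only [hc, decide_eq_decide] using this
    have h1 := Int.fract_nonneg (φ (x + P n))
    have h2 := Int.fract_lt_one (φ (x + P n))
    have h3 := Int.fract_nonneg (φ (x + P l))
    have h4 := Int.fract_lt_one (φ (x + P l))
    rw [abs_lt]
    by_cases h5 : y n < 1 / 2
    · have h6 := h.mp h5
      constructor <;> linarith
    · have h6 := mt h.mpr h5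
      constructor <;> linarith
  refine ⟨fun i ↦ y (σ.symm i + 1) - y (σ.symm i),
    fun i ↦ ⌊φ (x + P (σ.symm i + 1))⌋ - ⌊φ (x + P (σ.symm i))⌋, fun i ↦ ?_,
    fun i ↦ hhalf (σ.symm i).isLt (σ.symm i).isLt.le, ?_⟩
  · have h := hPsucc (σ.symm i)
    rw [Equiv.apply_symm_apply] at h
    have h1 : φ (x + P (σ.symm i + 1)) = φ (x + P (σ.symm i)) + φ (d i) := by
      rw [h, ← map_add, add_assoc]
    have h2 := Int.fract_add_floor (φ (x + P (σ.symm i + 1)))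
    have h3 := Int.fract_add_floor (φ (x + P (σ.symm i)))
    simp only [hy]
    push_cast
    linarith
  · rw [Equiv.sum_comp σ.symm fun j : Fin k ↦ y (j + 1) - y j,
      Fin.sum_univ_eq_sum_range (fun n ↦ y (n + 1) - y n), Finset.sum_range_sub, hyk, sub_self]

theorem ne_half_of_abs_lt {x t : ℝ} {z n : ℤ} (hx : x = t + z) (ht : |t| < 1 / 2) :
    x ≠ n + 1 / 2 := by
  intro h
  rw [abs_lt] at ht
  have h1 : ((2 * n + 1 : ℤ) : ℝ) < (2 * z + 1 : ℤ) := by push_cast; linarith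
  have h2 : ((2 * z - 1 : ℤ) : ℝ) < (2 * n + 1 : ℤ) := by push_cast; linarith
  norm_cast at h1 h2
  omega

theorem IsRamseyTuple.exists_rat {k : ℕ} {d : Fin k → ℝ} (hd : IsRamseyTuple d)
    (hsum : ∑ i, d i = 1) (i : Fin k) : ∃ q : ℚ, d i = q ∧ Odd q.den := by
  by_cases hi : d i ∈ Submodule.span ℚ {(1 : ℝ)}
  · obtain ⟨q, hq⟩ := Submodule.mem_span_singleton.mp hi
    have hq : d i = q := by rw [← hq, Rat.smul_def, mul_one]
    refine ⟨q, hq, Nat.not_even_iff_odd.mp fun ⟨r, hr⟩ ↦ ?_⟩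
    obtain ⟨t, z, hz, ht, -⟩ := hd.exists_balanced hsum (AddMonoidHom.mulLeft (r : ℝ)) r (by simp)
    have hodd : Odd q.num := by
      rw [← Int.natAbs_odd, ← Nat.not_even_iff_odd, even_iff_two_dvd]
      intro h
      have := Nat.dvd_gcd h (⟨r, by rw [hr, two_mul]⟩ : 2 ∣ q.den)
      rw [q.reduced] at this
      omega
    obtain ⟨n, hn⟩ := hodd
    refine ne_half_of_abs_lt (n := n) (hz i) (ht i) ?_
    have hden : (q : ℝ) * q.den = q.num := by exact_mod_cast Rat.mul_den_eq_num q
    rw [hr, hn] at hden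
    rw [AddMonoidHom.coe_mulLeft, hq]
    push_cast at hden
    linarith
  · obtain ⟨f, hf, hker⟩ := Submodule.exists_le_ker_of_notMem hi
    let φ : ℝ →+ ℝ := (AddMonoidHom.mulLeft ((f (d i) : ℝ)⁻¹ / 2)).comp
      ((Rat.castHom ℝ).toAddMonoidHom.comp f.toAddMonoidHom)
    have hf1 : f 1 = 0 := hker (Submodule.mem_span_singleton_self 1)
    obtain ⟨t, z, hz, ht, -⟩ := hd.exists_balanced hsum φ 0 (by simp [φ, hf1])
    refine absurd ?_ (ne_half_of_abs_lt (n := 0) (hz i) (ht i))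
    have : (f (d i) : ℝ) ≠ 0 := by exact_mod_cast hf
    simp [φ]
    field_simp

theorem IsRamseyTuple.exists_int {k : ℕ} {d : Fin k → ℝ} (hd : IsRamseyTuple d)
    (hsum : ∑ i, d i = 1) : ∃ (N : ℕ) (a : Fin k → ℤ), Odd N ∧ ∀ i, d i = a i / N := by
  choose q hq hodd using hd.exists_rat hsum
  have hN : Odd (∏ i, (q i).den) := Finset.prod_induction _ Odd (fun _ _ ↦ Odd.mul) odd_one
    fun i _ ↦ hodd i
  refine ⟨_, fun i ↦ (q i).num * ((∏ j, (q j).den) / (q i).den : ℕ), hN, fun i ↦ ?_⟩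
  obtain ⟨e, he⟩ := Finset.dvd_prod_of_mem (fun j ↦ (q j).den) (Finset.mem_univ i)
  have h0 : (q i).den * e ≠ 0 := he ▸ hN.pos.ne'
  have he0 : (e : ℝ) ≠ 0 := by exact_mod_cast right_ne_zero_of_mul h0
  have hd0 : ((q i).den : ℝ) ≠ 0 := by exact_mod_cast (q i).den_ne_zero
  beta_reduce
  rw [he, Nat.mul_div_cancel_left _ (q i).den_pos, hq i]
  push_cast
  rw [mul_div_mul_right _ _ he0]
  exact Rat.cast_def (q i)

theorem IsRamseyTuple.card_filter_two_mul {k : ℕ} {d : Fin k → ℝ} (hd : IsRamseyTuple d)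
    (hk : 3 ≤ k) (hpos : ∀ i, 0 < d i) (hsum : ∑ i, d i = 1) {N : ℕ} {a : Fin k → ℤ} (hN : Odd N)
    (ha : ∀ i, d i = a i / N) {i : Fin k} (hi : 2 * a i < N) :
    (Finset.univ.filter fun l ↦ a l = 2 * a i).card =
      (Finset.univ.filter fun l ↦ a l = a i).card := by
  have hN0 : (0 : ℝ) < N := by exact_mod_cast hN.pos
  have : NeZero N := ⟨hN.pos.ne'⟩
  have hapos (l : Fin k) : 0 < a l := by
    have := hpos l
    rw [ha] at this
    exact_mod_cast (div_pos_iff_of_pos_right hN0).mp this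
  have hasum : ∑ l, a l = N := by
    have : ∑ l, d l * N = N := by rw [← Finset.sum_mul, hsum, one_mul]
    simp_rw [ha, div_mul_cancel₀ _ hN0.ne'] at this
    exact_mod_cast this
  have hpair (l m : Fin k) : a l + a m ≠ N := by
    intro h
    by_cases hlm : l = m
    · subst hlm
      obtain ⟨r, hr⟩ := hN
      omega
    · obtain ⟨p, -, hp⟩ := Finset.exists_mem_notMem_of_card_lt_card
        (s := {l, m}) (t := Finset.univ)
        (by rwa [Finset.card_pair hlm, Finset.card_univ, Fintype.card_fin])
      have := Finset.sum_lt_sum_of_subset (Finset.subset_univ {l, m}) (Finset.mem_univ p) hp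
        (hapos p) fun j _ _ ↦ (hapos j).le
      rw [Finset.sum_pair hlm, hasum] at this
      omega
  have hlt (l : Fin k) : a l < N := by
    have : Nontrivial (Fin k) := Fin.nontrivial_iff_two_le.mpr (by omega)
    obtain ⟨p, hp⟩ := exists_ne l
    rw [← hasum]
    exact Finset.single_lt_sum hp (Finset.mem_univ l) (Finset.mem_univ p) (hapos p)
      fun j _ _ ↦ (hapos j).le
  have hcop : IsCoprime (N : ℤ) 2 := by
    obtain ⟨r, hr⟩ := hN
    exact ⟨1, -r, by rw [hr]; push_cast; ring⟩
  have hnd (l m : Fin k) : ¬ (N : ℤ) ∣ a l + a m := by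
    rintro ⟨r, hr⟩
    have h1 := hapos l
    have h2 := hapos m
    have h3 := hlt l
    have h4 := hlt m
    have : r = 1 := by nlinarith
    exact hpair l m (by rw [hr, this, mul_one])
  have hzero := oddPart_eq_zero (Sum.elim (fun _ : Fin k ↦ 1) fun _ : Fin k ↦ -1)
    (Sum.elim a fun l ↦ 2 * a l) N fun n ↦ by
      obtain ⟨t, z, hz, ht, hsum⟩ := hd.exists_balanced hsum (AddMonoidHom.mulLeft (n : ℝ)) n
        (by simp)
      rw [Fintype.sum_sum_type, ← Finset.sum_add_distrib, ← Complex.ofReal_zero, ← hsum,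
        Complex.ofReal_sum]
      refine Finset.sum_congr rfl fun l _ ↦ ?_
      rw [← sawtooth_sub_sawtooth_two_mul (hz l) (ht l), AddMonoidHom.coe_mulLeft, ha l]
      simp only [Sum.elim_inl, Sum.elim_inr]
      push_cast
      rw [mul_div_assoc, mul_div_assoc, mul_left_comm, mul_div_assoc]
      ring
  have hx := congrFun hzero ((2 * a i : ℤ) : ZMod N)
  rw [oddPart, Fintype.sum_sum_type] at hx
  simp only [Sum.elim_inl, Sum.elim_inr, one_mul, neg_mul, Finset.sum_neg_distrib,
    Finset.sum_sub_distrib, Pi.zero_apply, eq_comm (a := ((2 * a i : ℤ) : ZMod N)),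
    ZMod.intCast_eq_intCast_iff_dvd_sub, ← Int.cast_neg] at hx
  have hneg (l : Fin k) : ¬ (N : ℤ) ∣ 2 * a i - -(2 * a l) := by
    rw [sub_neg_eq_add, ← mul_add]
    exact fun h ↦ hnd i l (hcop.dvd_of_dvd_mul_left h)
  have hone (l : Fin k) : (N : ℤ) ∣ 2 * a i - a l ↔ a l = 2 * a i := by
    refine ⟨fun ⟨r, hr⟩ ↦ ?_, fun h ↦ by simp [h]⟩
    have h1 := hapos l
    have h2 := hlt l
    have h3 := hapos i
    have : r = 0 := by
      have : r < 1 := by nlinarith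
      have : -1 < r := by nlinarith
      omega
    rw [this] at hr
    linarith
  have htwo (l : Fin k) : (N : ℤ) ∣ 2 * a i - 2 * a l ↔ a l = a i := by
    refine ⟨fun h ↦ ?_, fun h ↦ by simp [h]⟩
    rw [← mul_sub] at h
    obtain ⟨r, hr⟩ := hcop.dvd_of_dvd_mul_left h
    have h1 := hapos l
    have h2 := hlt l
    have h3 := hapos i
    have h4 := hlt i
    have : r = 0 := by
      have : r < 1 := by nlinarith
      have : -1 < r := by nlinarith
      omega
    rw [this] at hr
    linarith
  simp only [hneg, hone, htwo, if_false, Finset.sum_const_zero, sub_zero, Finset.sum_boole] at hx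
  have hcard : (Finset.univ.filter fun l ↦ a l = 2 * a i).card =
      (Finset.univ.filter fun l ↦ (N : ℤ) ∣ 2 * a i - -a l).card +
      (Finset.univ.filter fun l ↦ a l = a i).card := by
    have := eq_neg_of_add_eq_zero_left hx
    rw [neg_neg, sub_eq_iff_eq_add, add_comm] at this
    exact_mod_cast this
  have hne : 0 < (Finset.univ.filter fun l ↦ a l = a i).card :=
    Finset.card_pos.mpr ⟨i, by simp⟩
  obtain ⟨m, hm⟩ := Finset.card_pos.mp (hne.trans_le (hcard ▸ Nat.le_add_left _ _))
  have hm : a m = 2 * a i := by simpa using hm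
  rw [hcard, Nat.add_eq_right, Finset.card_eq_zero, Finset.filter_eq_empty_iff]
  intro l _ h
  rw [sub_neg_eq_add, ← hm] at h
  exact hnd m l h

theorem mul_two_pow_eq_of_card_eq {k : ℕ} {a : Fin k → ℤ} (hpos : ∀ i, 0 < a i) (ha : Antitone a)
    (hcard : ∀ i : Fin k, 0 < i.val → (Finset.univ.filter fun l ↦ a l = 2 * a i).card =
      (Finset.univ.filter fun l ↦ a l = a i).card) (i : Fin k) :
    a i * 2 ^ i.val = a ⟨0, i.pos⟩ := by
  induction i using WellFoundedLT.induction with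
  | ind i ih =>
  rcases Nat.eq_zero_or_pos i.val with hi | hi
  · have : i = ⟨0, i.pos⟩ := Fin.ext hi
    rw [hi, pow_zero, mul_one, ← this]
  have hlt {j : Fin k} (hj : a j = 2 * a i) : j < i := by
    by_contra! h
    have := ha h
    have := hpos i
    omega
  have hne : 0 < (Finset.univ.filter fun l ↦ a l = a i).card :=
    Finset.card_pos.mpr ⟨i, by simp⟩
  obtain ⟨j, hj⟩ := Finset.card_pos.mp (hcard i hi ▸ hne)
  have hj : a j = 2 * a i := by simpa using hj
  have hji := hlt hj
  have hjeq := ih j hji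
  rcases (Nat.succ_le_of_lt hji).eq_or_lt with h | h
  · rw [← hjeq, hj, ← h, pow_succ]
    ring
  · let p : Fin k := ⟨j + 1, h.trans i.isLt⟩
    have hp : a p = a i := by
      have := (ih p h).trans hjeq.symm
      rw [hj, show p.val = j + 1 from rfl, pow_succ] at this
      refine mul_right_cancel₀ (b := (2 : ℤ) ^ j.val * 2) (by positivity) ?_
      linarith
    have hpi : p ≠ i := Fin.ne_of_lt h
    have h1 : 1 < (Finset.univ.filter fun l ↦ a l = a i).card :=
      Finset.one_lt_card.mpr ⟨p, by simpa using hp, i, by simp, hpi⟩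
    rw [← hcard i hi] at h1
    obtain ⟨l, hl, hlj⟩ := Finset.exists_mem_ne h1 j
    have hl : a l = 2 * a i := by simpa using hl
    have h2 := (ih l (hlt hl)).trans hjeq.symm
    rw [hl, hj] at h2
    have h3 := mul_left_cancel₀ (mul_pos two_pos (hpos i)).ne' h2
    exact absurd (Fin.ext (Int.pow_right_injective (by decide) h3)) hlj

theorem IsRamseyTuple.exists_half_lt {k : ℕ} {d : Fin k → ℝ} (hd : IsRamseyTuple d)
    (hsum : ∑ i, d i = 1) : ∃ j, 1 / 2 < d j := by
  obtain ⟨t, z, hz, ht, hsum'⟩ := hd.exists_balanced hsum (AddMonoidHom.id ℝ) 1 (by simp)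
  have hz' : ∑ i, z i = 1 := by
    have : ∑ i, d i = ∑ i, t i + ∑ i, (z i : ℝ) := by
      rw [← Finset.sum_add_distrib]
      exact Finset.sum_congr rfl fun i _ ↦ hz i
    rw [hsum, hsum', zero_add] at this
    exact_mod_cast this.symm
  obtain ⟨j, -, hj⟩ := Finset.exists_lt_of_sum_lt (s := Finset.univ) (f := fun _ : Fin k ↦ (0 : ℤ))
    (g := z) (by simp [hz'])
  refine ⟨j, ?_⟩
  have h1 : (1 : ℝ) ≤ z j := by exact_mod_cast hj
  have h2 : d j = t j + z j := hz j
  have h3 := (abs_lt.mp (ht j)).1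
  linarith

theorem IsRamseyTuple.mul_two_pow_eq {k : ℕ} {d : Fin k → ℝ} (hd : IsRamseyTuple d)
    (hk : 3 ≤ k) (hpos : ∀ i, 0 < d i) (hanti : Antitone d) (hsum : ∑ i, d i = 1) (i : Fin k) :
    d i * 2 ^ i.val = d ⟨0, i.pos⟩ := by
  obtain ⟨N, a, hN, ha⟩ := hd.exists_int hsum
  have hN0 : (0 : ℝ) < N := by exact_mod_cast hN.pos
  have haN (l : Fin k) : (a l : ℝ) = d l * N := by rw [ha, div_mul_cancel₀ _ hN0.ne']
  have hapos (l : Fin k) : 0 < a l := by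
    have : (0 : ℝ) < a l := haN l ▸ mul_pos (hpos l) hN0
    exact_mod_cast this
  have haanti : Antitone a := fun l m h ↦ by
    have : (a m : ℝ) ≤ a l := by
      rw [haN, haN]
      exact mul_le_mul_of_nonneg_right (hanti h) hN0.le
    exact_mod_cast this
  have hhalf {l : Fin k} (hl : 0 < l.val) : 2 * d l < 1 := by
    obtain ⟨j, hj⟩ := hd.exists_half_lt hsum
    have h0 : d j ≤ d ⟨0, i.pos⟩ := hanti (Nat.zero_le _)
    have hne : (⟨0, i.pos⟩ : Fin k) ≠ l := Fin.ne_of_lt hl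
    have := Finset.sum_le_sum_of_subset_of_nonneg (Finset.subset_univ {⟨0, i.pos⟩, l})
      fun j _ _ ↦ (hpos j).le
    rw [Finset.sum_pair hne, hsum] at this
    linarith
  have := mul_two_pow_eq_of_card_eq hapos haanti (fun l hl ↦
    hd.card_filter_two_mul hk hpos hsum hN ha (by
      have : (2 * a l : ℝ) < N := by
        rw [haN, ← mul_assoc]
        nlinarith [hhalf hl]
      exact_mod_cast this)) i
  rw [ha, ha, ← this]
  push_cast
  ring

end

/-- Main theorem: a Ramsey `k`-tuple must be the `(k,2)`-power. The circle of unit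
perimeter is modelled by ℝ with 1-periodic colourings; a monochromatic copy of `d` is a
starting point `x` and a permutation `σ` such that all partial-sum points get the same
colour. -/
theorem stmt_11 (k : ℕ) (hk : 3 ≤ k) (d : Fin k → ℝ) (hpos : ∀ i, 0 < d i)
    (hmono : ∀ i j : Fin k, i ≤ j → d j ≤ d i) (hsum : ∑ i, d i = 1)
    (hram : ∀ c : ℝ → Bool, (∀ x, c (x + 1) = c x) →
      ∃ (x : ℝ) (σ : Equiv.Perm (Fin k)) (b : Bool), ∀ j : Fin k,
        c (x + ∑ i ∈ Finset.univ.filter (fun i => i < j), d (σ i)) = b) :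
    ∀ i : Fin k, d i = (2:ℝ)^(k-1-(i:ℕ)) / ((2:ℝ)^k - 1) := by
  have hd : IsRamseyTuple d := hram
  have hpow := hd.mul_two_pow_eq hk hpos (fun i j ↦ hmono i j) hsum
  intro i
  set d₀ := d ⟨0, i.pos⟩
  have hdi (j : Fin k) : d j = d₀ * (1 / 2) ^ j.val := by
    rw [show d₀ = d j * 2 ^ j.val from (hpow j).symm, mul_assoc, ← mul_pow]
    norm_num
  have h1 : (1 : ℝ) < 2 ^ k := one_lt_pow₀ one_lt_two (by omega)
  have hgeom : d₀ * (2 ^ k - 1) = 2 ^ (k - 1) := by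
    have h := hsum
    simp_rw [hdi] at h
    rw [← Finset.mul_sum, Fin.sum_univ_eq_sum_range (fun n ↦ (1 / 2 : ℝ) ^ n),
      geom_sum_eq (by norm_num), one_div, inv_pow] at h
    have h2 : (2 : ℝ) ^ k = 2 ^ (k - 1) * 2 := by rw [← pow_succ]; congr 1; omega
    field_simp at h
    linarith
  have hsplit : (2 : ℝ) ^ (k - 1) = 2 ^ (k - 1 - i.val) * 2 ^ i.val := by
    rw [← pow_add]
    congr 1
    omega
  rw [eq_div_iff (by linarith), hdi, mul_right_comm, hgeom, hsplit, mul_assoc, ← mul_pow]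
  norm_num
end

section
/- For every k ≥ 3 and every two-colouring of the vertices of a regular (2^k − 1)-gon, the number of monochromatic permuted copies of any k-tuple (d_1,…,d_k) of positive integer arc-lengths summing to 2^k − 1 is even. -/
/-- The vertex reached from `p.1` after travelling the first `j` arcs in the order `p.2`. -/
def pathVertex {G : Type*} [AddCommGroup G] {n : ℕ} (d : Fin n → G)
    (p : G × Equiv.Perm (Fin n)) (j : ℕ) : G :=
  p.1 + ∑ i : Fin n, if i.val < j then d (p.2 i) else 0

section PathVertex

variable {G : Type*} [AddCommGroup G]

theorem pathVertex_mul_swap {n : ℕ} (d : Fin n → G) (p : G × Equiv.Perm (Fin n)) {a b : Fin n}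
    (hab : a.val + 1 = b.val) {j : ℕ} (hj : j ≠ b.val) :
    pathVertex d (p.1, p.2 * Equiv.swap a b) j = pathVertex d p j := by
  unfold pathVertex
  congr 1
  refine Fintype.sum_equiv (Equiv.swap a b) _ _ fun i => ?_
  have h : ((Equiv.swap a b i).val < j) ↔ i.val < j := by
    rcases eq_or_ne i a with rfl | ha
    · rw [Equiv.swap_apply_left]; omega
    · rcases eq_or_ne i b with rfl | hb
      · rw [Equiv.swap_apply_right]; omega
      · rw [Equiv.swap_apply_of_ne_of_ne ha hb]
  simp [h]

theorem pathVertex_rotate {m : ℕ} (d : Fin (m + 1) → G) (p : G × Equiv.Perm (Fin (m + 1)))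
    {j : ℕ} (hj : j ≤ m) :
    pathVertex d (p.1 + d (p.2 0), p.2 * finRotate (m + 1)) j = pathVertex d p (j + 1) := by
  unfold pathVertex
  rw [Fin.sum_univ_castSucc, Fin.sum_univ_succ]
  simp [Fin.coeSucc_eq_succ, hj.not_gt, add_assoc]

theorem pathVertex_mul_swap_ends {m : ℕ} (d : Fin (m + 2) → G)
    (p : G × Equiv.Perm (Fin (m + 2))) {j : ℕ} (hj : 1 ≤ j) (hj' : j ≤ m + 1) :
    pathVertex d (p.1 + d (p.2 0) - d (p.2 (Fin.last (m + 1))),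
      p.2 * Equiv.swap 0 (Fin.last (m + 1))) j = pathVertex d p j := by
  unfold pathVertex
  have hs (i : Fin m) : Equiv.swap 0 (Fin.last (m + 1)) i.castSucc.succ = i.castSucc.succ := by
    refine Equiv.swap_apply_of_ne_of_ne (Fin.succ_ne_zero _) ?_
    simp [Fin.ext_iff, i.isLt.ne]
  simp only [Fin.sum_univ_succ (n := m + 1), Fin.sum_univ_castSucc (n := m)]
  have h0 : 0 < j := hj
  simp only [Equiv.Perm.mul_apply, hs, Fin.succ_last, Equiv.swap_apply_left,
    Equiv.swap_apply_right, Fin.val_last, Fin.coe_ofNat_eq_mod, Nat.zero_mod, h0, if_true,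
    if_neg hj'.not_gt, Nat.succ_eq_add_one]
  abel

variable [Fintype G]

theorem sum_pathVertex_eq_zero_of_indep {n : ℕ} (d : Fin n → G) {j : ℕ} (hj : 1 ≤ j) (hjn : j < n)
    (F : (ℕ → G) → ZMod 2) (hF : ∀ u v : ℕ → G, (∀ i, i ≠ j → u i = v i) → F u = F v) :
    ∑ p : G × Equiv.Perm (Fin n), F (pathVertex d p) = 0 := by
  let a : Fin n := ⟨j - 1, by omega⟩
  let b : Fin n := ⟨j, hjn⟩
  have hab : a ≠ b := by simp [a, b, Fin.ext_iff]; omega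
  refine Finset.sum_involution (fun p _ => (p.1, p.2 * Equiv.swap a b)) ?_ ?_ ?_ ?_
  · intro p _
    rw [hF _ (pathVertex d p) fun i hi =>
      pathVertex_mul_swap d p (a := a) (b := b) (by simp [a, b]; omega) hi]
    exact CharTwo.add_self_eq_zero _
  · intro p _ _ h
    have := congrArg Prod.snd h
    simp only [mul_eq_left] at this
    exact hab (Equiv.swap_eq_one_iff.1 this)
  · simp
  · intro p _
    simp [mul_assoc]

theorem sum_prod_interior_pathVertex {m : ℕ} (d : Fin (m + 2) → G) (f : G → ZMod 2) :
    ∑ p : G × Equiv.Perm (Fin (m + 2)),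
      ∏ j ∈ Finset.range (m + 1), f (pathVertex d p (j + 1)) = 0 := by
  refine Finset.sum_involution (fun p _ => (p.1 + d (p.2 0) - d (p.2 (Fin.last (m + 1))),
      p.2 * Equiv.swap 0 (Fin.last (m + 1)))) ?_ ?_ ?_ ?_
  · intro p _
    have h : ∀ j ∈ Finset.range (m + 1),
        f (pathVertex d (p.1 + d (p.2 0) - d (p.2 (Fin.last (m + 1))),
          p.2 * Equiv.swap 0 (Fin.last (m + 1))) (j + 1)) = f (pathVertex d p (j + 1)) := by
      intro j hj
      rw [pathVertex_mul_swap_ends d p (by omega) (by simpa using hj)]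
    rw [Finset.prod_congr rfl h]
    exact CharTwo.add_self_eq_zero _
  · intro p _ _ h
    have := congrArg Prod.snd h
    simp only [mul_eq_left] at this
    exact (Fin.last_pos.ne) (Equiv.swap_eq_one_iff.1 this)
  · simp
  · intro p _
    simp [mul_assoc]

theorem sum_prod_pathVertex_succ {m : ℕ} (d : Fin (m + 1) → G) (f : G → ZMod 2) :
    ∑ p : G × Equiv.Perm (Fin (m + 1)),
      ∏ j ∈ Finset.range (m + 1), f (pathVertex d p (j + 1)) =
    ∑ p : G × Equiv.Perm (Fin (m + 1)), ∏ j ∈ Finset.range (m + 1), f (pathVertex d p j) := by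
  refine Finset.sum_bij' (fun p _ => (p.1 + d (p.2 0), p.2 * finRotate (m + 1)))
    (fun p _ => (p.1 - d (p.2 (Fin.last m)), p.2 * (finRotate (m + 1))⁻¹)) ?_ ?_ ?_ ?_ ?_
  · simp
  · simp
  · intro p _
    simp
  · intro p _
    have h : (finRotate (m + 1))⁻¹ 0 = Fin.last m := by
      rw [Equiv.Perm.inv_eq_iff_eq]; simp
    simp only [Equiv.Perm.mul_apply, h, sub_add_cancel, inv_mul_cancel_right]
  · intro p _
    refine Finset.prod_congr rfl fun j hj => ?_
    rw [pathVertex_rotate d p (by simpa [Nat.lt_succ_iff] using hj)]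

theorem sum_mono_pathVertex {m : ℕ} (d : Fin (m + 2) → G) (f : G → ZMod 2) :
    ∑ p : G × Equiv.Perm (Fin (m + 2)),
      (∏ j ∈ Finset.range (m + 3), f (pathVertex d p j) +
        ∏ j ∈ Finset.range (m + 3), (1 + f (pathVertex d p j))) = 0 := by
  let Q (w : ℕ → G) : ZMod 2 := (1 + f (w 0)) * (1 + f (w (m + 2)))
  have expand (w : ℕ → G) :
      ∏ j ∈ Finset.range (m + 3), f (w j) + ∏ j ∈ Finset.range (m + 3), (1 + f (w j)) =
      ∏ j ∈ Finset.range (m + 1), f (w (j + 1)) +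
      (∏ j ∈ Finset.range (m + 2), f (w (j + 1)) + ∏ j ∈ Finset.range (m + 2), f (w j)) +
      ∑ t ∈ (Finset.range (m + 1)).ssubsets, Q w * ∏ j ∈ t, f (w (j + 1)) := by
    have h1 : ∏ j ∈ Finset.range (m + 1), (1 + f (w (j + 1))) =
        ∏ j ∈ Finset.range (m + 1), f (w (j + 1)) +
        ∑ t ∈ (Finset.range (m + 1)).ssubsets, ∏ j ∈ t, f (w (j + 1)) := by
      rw [Finset.prod_one_add]
      exact (Finset.add_sum_erase _ (fun t => ∏ j ∈ t, f (w (j + 1)))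
        (Finset.mem_powerset_self _)).symm
    rw [← Finset.mul_sum]
    rw [Finset.prod_range_succ, Finset.prod_range_succ', Finset.prod_range_succ (n := m + 2),
      Finset.prod_range_succ' (n := m + 1), h1, Finset.prod_range_succ (n := m + 1)]
    simp only [Q]
    generalize ∏ j ∈ Finset.range (m + 1), f (w (j + 1)) = R
    generalize ∑ t ∈ (Finset.range (m + 1)).ssubsets, ∏ j ∈ t, f (w (j + 1)) = T
    linear_combination (f (w 0) * f (w (m + 2)) * R) * CharTwo.two_eq_zero (R := ZMod 2)
  simp only [expand]
  rw [Finset.sum_add_distrib, Finset.sum_add_distrib, Finset.sum_add_distrib,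
    sum_prod_interior_pathVertex, sum_prod_pathVertex_succ, CharTwo.add_self_eq_zero,
    Finset.sum_comm, add_zero, zero_add]
  refine Finset.sum_eq_zero fun t ht => ?_
  rw [Finset.mem_ssubsets] at ht
  obtain ⟨j, hj, hjt⟩ := Finset.exists_of_ssubset ht
  rw [Finset.mem_range] at hj
  refine sum_pathVertex_eq_zero_of_indep d (j := j + 1) (by omega) (by omega)
    (fun w => Q w * ∏ i ∈ t, f (w (i + 1))) fun u v huv => ?_
  have ht' : ∏ i ∈ t, f (u (i + 1)) = ∏ i ∈ t, f (v (i + 1)) := by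
    refine Finset.prod_congr rfl fun i hi => ?_
    rw [huv]
    rintro h
    exact hjt (by rwa [← Nat.succ_injective h])
  simp only [Q, ht', huv 0 (by omega), huv (m + 2) (by omega)]

theorem even_card_mono_pathVertex {m : ℕ} (d : Fin (m + 2) → G) (c : G → Bool) :
    Even (Nat.card {p : G × Equiv.Perm (Fin (m + 2)) //
      ∀ j < m + 3, c (pathVertex d p j) = c (pathVertex d p (m + 2))}) := by
  classical
  rw [← ZMod.natCast_eq_zero_iff_even, Nat.card_eq_fintype_card, Fintype.card_subtype,
    Finset.natCast_card_filter]
  refine Eq.trans ?_ (sum_mono_pathVertex d fun x => if c x then 1 else 0)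
  refine Finset.sum_congr rfl fun p _ => ?_
  have h1 : ∀ b : Bool, (1 + if b then 1 else 0 : ZMod 2) = if b = false then 1 else 0 := by
    decide
  simp only [h1, Finset.prod_ite_zero, Finset.mem_range, Finset.prod_const_one]
  have hlast : m + 2 < m + 3 := by omega
  rcases (c (pathVertex d p (m + 2))).eq_false_or_eq_true.symm with hc | hc <;> simp only [hc]
  · have : ¬ ∀ j < m + 3, c (pathVertex d p j) = true := fun h => by simp [h _ hlast] at hc
    rw [if_neg this, zero_add]
  · have : ¬ ∀ j < m + 3, c (pathVertex d p j) = false := fun h => by simp [h _ hlast] at hc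
    rw [if_neg this, add_zero]

end PathVertex

theorem pathVertex_tail_last {G : Type*} [AddCommGroup G] {n : ℕ} (d : Fin (n + 1) → G)
    (hd : ∑ i, d i = 0) (x : G) (e : Equiv.Perm (Fin n)) :
    pathVertex (fun i => d i.succ) (x + d 0, e) n = x := by
  rw [Fin.sum_univ_succ] at hd
  simp [pathVertex, Equiv.sum_comp e fun i => d i.succ, add_assoc, hd]

theorem pathVertex_tail {G : Type*} [AddCommGroup G] {n : ℕ} (d : Fin (n + 1) → G)
    (x : G) (e : Equiv.Perm (Fin n)) (j : Fin n) :
    pathVertex (fun i => d i.succ) (x + d 0, e) j =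
      x + ∑ i ∈ Finset.univ.filter (fun i => i < j.succ),
        d (Equiv.Perm.decomposeFin.symm (0, e) i) := by
  rw [Finset.sum_filter, Fin.sum_univ_succ]
  simp [pathVertex, add_assoc]

/-- In any two-colouring of ℤ/(2^k-1)ℤ, the number of monochromatic permuted copies of a
`k`-tuple of positive integer arc-lengths summing to `2^k - 1` is even. Copies are counted
as pairs of a starting vertex and a cyclic ordering (a permutation fixing 0). -/
theorem stmt_18 (k : ℕ) (hk : 3 ≤ k) (d : Fin k → ℕ) (hd : ∀ i, 0 < d i)
    (hsum : ∑ i, d i = 2^k - 1) (c : ZMod (2^k - 1) → Bool) :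
    Even (Nat.card {pr : ZMod (2^k - 1) × Equiv.Perm (Fin k) //
      pr.2 ⟨0, by omega⟩ = ⟨0, by omega⟩ ∧ ∀ j : Fin k,
        c (pr.1 + ∑ i ∈ Finset.univ.filter (fun i => i < j),
          ((d (pr.2 i) : ℕ) : ZMod (2^k - 1))) = c pr.1}) := by
  obtain ⟨m, rfl⟩ : ∃ m, k = m + 3 := ⟨k - 3, by omega⟩
  have : NeZero (2 ^ (m + 3) - 1) := ⟨(Nat.sub_pos_of_lt (Nat.one_lt_two_pow (by omega))).ne'⟩
  let D : Fin (m + 2 + 1) → ZMod (2 ^ (m + 3) - 1) := fun i => (d i : ℕ)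
  have hD : ∑ i, D i = 0 := by
    simp only [D, ← Nat.cast_sum, hsum, ZMod.natCast_self]
  have iff_mono (x : ZMod (2 ^ (m + 3) - 1)) (e : Equiv.Perm (Fin (m + 2))) :
      (∀ j < m + 3, c (pathVertex (fun i => D i.succ) (x + D 0, e) j) =
        c (pathVertex (fun i => D i.succ) (x + D 0, e) (m + 2))) ↔
      ∀ j : Fin (m + 3), c (x + ∑ i ∈ Finset.univ.filter (fun i => i < j),
        D (Equiv.Perm.decomposeFin.symm (0, e) i)) = c x := by
    rw [pathVertex_tail_last D hD, Fin.forall_fin_succ]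
    simp only [← pathVertex_tail]
    constructor
    · exact fun h => ⟨by simp, fun j => h j (by omega)⟩
    · rintro ⟨-, h⟩ j hj
      rcases (Nat.lt_succ_iff.1 hj).lt_or_eq with hlt | rfl
      · exact h ⟨j, hlt⟩
      · rw [pathVertex_tail_last D hD]
  convert even_card_mono_pathVertex (fun i => D i.succ) c using 1
  symm
  refine Nat.card_congr (Equiv.ofBijective (fun p => ⟨(p.1.1 - D 0,
    Equiv.Perm.decomposeFin.symm (0, p.1.2)),
    Equiv.Perm.decomposeFin_symm_apply_zero 0 p.1.2, ?_⟩) ⟨?_, ?_⟩)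
  · exact (iff_mono _ _).1 (by simpa using p.2)
  · rintro ⟨⟨x, e⟩, hp⟩ ⟨⟨x', e'⟩, hp'⟩ h
    simpa using congrArg Subtype.val h
  · rintro ⟨⟨x, σ⟩, h0, h⟩
    obtain ⟨⟨a, e⟩, rfl⟩ := Equiv.Perm.decomposeFin.symm.surjective σ
    obtain rfl : a = 0 := (Equiv.Perm.decomposeFin_symm_apply_zero a e).symm.trans h0
    exact ⟨⟨(x + D 0, e), (iff_mono x e).2 h⟩, by simp⟩
end
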